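/- arXiv:2306.04258 — 2 statements merged into one kernel-verified Lean document; each statement's English description precedes it below -/
import Mathlib

section
/- Let (b₁,b₂) ∈ B with b₃ = (b₁b₂)^(−1), and assume G^S₊(b₁,b₃,b₂) ≥ 0 (i.e., (b₁,b₂) lies in B_{S₃}, the existence region of the S₃ Riemann ellipsoids). Put N₊ = N^S₊(b₁,b₃,b₂) and N₋ = N^S₋(b₁,b₃,b₂), and set L = N₊, R = |N₋|. Then the point p* = (b₁, b₂, 0, 0, 0, 0, N₊, 0, 0, N₋) is an equilibrium of the reduced equations of motion, and p* is Liapunov stable relative to S_{L,R}. -/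
open Real MeasureTheory

/-- `C₁(x,y,z) = 2πg ∫₀^∞ s·((s+x²)(s+y²)(s+z²))^(−3/2) ds`. -/
noncomputable def riC1 (g x y z : ℝ) : ℝ :=
  2 * π * g * ∫ s in Set.Ioi (0:ℝ),
    s * ((s + x ^ 2) * (s + y ^ 2) * (s + z ^ 2)) ^ (-(3:ℝ)/2)

/-- `C₂(x,y,z) = 2πg ∫₀^∞ s²·((s+x²)(s+y²)(s+z²))^(−3/2) ds`. -/
noncomputable def riC2 (g x y z : ℝ) : ℝ :=
  2 * π * g * ∫ s in Set.Ioi (0:ℝ),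
    s ^ 2 * ((s + x ^ 2) * (s + y ^ 2) * (s + z ^ 2)) ^ (-(3:ℝ)/2)

/-- `G^S₊(x,y,z)`. -/
noncomputable def GSp (g x y z : ℝ) : ℝ :=
  ((x - z) ^ 4 / (x * z)) *
    ((x * y ^ 2 * z + (x ^ 2 * y ^ 2 - x ^ 2 * z ^ 2 + y ^ 2 * z ^ 2)) * riC1 g x y z
      + (x * z + y ^ 2) * riC2 g x y z)

/-- `G^S₋(x,y,z)`. -/
noncomputable def GSm (g x y z : ℝ) : ℝ :=
  ((x + z) ^ 4 / (x * z)) *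
    ((x * y ^ 2 * z - (x ^ 2 * y ^ 2 - x ^ 2 * z ^ 2 + y ^ 2 * z ^ 2)) * riC1 g x y z
      + (x * z - y ^ 2) * riC2 g x y z)

/-- `N^S₊(x,y,z) = ½(√G^S₊ + √G^S₋)`. -/
noncomputable def NSp (g x y z : ℝ) : ℝ :=
  (Real.sqrt (GSp g x y z) + Real.sqrt (GSm g x y z)) / 2

/-- `N^S₋(x,y,z) = ½(√G^S₊ − √G^S₋)`. -/
noncomputable def NSm (g x y z : ℝ) : ℝ :=
  (Real.sqrt (GSp g x y z) - Real.sqrt (GSm g x y z)) / 2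

/-- Membership in `B = {(b₁,b₂) : b₁ > b₂ > b₁^(−1/2) > 0}`. -/
def memB (b1 b2 : ℝ) : Prop := b2 < b1 ∧ (Real.sqrt b1)⁻¹ < b2 ∧ 0 < (Real.sqrt b1)⁻¹

/-- The reduced Hamiltonian `H(b₁,b₂,c₁,c₂,m₁,…,m₆)` of the Riemann ellipsoid problem,
as a function on `ℝ¹⁰` (coordinates `p 0 = b₁, p 1 = b₂, p 2 = c₁, p 3 = c₂,
p 4,…,p 9 = m₁,…,m₆`), with `b₃ = (b₁b₂)⁻¹`. -/
noncomputable def Hred (g : ℝ) (p : Fin 10 → ℝ) : ℝ :=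
  let b1 := p 0; let b2 := p 1; let c1 := p 2; let c2 := p 3
  let m1 := p 4; let m2 := p 5; let m3 := p 6
  let m4 := p 7; let m5 := p 8; let m6 := p 9
  let b3 := (b1 * b2)⁻¹
  ((b2 ^ 2 + b3 ^ 2) * b1 ^ 2 * c1 ^ 2 + (b1 ^ 2 + b3 ^ 2) * b2 ^ 2 * c2 ^ 2
        - 2 * b3 * c1 * c2) /
      (2 * (b1 ^ 2 * b2 ^ 2 + b1 ^ 2 * b3 ^ 2 + b2 ^ 2 * b3 ^ 2))
    + ((b1 ^ 2 + b2 ^ 2) * (m3 ^ 2 + m6 ^ 2) + 4 * b1 * b2 * m3 * m6) /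
        (2 * (b1 ^ 2 - b2 ^ 2) ^ 2)
    + ((b1 ^ 2 + b3 ^ 2) * (m2 ^ 2 + m5 ^ 2) + 4 * b1 * b3 * m2 * m5) /
        (2 * (b1 ^ 2 - b3 ^ 2) ^ 2)
    + ((b2 ^ 2 + b3 ^ 2) * (m1 ^ 2 + m4 ^ 2) + 4 * b2 * b3 * m1 * m4) /
        (2 * (b2 ^ 2 - b3 ^ 2) ^ 2)
    - 2 * π * g * ∫ s in Set.Ioi (0:ℝ),
        ((s + b1 ^ 2) * (s + b2 ^ 2) * (s + b3 ^ 2)) ^ (-(1:ℝ)/2)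

/-- Partial derivative `∂H/∂pᵢ`. -/
noncomputable def pd (g : ℝ) (i : Fin 10) (p : Fin 10 → ℝ) : ℝ :=
  fderiv ℝ (Hred g) p (Pi.single i 1)

/-- The reduced vector field: `b' = ∂H/∂c`, `c' = −∂H/∂b`, `η_l' = η_l × ∇_{η_l}H`,
`η_r' = η_r × ∇_{η_r}H`. -/
noncomputable def RVF (g : ℝ) (p : Fin 10 → ℝ) : Fin 10 → ℝ :=
  ![pd g 2 p, pd g 3 p, -pd g 0 p, -pd g 1 p,
    p 5 * pd g 6 p - p 6 * pd g 5 p,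
    p 6 * pd g 4 p - p 4 * pd g 6 p,
    p 4 * pd g 5 p - p 5 * pd g 4 p,
    p 8 * pd g 9 p - p 9 * pd g 8 p,
    p 9 * pd g 7 p - p 7 * pd g 9 p,
    p 7 * pd g 8 p - p 8 * pd g 7 p]

/-- `γ` is a solution of the reduced equations of motion on the set `s ⊂ ℝ`
(staying in the domain `B × ℝ² × ℝ³ × ℝ³`). -/
def IsSolution (g : ℝ) (γ : ℝ → Fin 10 → ℝ) (s : Set ℝ) : Prop :=
  ∀ t ∈ s, memB (γ t 0) (γ t 1) ∧
    ∀ i : Fin 10, HasDerivAt (fun τ => γ τ i) (RVF g (γ t) i) t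

/-- Liapunov stability of an equilibrium `pstar` relative to
`S_{L,R} = {(b,c,η_l,η_r) : ‖η_l‖ = L, ‖η_r‖ = R}`. -/
def LiapunovStable (g L R : ℝ) (pstar : Fin 10 → ℝ) : Prop :=
  ∀ ε > 0, ∃ δ > 0, ∀ (T : ℝ) (γ : ℝ → Fin 10 → ℝ),
    IsSolution g γ (Set.Ico 0 T) →
    Real.sqrt ((γ 0 4) ^ 2 + (γ 0 5) ^ 2 + (γ 0 6) ^ 2) = L →
    Real.sqrt ((γ 0 7) ^ 2 + (γ 0 8) ^ 2 + (γ 0 9) ^ 2) = R →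
    dist (γ 0) pstar < δ →
    ∀ t ∈ Set.Ico (0:ℝ) T, dist (γ t) pstar < ε



/-! ### Part A: integral identities -/

/-- The cubic `(t+μ)(t+ζ)(t+ξ)`. -/
noncomputable def raDl (μ ζ ξ t : ℝ) : ℝ := (t + μ) * (t + ζ) * (t + ξ)

/-- The weight `((t+μ)(t+ζ)(t+ξ))^(-1/2)`. -/
noncomputable def raPh (μ ζ ξ t : ℝ) : ℝ := (√(raDl μ ζ ξ t))⁻¹

/-- The weighted integral. -/
noncomputable def raJ (μ ζ ξ : ℝ) (h : ℝ → ℝ) : ℝ := ∫ t in Set.Ioi (0:ℝ), raPh μ ζ ξ t * h t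

/-- Admissible integrands: continuous and bounded on the half line. -/
def raGood (h : ℝ → ℝ) : Prop :=
  ContinuousOn h (Set.Ioi 0) ∧ ∃ C, ∀ t ∈ Set.Ioi (0:ℝ), |h t| ≤ C

lemma raGood.const (c : ℝ) : raGood (fun _ => c) := ⟨continuousOn_const, |c|, fun _ _ => le_rfl⟩

lemma raGood.add {h k : ℝ → ℝ} (hh : raGood h) (hk : raGood k) : raGood (fun t => h t + k t) := by
  obtain ⟨h1, C, hC⟩ := hh
  obtain ⟨k1, D, hD⟩ := hk
  exact ⟨h1.add k1, C + D, fun t ht => (abs_add_le _ _).trans (add_le_add (hC t ht) (hD t ht))⟩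

lemma raGood.mul {h k : ℝ → ℝ} (hh : raGood h) (hk : raGood k) : raGood (fun t => h t * k t) := by
  obtain ⟨h1, C, hC⟩ := hh
  obtain ⟨k1, D, hD⟩ := hk
  refine ⟨h1.mul k1, C * D, fun t ht => ?_⟩
  rw [abs_mul]
  exact mul_le_mul (hC t ht) (hD t ht) (abs_nonneg _) ((abs_nonneg _).trans (hC t ht))

lemma raGood.congr {h k : ℝ → ℝ} (hh : raGood h) (he : ∀ t, 0 < t → k t = h t) : raGood k := by
  obtain ⟨h1, C, hC⟩ := hh
  exact ⟨h1.congr (fun t ht => he t ht), C, fun t ht => by rw [he t ht]; exact hC t ht⟩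

lemma raGood.inv {a : ℝ} (ha : 0 < a) : raGood (fun t => (t + a)⁻¹) := by
  refine ⟨?_, a⁻¹, fun t ht => ?_⟩
  · apply ContinuousOn.inv₀ (by fun_prop)
    intro t ht
    have : 0 < t := ht
    positivity
  · have : 0 < t := ht
    rw [abs_of_pos (by positivity)]
    exact inv_anti₀ ha (by linarith)

lemma raGood.frac {a : ℝ} (ha : 0 < a) : raGood (fun t => t * (t + a)⁻¹) := by
  refine ((raGood.const 1).add ((raGood.const (-a)).mul (raGood.inv ha))).congr fun t ht => ?_
  have : t + a ≠ 0 := by positivity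
  field_simp
  ring

lemma raDl_pos {μ ζ ξ : ℝ} (hμ : 0 < μ) (hζ : 0 < ζ) (hξ : 0 < ξ)
    {t : ℝ} (ht : 0 ≤ t) : 0 < raDl μ ζ ξ t := by
  unfold raDl; positivity

lemma raPh_pos {μ ζ ξ : ℝ} (hμ : 0 < μ) (hζ : 0 < ζ) (hξ : 0 < ξ)
    {t : ℝ} (ht : 0 ≤ t) : 0 < raPh μ ζ ξ t := by
  have := raDl_pos hμ hζ hξ ht
  unfold raPh; positivity

lemma raPh_cont {μ ζ ξ : ℝ} (hμ : 0 < μ) (hζ : 0 < ζ) (hξ : 0 < ξ)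
    : ContinuousOn (raPh μ ζ ξ) (Set.Ici 0) := by
  unfold raPh
  apply ContinuousOn.inv₀
  · unfold raDl; fun_prop
  · intro t ht
    have := raDl_pos hμ hζ hξ (t := t) ht
    positivity

lemma raPh_deriv {μ ζ ξ : ℝ} (hμ : 0 < μ) (hζ : 0 < ζ) (hξ : 0 < ξ)
    {t : ℝ} (ht : 0 ≤ t) : HasDerivAt (raPh μ ζ ξ)
    (-(1/2) * raPh μ ζ ξ t * ((t + μ)⁻¹ + (t + ζ)⁻¹ + (t + ξ)⁻¹)) t := by
  have hD := raDl_pos hμ hζ hξ ht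
  have h1 : HasDerivAt (raDl μ ζ ξ) ((1 * (t + ζ) + (t + μ) * 1) * (t + ξ) + (t + μ) * (t + ζ) * 1) t := by
    unfold raDl
    exact (((hasDerivAt_id t).add_const μ).mul ((hasDerivAt_id t).add_const ζ)).mul
      ((hasDerivAt_id t).add_const ξ)
  have h2 := (h1.sqrt hD.ne').inv (by positivity)
  refine h2.congr_deriv ?_
  unfold raPh
  have hs : √(raDl μ ζ ξ t) ^ 2 = raDl μ ζ ξ t := Real.sq_sqrt hD.le
  have hs0 : √(raDl μ ζ ξ t) ≠ 0 := by positivity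
  rw [hs]
  have : raDl μ ζ ξ t = (t + μ) * (t + ζ) * (t + ξ) := rfl
  generalize √(raDl μ ζ ξ t) = r at *
  rw [this]
  have a1 : t + μ ≠ 0 := by positivity
  have a2 : t + ζ ≠ 0 := by positivity
  have a3 : t + ξ ≠ 0 := by positivity
  field_simp

lemma raPh_bound {μ ζ ξ : ℝ} (hμ : 0 < μ) (hζ : 0 < ζ) (hξ : 0 < ξ)
    : ∃ C > 0, ∀ t, 0 ≤ t → raPh μ ζ ξ t ≤ C * (1 + t) ^ (-(3/2) : ℝ) := by
  set m := min 1 (min μ (min ζ ξ)) with hm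
  have m0 : 0 < m := by positivity
  have m1 : m ≤ 1 := min_le_left _ _
  have m2 : m ≤ μ := (min_le_right _ _).trans (min_le_left _ _)
  have m3 : m ≤ ζ := (min_le_right _ _).trans ((min_le_right _ _).trans (min_le_left _ _))
  have m4 : m ≤ ξ := (min_le_right _ _).trans ((min_le_right _ _).trans (min_le_right _ _))
  refine ⟨(√(m^3))⁻¹, by positivity, fun t ht => ?_⟩
  have key : m ^ 3 * (1 + t) ^ 3 ≤ raDl μ ζ ξ t := by
    unfold raDl
    have e1 : m * (1 + t) ≤ t + μ := by nlinarith
    have e2 : m * (1 + t) ≤ t + ζ := by nlinarith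
    have e3 : m * (1 + t) ≤ t + ξ := by nlinarith
    have : m ^ 3 * (1 + t) ^ 3 = (m * (1 + t)) * (m * (1 + t)) * (m * (1 + t)) := by ring
    rw [this]
    gcongr
  have e4 : (1 + t) ^ (-(3/2) : ℝ) = (√((1 + t)^3))⁻¹ := by
    rw [Real.rpow_neg (by positivity), Real.sqrt_eq_rpow, ← Real.rpow_natCast, ← Real.rpow_mul (by positivity)]
    norm_num
  rw [e4, ← mul_inv, ← Real.sqrt_mul (by positivity)]
  unfold raPh
  apply inv_anti₀ (by positivity)
  exact Real.sqrt_le_sqrt key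

lemma raPh_int {μ ζ ξ : ℝ} (hμ : 0 < μ) (hζ : 0 < ζ) (hξ : 0 < ξ)
    : IntegrableOn (raPh μ ζ ξ) (Set.Ioi 0) := by
  obtain ⟨C, hC, hb⟩ := raPh_bound hμ hζ hξ
  have h1 : Integrable (fun t : ℝ => (1 + ‖t‖) ^ (-(3/2) : ℝ)) :=
    integrable_one_add_norm (by norm_num)
  refine Integrable.mono' (h1.const_mul C).integrableOn
    ((raPh_cont hμ hζ hξ).mono Set.Ioi_subset_Ici_self |>.aestronglyMeasurable measurableSet_Ioi) ?_
  filter_upwards [ae_restrict_mem measurableSet_Ioi] with t ht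
  have ht' : 0 < t := ht
  have := raPh_pos hμ hζ hξ ht'.le
  rw [Real.norm_of_nonneg this.le, Real.norm_of_nonneg ht'.le]
  exact hb t ht'.le

lemma raGood.int {μ ζ ξ : ℝ} (hμ : 0 < μ) (hζ : 0 < ζ) (hξ : 0 < ξ)
    {h : ℝ → ℝ} (hh : raGood h) :
    IntegrableOn (fun t => raPh μ ζ ξ t * h t) (Set.Ioi 0) := by
  obtain ⟨h1, C, hC⟩ := hh
  refine Integrable.mul_bdd (c := C) (raPh_int hμ hζ hξ) (h1.aestronglyMeasurable measurableSet_Ioi) ?_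
  filter_upwards [ae_restrict_mem measurableSet_Ioi] with t ht
  exact hC t ht

lemma raJ_congr {μ ζ ξ : ℝ} {h k : ℝ → ℝ} (he : ∀ t, 0 < t → h t = k t) : raJ μ ζ ξ h = raJ μ ζ ξ k := by
  unfold raJ
  refine setIntegral_congr_fun measurableSet_Ioi fun t ht => ?_
  simp only [he t ht]

lemma raJ_add {μ ζ ξ : ℝ} (hμ : 0 < μ) (hζ : 0 < ζ) (hξ : 0 < ξ)
    {h k : ℝ → ℝ} (hh : raGood h) (hk : raGood k) :
    raJ μ ζ ξ (fun t => h t + k t) = raJ μ ζ ξ h + raJ μ ζ ξ k := by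
  unfold raJ
  rw [← integral_add (hh.int hμ hζ hξ) (hk.int hμ hζ hξ)]
  simp only [mul_add]

lemma raJ_smul {μ ζ ξ : ℝ} (c : ℝ) (h : ℝ → ℝ) : raJ μ ζ ξ (fun t => c * h t) = c * raJ μ ζ ξ h := by
  unfold raJ
  rw [← integral_const_mul]
  congr 1; ext t; ring

lemma raJ_lin {μ ζ ξ : ℝ} (hμ : 0 < μ) (hζ : 0 < ζ) (hξ : 0 < ξ)
    {f h1 h2 h3 h4 : ℝ → ℝ} (c1 c2 c3 c4 : ℝ) (g1 : raGood h1) (g2 : raGood h2)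
    (g3 : raGood h3) (g4 : raGood h4)
    (he : ∀ t, 0 < t → f t = c1 * h1 t + c2 * h2 t + c3 * h3 t + c4 * h4 t) :
    raJ μ ζ ξ f = c1 * raJ μ ζ ξ h1 + c2 * raJ μ ζ ξ h2 + c3 * raJ μ ζ ξ h3 + c4 * raJ μ ζ ξ h4 := by
  have q1 := (raGood.const c1).mul g1
  have q2 := (raGood.const c2).mul g2
  have q3 := (raGood.const c3).mul g3
  have q4 := (raGood.const c4).mul g4
  rw [raJ_congr he, raJ_add hμ hζ hξ ((q1.add q2).add q3) q4, raJ_add hμ hζ hξ (q1.add q2) q3,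
    raJ_add hμ hζ hξ q1 q2]
  simp only [raJ_smul]

lemma raJ_nonneg {μ ζ ξ : ℝ} (hμ : 0 < μ) (hζ : 0 < ζ) (hξ : 0 < ξ)
    {h : ℝ → ℝ} (he : ∀ t, 0 < t → 0 ≤ h t) : 0 ≤ raJ μ ζ ξ h := by
  unfold raJ
  refine setIntegral_nonneg measurableSet_Ioi fun t ht => ?_
  exact mul_nonneg (raPh_pos hμ hζ hξ (le_of_lt ht)).le (he t ht)

lemma raJ_mono {μ ζ ξ : ℝ} (hμ : 0 < μ) (hζ : 0 < ζ) (hξ : 0 < ξ)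
    {h k : ℝ → ℝ} (hh : raGood h) (hk : raGood k) (he : ∀ t, 0 < t → h t ≤ k t) :
    raJ μ ζ ξ h ≤ raJ μ ζ ξ k := by
  unfold raJ
  refine setIntegral_mono_on (hh.int hμ hζ hξ) (hk.int hμ hζ hξ) measurableSet_Ioi fun t ht => ?_
  exact mul_le_mul_of_nonneg_left (he t ht) (raPh_pos hμ hζ hξ (le_of_lt ht)).le

lemma raJ_pos {μ ζ ξ : ℝ} (hμ : 0 < μ) (hζ : 0 < ζ) (hξ : 0 < ξ)
    {h : ℝ → ℝ} (hh : raGood h) (he : ∀ t, 0 < t → 0 < h t) : 0 < raJ μ ζ ξ h := by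
  unfold raJ
  have hp : ∀ t ∈ Set.Ioi (0:ℝ), 0 < raPh μ ζ ξ t * h t := fun t ht =>
    mul_pos (raPh_pos hμ hζ hξ (le_of_lt ht)) (he t ht)
  rw [setIntegral_pos_iff_support_of_nonneg_ae]
  · have : Function.support (fun t => raPh μ ζ ξ t * h t) ∩ Set.Ioi 0 = Set.Ioi 0 := by
      apply Set.inter_eq_right.2
      intro t ht
      exact (hp t ht).ne'
    rw [this]; simp
  · filter_upwards [ae_restrict_mem measurableSet_Ioi] with t ht
    exact (hp t ht).le
  · exact hh.int hμ hζ hξ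

lemma raJ_total {μ ζ ξ : ℝ} (hμ : 0 < μ) (hζ : 0 < ζ) (hξ : 0 < ξ)
    {k k' h : ℝ → ℝ} (hk : ∀ t, 0 ≤ t → HasDerivAt k (k' t) t) (k0 : k 0 = 0)
    (hb : ∃ C, ∀ t, 0 ≤ t → |k t| ≤ C * (1 + t)) (hh : raGood h)
    (he : ∀ t, 0 < t → h t = k' t - (1/2) * k t * ((t + μ)⁻¹ + (t + ζ)⁻¹ + (t + ξ)⁻¹)) :
    raJ μ ζ ξ h = 0 := by
  obtain ⟨C, hC⟩ := hb
  obtain ⟨D, D0, hD⟩ := raPh_bound hμ hζ hξ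
  have key : ∫ t in Set.Ioi (0:ℝ), (raPh μ ζ ξ t * (k' t - (1/2) * k t * ((t + μ)⁻¹ + (t + ζ)⁻¹ + (t + ξ)⁻¹)))
      = 0 - raPh μ ζ ξ 0 * k 0 := by
    apply integral_Ioi_of_hasDerivAt_of_tendsto' (f := fun t => raPh μ ζ ξ t * k t)
    · intro t ht
      refine ((raPh_deriv hμ hζ hξ ht).mul (hk t ht)).congr_deriv ?_
      ring
    · refine (hh.int hμ hζ hξ).congr_fun (fun t ht => ?_) measurableSet_Ioi
      simp only [he t ht]
    · have lim : Filter.Tendsto (fun t : ℝ => (D * C) * (1 + t) ^ (-(1/2) : ℝ)) Filter.atTop (nhds 0) := by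
        have := (tendsto_rpow_neg_atTop (y := 1/2) (by norm_num)).comp
          (Filter.tendsto_atTop_add_const_left Filter.atTop (1:ℝ) Filter.tendsto_id)
        simpa using this.const_mul (D * C)
      refine squeeze_zero_norm' ?_ lim
      filter_upwards [Filter.eventually_ge_atTop 0] with t ht
      have hp := raPh_pos hμ hζ hξ ht
      rw [norm_mul, Real.norm_of_nonneg hp.le, Real.norm_eq_abs]
      calc raPh μ ζ ξ t * |k t| ≤ (D * (1 + t) ^ (-(3/2) : ℝ)) * (C * (1 + t)) :=
            mul_le_mul (hD t ht) (hC t ht) (abs_nonneg _) (by positivity)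
        _ = D * C * ((1 + t) ^ (-(3/2) : ℝ) * (1 + t) ^ (1:ℝ)) := by rw [Real.rpow_one]; ring
        _ = _ := by rw [← Real.rpow_add (by positivity)]; norm_num
  rw [k0, mul_zero, sub_zero] at key
  rw [← key, raJ]
  refine setIntegral_congr_fun measurableSet_Ioi fun t ht => ?_
  simp only [he t ht]

/-! The concrete integrals. -/

/-- `θ = μ/(t+μ)`. -/
noncomputable def raTh (μ t : ℝ) : ℝ := μ * (t + μ)⁻¹
/-- `ρ = t/((t+ζ)(t+ξ))`. -/
noncomputable def raRh (ζ ξ t : ℝ) : ℝ := t * (t + ζ)⁻¹ * (t + ξ)⁻¹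
/-- `t/Δ`. -/
noncomputable def raQ1 (μ ζ ξ t : ℝ) : ℝ := t * (t + μ)⁻¹ * (t + ζ)⁻¹ * (t + ξ)⁻¹
/-- `t²/Δ`. -/
noncomputable def raQ2 (μ ζ ξ t : ℝ) : ℝ := t ^ 2 * (t + μ)⁻¹ * (t + ζ)⁻¹ * (t + ξ)⁻¹

lemma raGood_Th {μ : ℝ} (hμ : 0 < μ) : raGood (raTh μ) := (raGood.const μ).mul (raGood.inv hμ)
lemma raGood_Rh {ζ ξ : ℝ} (hζ : 0 < ζ) (hξ : 0 < ξ) : raGood (raRh ζ ξ) :=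
  (raGood.frac hζ).mul (raGood.inv hξ)
lemma raGood_Q1 {μ ζ ξ : ℝ} (hμ : 0 < μ) (hζ : 0 < ζ) (hξ : 0 < ξ) : raGood (raQ1 μ ζ ξ) :=
  ((raGood.frac hμ).mul (raGood.inv hζ)).mul (raGood.inv hξ)
lemma raGood_Q2 {μ ζ ξ : ℝ} (hμ : 0 < μ) (hζ : 0 < ζ) (hξ : 0 < ξ) : raGood (raQ2 μ ζ ξ) :=
  (((raGood.frac hμ).mul (raGood.frac hζ)).mul (raGood.inv hξ)).congr fun t _ => by
    unfold raQ2; ring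
lemma raGood_one : raGood (fun _ => 1) := raGood.const 1

lemma raP1_pos {μ ζ ξ : ℝ} (hμ : 0 < μ) (hζ : 0 < ζ) (hξ : 0 < ξ) :
    0 < raJ μ ζ ξ (raQ1 μ ζ ξ) :=
  raJ_pos hμ hζ hξ (raGood_Q1 hμ hζ hξ) fun t ht => by unfold raQ1; positivity

lemma ra_Mrho {μ ζ ξ : ℝ} (hμ : 0 < μ) (hζ : 0 < ζ) (hξ : 0 < ξ) :
    raJ μ ζ ξ (raRh ζ ξ) = raJ μ ζ ξ (raQ2 μ ζ ξ) + μ * raJ μ ζ ξ (raQ1 μ ζ ξ) := by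
  have := raJ_lin hμ hζ hξ (f := raRh ζ ξ) 1 μ 0 0 (raGood_Q2 hμ hζ hξ) (raGood_Q1 hμ hζ hξ)
    raGood_one raGood_one (fun t ht => by
      unfold raRh raQ2 raQ1
      have a1 : t + μ ≠ 0 := by positivity
      field_simp
      ring)
  linarith

lemma ra_Mrhoth {μ ζ ξ : ℝ} :
    raJ μ ζ ξ (fun t => raRh ζ ξ t * raTh μ t) = μ * raJ μ ζ ξ (raQ1 μ ζ ξ) := by
  rw [← raJ_smul]
  apply raJ_congr
  intro t _
  unfold raRh raTh raQ1; ring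

lemma ra_I1 {μ ζ ξ : ℝ} (hμ : 0 < μ) (hζ : 0 < ζ) (hξ : 0 < ξ) (h1 : ζ * ξ = 1) :
    raJ μ ζ ξ (fun _ => 1) - 3 * raJ μ ζ ξ (raTh μ) =
      (2 - μ * (ζ + ξ)) * raJ μ ζ ξ (raQ1 μ ζ ξ) + (ζ + ξ - 2 * μ) * raJ μ ζ ξ (raQ2 μ ζ ξ) := by
  have g0 : raGood (fun t => 1 + (-(1/2)) * (t * (t + μ)⁻¹ + t * (t + ζ)⁻¹ + t * (t + ξ)⁻¹)) :=
    (raGood.const 1).add ((raGood.const (-(1/2))).mul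
      (((raGood.frac hμ).add (raGood.frac hζ)).add (raGood.frac hξ)))
  have z := raJ_total hμ hζ hξ (k := fun t => t) (k' := fun _ => 1)
    (fun t _ => hasDerivAt_id t) rfl ⟨1, fun t ht => by rw [abs_of_nonneg ht]; linarith⟩ g0
    (fun t ht => by ring)
  have e := raJ_lin hμ hζ hξ
    (f := fun t => 1 + (-(1/2)) * (t * (t + μ)⁻¹ + t * (t + ζ)⁻¹ + t * (t + ξ)⁻¹))
    (-(1/2)) (3/2) ((2 - μ * (ζ + ξ))/2) ((ζ + ξ - 2 * μ)/2) raGood_one (raGood_Th hμ)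
    (raGood_Q1 hμ hζ hξ) (raGood_Q2 hμ hζ hξ) (fun t ht => by
      unfold raTh raQ2 raQ1
      have a1 : t + μ ≠ 0 := by positivity
      have a2 : t + ζ ≠ 0 := by positivity
      have a3 : t + ξ ≠ 0 := by positivity
      have e2 : 2 - μ * (ζ + ξ) = 2 * (ζ * ξ) - μ * (ζ + ξ) := by rw [h1]; ring
      rw [e2]
      field_simp
      ring)
  rw [z] at e
  linarith

lemma ra_I2 {μ ζ ξ : ℝ} (hμ : 0 < μ) (hζ : 0 < ζ) (hξ : 0 < ξ) :
    3 * raJ μ ζ ξ (fun t => raTh μ t ^ 2) = raJ μ ζ ξ (raTh μ) +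
      μ * (2 * raJ μ ζ ξ (raQ2 μ ζ ξ) + (ζ + ξ) * raJ μ ζ ξ (raQ1 μ ζ ξ)) := by
  have gT2 : raGood (fun t => raTh μ t ^ 2) := ((raGood_Th hμ).mul (raGood_Th hμ)).congr
    fun t _ => by ring
  set f := fun t => (3/2) * raTh μ t ^ 2 + (-(1/2)) * raTh μ t
      + (-μ) * raQ2 μ ζ ξ t + (-(μ * (ζ + ξ))/2) * raQ1 μ ζ ξ t with hf
  have g0 : raGood f := ((((raGood.const _).mul gT2).add ((raGood.const _).mul (raGood_Th hμ))).add
      ((raGood.const _).mul (raGood_Q2 hμ hζ hξ))).add ((raGood.const _).mul (raGood_Q1 hμ hζ hξ))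
  have z := raJ_total hμ hζ hξ (k := fun t => μ * t / (t + μ)) (h := f)
    (k' := fun t => (μ * (t + μ) - μ * t) / (t + μ)^2)
    (fun t ht => by
      have a1 : t + μ ≠ 0 := by positivity
      have := ((hasDerivAt_id t).const_mul μ).div ((hasDerivAt_id t).add_const μ) a1
      refine this.congr_deriv ?_
      simp)
    (by simp) ⟨μ, fun t ht => by
      rw [abs_of_nonneg (by positivity), div_le_iff₀ (by positivity)]
      nlinarith [mul_nonneg hμ.le ht, mul_nonneg (mul_nonneg hμ.le ht) ht, mul_nonneg (mul_nonneg hμ.le ht) hμ.le, mul_pos hμ hμ]⟩ g0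
    (fun t ht => by
      simp only [hf]
      unfold raTh raQ2 raQ1
      have a1 : t + μ ≠ 0 := by positivity
      have a2 : t + ζ ≠ 0 := by positivity
      have a3 : t + ξ ≠ 0 := by positivity
      field_simp
      ring)
  have e := raJ_lin hμ hζ hξ (f := f) (3/2) (-(1/2)) (-μ) (-(μ * (ζ + ξ))/2) gT2 (raGood_Th hμ)
    (raGood_Q2 hμ hζ hξ) (raGood_Q1 hμ hζ hξ) (fun t ht => rfl)
  rw [z] at e
  linarith

lemma ra_I4 {μ ζ ξ : ℝ} (hμ : 0 < μ) (hζ : 0 < ζ) (hξ : 0 < ξ) (hμζ : μ ≤ ζ) (hζξ : ζ ≤ ξ) :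
    (μ + ζ / 3) * raJ μ ζ ξ (raQ1 μ ζ ξ) ≤ raJ μ ζ ξ (raQ2 μ ζ ξ) := by
  set f := fun t => raQ1 μ ζ ξ t * (-(3/2) * t - ζ + (3/2) * (t + ζ) * (μ * (t + μ)⁻¹ + ξ * (t + ξ)⁻¹))
    with hf
  have g0 : raGood f := by
    have : raGood (fun t => -(3/2) * raQ2 μ ζ ξ t + -ζ * raQ1 μ ζ ξ t + (3/2) * ((t * (t + μ)⁻¹ * (t + ξ)⁻¹) *
      (μ * (t + μ)⁻¹ + ξ * (t + ξ)⁻¹))) :=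
      ((((raGood.const _).mul (raGood_Q2 hμ hζ hξ))).add ((raGood.const _).mul (raGood_Q1 hμ hζ hξ))).add
        ((raGood.const _).mul (((raGood.frac hμ).mul (raGood.inv hξ)).mul
          (((raGood.const _).mul (raGood.inv hμ)).add ((raGood.const _).mul (raGood.inv hξ)))))
    refine this.congr fun t ht => ?_
    simp only [hf]
    unfold raQ2 raQ1
    have a2 : t + ζ ≠ 0 := by positivity
    have : (t + ζ)⁻¹ * (t + ζ) = 1 := inv_mul_cancel₀ a2
    linear_combination (t * (t + μ)⁻¹ * (t + ξ)⁻¹ * (3/2) * (μ * (t + μ)⁻¹ + ξ * (t + ξ)⁻¹)) * this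
  have z := raJ_total hμ hζ hξ (k := fun t => t ^ 2 / ((t + μ) * (t + ξ))) (h := f)
    (k' := fun t => (2 * t * ((t + μ) * (t + ξ)) - t ^ 2 * ((t + ξ) + (t + μ))) / ((t + μ) * (t + ξ))^2)
    (fun t ht => by
      have a1 : (t + μ) * (t + ξ) ≠ 0 := by positivity
      have := ((hasDerivAt_pow 2 t)).div (((hasDerivAt_id t).add_const μ).mul ((hasDerivAt_id t).add_const ξ)) a1
      refine this.congr_deriv ?_
      simp)
    (by simp) ⟨1, fun t ht => by
      rw [abs_of_nonneg (by positivity), div_le_iff₀ (by positivity)]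
      nlinarith [mul_nonneg hμ.le ht, mul_nonneg hξ.le ht, mul_pos hμ hξ, mul_nonneg (mul_pos hμ hξ).le ht, mul_nonneg (mul_nonneg hμ.le ht) ht, mul_nonneg (mul_nonneg hξ.le ht) ht, pow_nonneg ht 3]⟩ g0
    (fun t ht => by
      simp only [hf]
      unfold raQ1
      have a1 : t + μ ≠ 0 := by positivity
      have a2 : t + ζ ≠ 0 := by positivity
      have a3 : t + ξ ≠ 0 := by positivity
      field_simp
      ring)
  have gl : raGood (fun t => (-(3/2)) * raQ2 μ ζ ξ t + ((3/2) * μ + ζ / 2) * raQ1 μ ζ ξ t) :=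
    ((raGood.const _).mul (raGood_Q2 hμ hζ hξ)).add ((raGood.const _).mul (raGood_Q1 hμ hζ hξ))
  have m := raJ_mono hμ hζ hξ gl g0 (fun t ht => by
    simp only [hf]
    have e1 : μ ≤ (t + ζ) * (μ * (t + μ)⁻¹) := by
      rw [← mul_assoc, ← div_eq_mul_inv, le_div_iff₀ (by positivity)]
      nlinarith
    have e2 : ζ ≤ (t + ζ) * (ξ * (t + ξ)⁻¹) := by
      rw [← mul_assoc, ← div_eq_mul_inv, le_div_iff₀ (by positivity)]
      nlinarith
    have q : 0 ≤ raQ1 μ ζ ξ t := by unfold raQ1; positivity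
    have q2 : raQ2 μ ζ ξ t = raQ1 μ ζ ξ t * t := by unfold raQ1 raQ2; ring
    rw [q2]
    have := mul_nonneg q (add_nonneg (sub_nonneg.2 e1) (sub_nonneg.2 e2))
    nlinarith)
  rw [z] at m
  have e := raJ_lin hμ hζ hξ (f := fun t => (-(3/2)) * raQ2 μ ζ ξ t + ((3/2) * μ + ζ / 2) * raQ1 μ ζ ξ t)
    (-(3/2)) ((3/2) * μ + ζ / 2) 0 0
    (raGood_Q2 hμ hζ hξ) (raGood_Q1 hμ hζ hξ) raGood_one raGood_one (fun t ht => by ring)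
  rw [e] at m
  linarith

lemma ra_I5 {μ ζ ξ : ℝ} (hμ : 0 < μ) (hξ : 0 < ξ) (hμζ : μ < ζ) (hζξ : ζ ≤ ξ)
    {k : ℝ} (hk : 0 < k) (hk2 : μ = ζ * k ^ 2) :
    (1 + k) * μ * (raJ μ ζ ξ (raQ2 μ ζ ξ) + ξ * raJ μ ζ ξ (raQ1 μ ζ ξ)) ≤ k * raJ μ ζ ξ (raTh μ) := by
  have hζ : 0 < ζ := hμ.trans hμζ
  have k1 : k < 1 := by
    by_contra hc
    push Not at hc
    have : 1 ≤ k ^ 2 := one_le_pow₀ hc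
    nlinarith
  set S := fun t => (t + μ) * (t + ζ) with hS
  have S0 : ∀ t, 0 ≤ t → 0 < S t := fun t ht => by simp only [hS]; positivity
  have SD : ∀ t, 0 ≤ t → HasDerivAt S ((t + ζ) + (t + μ)) t := fun t ht => by
    refine (((hasDerivAt_id t).add_const μ).mul ((hasDerivAt_id t).add_const ζ)).congr_deriv ?_
    simp
  have Sle : ∀ t, 0 ≤ t → √(S t) ≤ t + ξ := fun t ht => by
    rw [Real.sqrt_le_left (by positivity)]
    simp only [hS]
    nlinarith
  have Sge : ∀ t, 0 ≤ t → t + k * ζ ≤ √(S t) := fun t ht => by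
    apply Real.le_sqrt_of_sq_le
    simp only [hS]
    rw [hk2]
    nlinarith [mul_nonneg (mul_nonneg ht hζ.le) (sq_nonneg (k - 1))]
  set W := fun t => (t - k * ζ) * (t + μ)⁻¹ * (t + ζ)⁻¹ with hW
  have gW : raGood W := by
    have : raGood (fun t => (t * (t + μ)⁻¹ + (-(k * ζ)) * (t + μ)⁻¹) * (t + ζ)⁻¹) :=
      ((raGood.frac hμ).add ((raGood.const _).mul (raGood.inv hμ))).mul (raGood.inv hζ)
    exact this.congr fun t ht => by simp only [hW]; ring
  set R := fun t => (√(S t) - t - k * ζ) * (t + ξ)⁻¹ with hR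
  have gR : raGood R := by
    refine ⟨?_, 1, fun t ht => ?_⟩
    · simp only [hR, hS]
      apply ContinuousOn.mul (by fun_prop)
      exact (raGood.inv hξ).1
    · have ht' : 0 < t := ht
      simp only [hR]
      have := Sge t ht'.le
      have := Sle t ht'.le
      rw [abs_of_nonneg (mul_nonneg (by linarith) (by positivity)), ← div_eq_mul_inv, div_le_one (by positivity)]
      nlinarith
  set c := (μ + ζ) / 2 - k * ζ with hc
  have c0 : 0 < c := by
    have : c = ζ * (1 - k)^2 / 2 := by rw [hc, hk2]; ring
    rw [this]
    have : 0 < 1 - k := by linarith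
    positivity
  have g0 : raGood (fun t => c * W t + (1/2) * R t) :=
    ((raGood.const _).mul gW).add ((raGood.const _).mul gR)
  have z := raJ_total hμ hζ hξ (k := fun t => t + k * ζ - √(S t)) (h := fun t => c * W t + (1/2) * R t)
    (k' := fun t => 1 - ((t + ζ) + (t + μ)) / (2 * √(S t)))
    (fun t ht => ((hasDerivAt_id t).add_const _).sub ((SD t ht).sqrt (S0 t ht).ne'))
    (by
      simp only [hS, hk2]
      have : (0 + ζ * k ^ 2) * (0 + ζ) = (k * ζ) ^ 2 := by ring
      rw [this, Real.sqrt_sq (by positivity)]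
      ring) ⟨1 + ξ, fun t ht => by
      have h1 := Sge t ht
      have h2 := Sle t ht
      rw [abs_of_nonpos (by linarith)]
      nlinarith [mul_nonneg ht hξ.le, mul_pos hk hζ]⟩ g0
    (fun t ht => by
      have s1 : √(S t) ^ 2 = (t + μ) * (t + ζ) := Real.sq_sqrt (S0 t ht.le).le
      have s0 : √(S t) ≠ 0 := (Real.sqrt_pos.2 (S0 t ht.le)).ne'
      simp only [hW, hR, hc]
      generalize √(S t) = r at *
      have a1 : t + μ ≠ 0 := by positivity
      have a2 : t + ζ ≠ 0 := by positivity
      have a3 : t + ξ ≠ 0 := by positivity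
      have i1 : (t + μ)⁻¹ = (t + ζ) / r ^ 2 := by rw [s1]; field_simp
      have i2 : (t + ζ)⁻¹ = (t + μ) / r ^ 2 := by rw [s1]; field_simp
      have k2 : (k * ζ) ^ 2 = μ * ζ := by rw [hk2]; ring
      have e : (t - k * ζ) * (t + μ)⁻¹ * (t + ζ)⁻¹ = (t - k * ζ) / r ^ 2 := by rw [s1]; field_simp
      rw [e, i1, i2]
      have hlin : (t + μ) + (t + ζ) = 2 * t + μ + ζ := by ring
      have r2 : r⁻¹ ^ 2 * ((t + μ) * (t + ζ)) = 1 := by rw [← s1]; field_simp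
      have hr1 : r⁻¹ * r = 1 := inv_mul_cancel₀ s0
      have expr : ((μ + ζ) / 2 - k * ζ) * (t - k * ζ) = (t + μ) * (t + ζ) - (1/2) * (t + k * ζ) * ((t + ζ) + (t + μ)) := by
        linear_combination k2
      simp only [div_eq_mul_inv, mul_inv]
      rw [← inv_pow]
      linear_combination r⁻¹ ^ 2 * expr + r2 - (1/2) * (2 * t + μ + ζ) * r⁻¹ * hr1)
  have e := raJ_add hμ hζ hξ ((raGood.const c).mul gW) ((raGood.const (1/2)).mul gR)
  rw [z, raJ_smul, raJ_smul] at e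
  have rn : 0 ≤ raJ μ ζ ξ R := raJ_nonneg hμ hζ hξ fun t ht => by
    simp only [hR]
    have := Sge t ht.le
    exact mul_nonneg (by linarith) (by positivity)
  have wn : raJ μ ζ ξ W ≤ 0 := by
    by_contra hcon
    push Not at hcon
    have := mul_pos c0 hcon
    linarith
  have l := raJ_lin hμ hζ hξ (f := W) (-k / μ) (1 + k) ((1 + k) * ξ) 0 (raGood_Th hμ) (raGood_Q2 hμ hζ hξ)
    (raGood_Q1 hμ hζ hξ) raGood_one (fun t ht => by
      simp only [hW]
      unfold raTh raQ2 raQ1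
      have a1 : t + μ ≠ 0 := by positivity
      have a2 : t + ζ ≠ 0 := by positivity
      have a3 : t + ξ ≠ 0 := by positivity
      field_simp
      ring)
  rw [l] at wn
  have := mul_nonpos_of_nonneg_of_nonpos hμ.le wn
  have e2 : μ * (-k / μ * raJ μ ζ ξ (raTh μ)) = - k * raJ μ ζ ξ (raTh μ) := by field_simp
  nlinarith

lemma ra_rho_le {ζ ξ t : ℝ} (hζ : 0 < ζ) (hξ : 0 < ξ) (h1 : ζ * ξ = 1) (ht : 0 < t) :
    0 ≤ raRh ζ ξ t ∧ raRh ζ ξ t ≤ (ζ + ξ + 2)⁻¹ := by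
  unfold raRh
  refine ⟨by positivity, ?_⟩
  have : t * (t + ζ)⁻¹ * (t + ξ)⁻¹ = t / ((t + ζ) * (t + ξ)) := by
    simp only [div_eq_mul_inv, mul_inv]; ring
  rw [this, div_le_iff₀ (by positivity), inv_mul_eq_div, le_div_iff₀ (by positivity)]
  nlinarith [sq_nonneg (t - 1)]

lemma ra_Mrho2 {μ ζ ξ : ℝ} (hμ : 0 < μ) (hζ : 0 < ζ) (hξ : 0 < ξ) (h1 : ζ * ξ = 1) :
    raJ μ ζ ξ (fun t => raRh ζ ξ t ^ 2) ≤ (ζ + ξ + 2)⁻¹ * raJ μ ζ ξ (raRh ζ ξ) := by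
  rw [← raJ_smul]
  have g := raGood_Rh hζ hξ
  refine raJ_mono hμ hζ hξ ((g.mul g).congr fun t _ => by ring) ((raGood.const _).mul g) fun t ht => ?_
  have := ra_rho_le hζ hξ h1 ht
  rw [sq]
  exact mul_le_mul_of_nonneg_right this.2 this.1

lemma rb_z1 {k y : ℝ} (k0 : 0 ≤ k) (k1 : k ≤ 1) (y0 : 0 ≤ y) :
    k * (1 - k ^ 2) * (2 * (2 * k ^ 2 + 1/3 + y) + 3 * k ^ 2) < (2 - k) * (2 * k ^ 2 + 1/3 + y) ^ 2 := by
  have c1 : 0 ≤ 4/3 - 8/3 * k + 8 * k ^ 2 - 2 * k ^ 3 := by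
    nlinarith [mul_nonneg (sq_nonneg k) (sub_nonneg.2 k1), sq_nonneg (k - 1/3)]
  have c0 : 0 < (2 - k) * (2 * k ^ 2 + 1/3) ^ 2 - k * (1 - k ^ 2) * (7 * k ^ 2 + 2/3) := by
    nlinarith [mul_nonneg k0 (sub_nonneg.2 k1), sq_nonneg (k - 1/3), sq_nonneg (k^2 - k/3), sq_nonneg (k^2 - 1/9), mul_nonneg k0 (sq_nonneg (k - 1/3)), mul_nonneg k0 (sq_nonneg (k^2 - k/3)), mul_nonneg k0 (sq_nonneg (k ^ 2 - 1/9)), pow_nonneg k0 3, pow_nonneg k0 5, mul_nonneg (pow_nonneg k0 4) (sub_nonneg.2 k1)]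
  have c2 : 0 ≤ (2 - k) * y ^ 2 := mul_nonneg (by linarith) (sq_nonneg y)
  nlinarith [mul_nonneg c1 y0]

lemma rb_z0 {k y : ℝ} (k0 : 0 ≤ k) (k1 : k ≤ 1) (y0 : 0 ≤ y) :
    k * (2 - 2 * k ^ 2 + (2 * k ^ 2 + 1/3 + y)) * (2 * (2 * k ^ 2 + 1/3 + y) + 3 * k ^ 2)
      < (4 + k) * (2 * k ^ 2 + 1/3 + y) ^ 2 := by
  have c1 : 0 ≤ 2 * (4 - k) * (2 * k ^ 2 + 1/3) - 4 * k * (1 - k ^ 2) - 3 * k ^ 3 := by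
    nlinarith [mul_nonneg (sq_nonneg k) (sub_nonneg.2 k1), sq_nonneg (k - 1/6)]
  have c0 : 0 < (4 - k) * (2 * k ^ 2 + 1/3) ^ 2 - 4 * k * (1 - k ^ 2) * (2 * k ^ 2 + 1/3)
      - 6 * k ^ 3 * (1 - k ^ 2) - 3 * k ^ 3 * (2 * k ^ 2 + 1/3) := by
    nlinarith [mul_nonneg k0 (sub_nonneg.2 k1), sq_nonneg (k - 1/3), sq_nonneg (k^2 - k/3), sq_nonneg (k^2 - 1/9), mul_nonneg k0 (sq_nonneg (k - 1/3)), mul_nonneg k0 (sq_nonneg (k^2 - k/3)), mul_nonneg k0 (sq_nonneg (k ^ 2 - 1/9)), pow_nonneg k0 3, pow_nonneg k0 5, mul_nonneg (pow_nonneg k0 4) (sub_nonneg.2 k1)]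
  have c2 : 0 ≤ (4 - k) * y ^ 2 := mul_nonneg (by linarith) (sq_nonneg y)
  nlinarith [mul_nonneg c1 y0]

lemma rb_poly {k z R : ℝ} (k0 : 0 ≤ k) (k1 : k ≤ 1) (z0 : 0 ≤ z) (z1 : z ≤ 1) (hR : k ^ 2 + 1/3 ≤ R) :
    k * ((2 - k ^ 2 * (1 + z)) + (1 + z - 2 * z * k ^ 2) * R) * (6 * R + 15 * k ^ 2) <
      (12 * (1 + k) * (1 + z * R) - 9 * k * (1 + z + 2 * z * R)) * (R + k ^ 2) ^ 2 := by
  have h1 := rb_z1 k0 k1 (sub_nonneg.2 hR)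
  have h0 := rb_z0 k0 k1 (sub_nonneg.2 hR)
  have R0 : 0 < R := lt_of_lt_of_le (by positivity) hR
  have e : 2 * k ^ 2 + 1/3 + (R - (k ^ 2 + 1/3)) = R + k ^ 2 := by ring
  rw [e] at h1 h0
  have h1' := mul_lt_mul_of_pos_left h1 (show 0 < 6 * (1 + R) by positivity)
  have key : 0 < (1 - z) * (3 * ((4 + k) * (R + k ^ 2) ^ 2 - k * (2 - 2 * k ^ 2 + (R + k ^ 2)) * (2 * (R + k ^ 2) + 3 * k ^ 2)))
      + z * (6 * (1 + R) * ((2 - k) * (R + k ^ 2) ^ 2) - 6 * (1 + R) * (k * (1 - k ^ 2) * (2 * (R + k ^ 2) + 3 * k ^ 2))) := by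
    rcases eq_or_lt_of_le z0 with hz | hz
    · rw [← hz]; linarith
    · have := mul_pos hz (sub_pos.2 h1')
      have := mul_nonneg (sub_nonneg.2 z1) (sub_pos.2 h0).le
      linarith
  nlinarith

lemma rb_alg {μ ζ ξ k P1 P2 Th : ℝ} (hζ : 0 < ζ) (hζ1 : ζ ≤ 1) (h1 : ζ * ξ = 1) (k0 : 0 < k) (k1 : k ≤ 1)
    (hk : μ = ζ * k ^ 2) (hP1 : 0 < P1) (hP2 : (μ + ζ / 3) * P1 ≤ P2)
    (hT : (1 + k) * μ * (P2 + ξ * P1) ≤ k * Th) :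
    ((2 - μ * (ζ + ξ)) * P1 + (ζ + ξ - 2 * μ) * P2) * (μ * P1) * (6 * (P2 + μ * P1) + 9 * (μ * P1)) <
     (12 * Th - 9 * μ * (2 * P2 + (ζ + ξ) * P1)) * (P2 + μ * P1) ^ 2 := by
  set R := P2 / (ζ * P1) with hR
  have eP2 : P2 = ζ * R * P1 := by rw [hR]; field_simp
  have R1 : k ^ 2 + 1/3 ≤ R := by
    rw [hR, le_div_iff₀ (by positivity)]
    rw [hk] at hP2; linarith
  have hp := rb_poly k0.le k1 (sq_nonneg ζ) (by nlinarith) R1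
  have eξ : ξ = ζ⁻¹ := by field_simp; linarith
  have hTh : 12 * ((1 + k) * μ * (P2 + ξ * P1)) * (P2 + μ * P1) ^ 2 ≤ 12 * (k * Th) * (P2 + μ * P1) ^ 2 := by
    gcongr
  have hp2 := mul_lt_mul_of_pos_left hp (show 0 < P1 ^ 3 * ζ ^ 2 * k ^ 2 by positivity)
  have main : k * (((2 - μ * (ζ + ξ)) * P1 + (ζ + ξ - 2 * μ) * P2) * (μ * P1) * (6 * (P2 + μ * P1) + 9 * (μ * P1))) <
     k * ((12 * Th - 9 * μ * (2 * P2 + (ζ + ξ) * P1)) * (P2 + μ * P1) ^ 2) := by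
    have e1 : k * (((2 - μ * (ζ + ξ)) * P1 + (ζ + ξ - 2 * μ) * P2) * (μ * P1) * (6 * (P2 + μ * P1) + 9 * (μ * P1)))
       = P1 ^ 3 * ζ ^ 2 * k ^ 2 * (k * ((2 - k ^ 2 * (1 + ζ ^ 2)) + (1 + ζ ^ 2 - 2 * ζ ^ 2 * k ^ 2) * R) * (6 * R + 15 * k ^ 2)) := by
      rw [eP2, hk, eξ]; field_simp; ring
    have e2 : 12 * ((1 + k) * μ * (P2 + ξ * P1)) * (P2 + μ * P1) ^ 2 - k * (9 * μ * (2 * P2 + (ζ + ξ) * P1) * (P2 + μ * P1) ^ 2)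
       = P1 ^ 3 * ζ ^ 2 * k ^ 2 * ((12 * (1 + k) * (1 + ζ ^ 2 * R) - 9 * k * (1 + ζ ^ 2 + 2 * ζ ^ 2 * R)) * (R + k ^ 2) ^ 2) := by
      rw [eP2, hk, eξ]; field_simp; ring
    rw [e1]
    linarith
  exact lt_of_mul_lt_mul_left main k0.le

/-- The quantities entering the second variation. -/
noncomputable def rbX (μ ζ ξ : ℝ) : ℝ := (raJ μ ζ ξ (fun _ => 1) - 3 * raJ μ ζ ξ (raTh μ)) / 2
noncomputable def rbG (μ ζ ξ : ℝ) : ℝ := raJ μ ζ ξ (raRh ζ ξ) / 2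
noncomputable def rbW (μ ζ ξ : ℝ) : ℝ :=
  raJ μ ζ ξ (raRh ζ ξ) / 4 + 3 / 4 * raJ μ ζ ξ (fun t => raRh ζ ξ t * raTh μ t)
noncomputable def rbY (μ ζ ξ : ℝ) : ℝ :=
  raJ μ ζ ξ (fun _ => 1) / 4 + 9 / 2 * raJ μ ζ ξ (raTh μ) - 27 / 4 * raJ μ ζ ξ (fun t => raTh μ t ^ 2)
noncomputable def rbZ (μ ζ ξ : ℝ) : ℝ := 3 / 4 * raJ μ ζ ξ (fun t => raRh ζ ξ t ^ 2)

lemma rb_key {μ ζ ξ : ℝ} (hμ : 0 < μ) (hμζ : μ < ζ) (hζ1 : ζ < 1) (h1 : ζ * ξ = 1) :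
    0 < rbX μ ζ ξ ∧ 0 < rbG μ ζ ξ ∧ 2 * rbX μ ζ ξ * rbW μ ζ ξ ^ 2 < rbY μ ζ ξ * rbG μ ζ ξ ^ 2 := by
  have hζ : 0 < ζ := hμ.trans hμζ
  have hξ : 1 < ξ := by nlinarith
  have hξ0 : 0 < ξ := by linarith
  have e1 := ra_I1 hμ hζ hξ0 h1
  have e2 := ra_I2 hμ hζ hξ0
  have e3 := ra_Mrho hμ hζ hξ0
  have e4 := ra_Mrhoth (μ := μ) (ζ := ζ) (ξ := ξ)
  have e5 := ra_I4 hμ hζ hξ0 hμζ.le (by linarith)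
  have p1 := raP1_pos hμ hζ hξ0
  set k := √(μ / ζ) with hk
  have k0 : 0 < k := by positivity
  have k2 : k ^ 2 = μ / ζ := Real.sq_sqrt (by positivity)
  have hk2 : μ = ζ * k ^ 2 := by rw [k2]; field_simp
  have k1 : k ≤ 1 := by
    rw [hk, Real.sqrt_le_left zero_le_one, one_pow, div_le_one hζ]; exact hμζ.le
  have e6 := ra_I5 hμ hξ0 hμζ (by linarith) k0 hk2
  have al := rb_alg hζ hζ1.le h1 k0 k1 hk2 p1 e5 e6
  unfold rbX rbG rbW rbY
  set P1 := raJ μ ζ ξ (raQ1 μ ζ ξ)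
  set P2 := raJ μ ζ ξ (raQ2 μ ζ ξ)
  set T := raJ μ ζ ξ (raTh μ)
  set M := raJ μ ζ ξ (fun _ => 1)
  set T2 := raJ μ ζ ξ (fun t => raTh μ t ^ 2)
  have P2p : 0 < P2 := lt_of_lt_of_le (by positivity) e5
  rw [e4, e3]
  have T2e : T2 = (T + μ * (2 * P2 + (ζ + ξ) * P1)) / 3 := by linarith
  have Me : M = 3 * T + ((2 - μ * (ζ + ξ)) * P1 + (ζ + ξ - 2 * μ) * P2) := by linarith
  have hX : 0 < (2 - μ * (ζ + ξ)) * P1 + (ζ + ξ - 2 * μ) * P2 := by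
    have a1 : 0 < 2 - μ * (ζ + ξ) := by nlinarith
    have a2 : 0 < ζ + ξ - 2 * μ := by linarith
    positivity
  refine ⟨by linarith, by positivity, ?_⟩
  rw [T2e, Me]
  nlinarith

lemma rb_quad {μ ζ ξ : ℝ} (hμ : 0 < μ) (hμζ : μ < ζ) (hζ1 : ζ < 1) (h1 : ζ * ξ = 1)
    (hlo : (ζ + ξ - 2) * rbG μ ζ ξ ≤ rbX μ ζ ξ) (hhi : rbX μ ζ ξ ≤ (ζ + ξ + 2) * rbG μ ζ ξ) :
    0 < rbY μ ζ ξ ∧ rbW μ ζ ξ ^ 2 < rbY μ ζ ξ *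
      (2 * (2 * (ζ + ξ) * rbG μ ζ ξ - rbX μ ζ ξ) / ((ζ + ξ - 2) * (ζ + ξ + 2)) - rbZ μ ζ ξ) := by
  obtain ⟨hX, hG, hY⟩ := rb_key hμ hμζ hζ1 h1
  have hζ : 0 < ζ := hμ.trans hμζ
  have hξ : 1 < ξ := by nlinarith
  have hξ0 : 0 < ξ := by linarith
  have hZ : rbZ μ ζ ξ ≤ 3 / 2 * (ζ + ξ + 2)⁻¹ * rbG μ ζ ξ := by
    have := ra_Mrho2 hμ hζ hξ0 h1
    unfold rbZ rbG; linarith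
  have hp : 0 < ζ + ξ - 2 := by nlinarith [sq_pos_of_pos (sub_pos.2 hζ1), sq_nonneg (ζ - ξ), sq_nonneg (ξ - 1), mul_pos (sub_pos.2 hζ1) (sub_pos.2 hξ)]
  generalize rbX μ ζ ξ = X at *
  generalize rbG μ ζ ξ = G at *
  generalize rbY μ ζ ξ = Y at *
  generalize rbW μ ζ ξ = W at *
  generalize rbZ μ ζ ξ = Z at *
  generalize hτ : ζ + ξ = τ at *
  have Y0 : 0 < Y := by
    by_contra hc
    push Not at hc
    have : Y * G ^ 2 ≤ 0 := mul_nonpos_of_nonpos_of_nonneg hc (sq_nonneg G)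
    have : 0 ≤ 2 * X * W ^ 2 := by positivity
    linarith
  refine ⟨Y0, ?_⟩
  have q0 : 0 < τ + 2 := by linarith
  have E1 : 2 * G ^ 2 / X ≤ 2 * (2 * τ * G - X) / ((τ - 2) * (τ + 2)) := by
    rw [div_le_div_iff₀ hX (by positivity)]
    nlinarith [mul_nonneg (sub_nonneg.2 hlo) (sub_nonneg.2 hhi)]
  have Z1 : Z ≤ 3 / 2 * (G ^ 2 / X) := by
    refine hZ.trans ?_
    have : (τ + 2)⁻¹ * G ≤ G ^ 2 / X := by
      rw [inv_mul_eq_div, div_le_div_iff₀ q0 hX]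
      nlinarith
    linarith
  have D : 1 / 2 * (G ^ 2 / X) ≤ 2 * (2 * τ * G - X) / ((τ - 2) * (τ + 2)) - Z := by
    have : 2 * G ^ 2 / X = 2 * (G ^ 2 / X) := by ring
    linarith
  refine lt_of_lt_of_le ?_ (mul_le_mul_of_nonneg_left D Y0.le)
  have : Y * (1 / 2 * (G ^ 2 / X)) = Y * G ^ 2 / (2 * X) := by field_simp
  rw [this, lt_div_iff₀ (by positivity)]
  linarith


lemma rc_sqrt {u : ℝ} (hu : |u| ≤ 1 / 2) :
    |(√(1 + u))⁻¹ - (1 - u / 2 + 3 / 8 * u ^ 2)| ≤ 3 * |u| ^ 3 := by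
  obtain ⟨h1, h2⟩ := abs_le.1 hu
  have hp : 0 < √(1 + u) := Real.sqrt_pos.2 (by linarith)
  have hs2 : √(1 + u) ^ 2 = 1 + u := Real.sq_sqrt (by linarith)
  set s := (√(1 + u))⁻¹ with hs
  have s0 : 0 < s := by positivity
  have s2 : s ^ 2 * (1 + u) = 1 := by
    rw [hs, inv_pow, hs2]; exact inv_mul_cancel₀ (by linarith)
  set P := 1 - u / 2 + 3 / 8 * u ^ 2 with hP
  have P0 : 3 / 4 ≤ P := by rw [hP]; nlinarith [sq_nonneg u]
  have key : (s - P) * ((1 + u) * (P + s)) = -(u ^ 3 * (5 / 8 - 15 / 64 * u + 9 / 64 * u ^ 2)) := by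
    have : (s - P) * ((1 + u) * (P + s)) = s ^ 2 * (1 + u) - P ^ 2 * (1 + u) := by ring
    rw [this, s2, hP]; ring
  have hD : 3 / 8 ≤ (1 + u) * (P + s) := by nlinarith
  have habs : |s - P| * ((1 + u) * (P + s)) = |u| ^ 3 * |5 / 8 - 15 / 64 * u + 9 / 64 * u ^ 2| := by
    rw [← abs_of_pos (show 0 < (1 + u) * (P + s) by linarith), ← abs_mul, key, abs_neg, abs_mul, abs_pow]
  have hn : |5 / 8 - 15 / 64 * u + 9 / 64 * u ^ 2| ≤ 1 := by
    rw [abs_le]; constructor <;> nlinarith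
  have h3 : 0 ≤ |u| ^ 3 := by positivity
  nlinarith [abs_nonneg (s - P), mul_le_mul_of_nonneg_left hn h3, mul_le_mul_of_nonneg_left hD (abs_nonneg (s - P))]

/-- second factor of the potential ratio -/
lemma rc_second {θ η : ℝ} (t0 : 0 ≤ θ) (t1 : θ ≤ 1) (hη : |η| ≤ 1 / 8) :
    |(√((1 - θ) / (1 + η) + θ * (1 + η) ^ 2))⁻¹ -
      (1 + (1 - 3 * θ) / 2 * η + (-(1 / 2) + 3 / 8 * (1 - 3 * θ) ^ 2) * η ^ 2)| ≤ 100 * |η| ^ 3 := by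
  obtain ⟨h1, h2⟩ := abs_le.1 hη
  set N := |η| with hN
  have N0 : 0 ≤ N := abs_nonneg η
  have q0 : 0 < 1 + η := by linarith
  set e := -(1 - θ) * η / (1 + η) with he
  have ea : |e| ≤ 2 * N := by
    rw [he, abs_div, abs_of_pos q0, div_le_iff₀ q0, abs_mul, abs_neg, abs_of_nonneg (by linarith)]
    nlinarith
  -- ε = (3θ-1)η + (1+e) η²
  set ε := (3 * θ - 1) * η + (1 + e) * η ^ 2 with hε
  have e1 : (1 - θ) / (1 + η) + θ * (1 + η) ^ 2 = 1 + ε := by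
    rw [hε, he]; field_simp; ring
  have ec : |e| ≤ 1 / 4 := by linarith
  have r1 : |(1 + e) * η ^ 2| ≤ 2 * N ^ 2 := by
    rw [abs_mul, abs_pow]
    have : |1 + e| ≤ 2 := by rw [abs_le]; obtain ⟨a, b⟩ := abs_le.1 ec; constructor <;> linarith
    nlinarith [sq_nonneg N]
  have r0 : |(3 * θ - 1) * η| ≤ 2 * N := by
    rw [abs_mul]
    have : |3 * θ - 1| ≤ 2 := by rw [abs_le]; constructor <;> linarith
    nlinarith
  have εa : |ε| ≤ 3 * N := by
    have := abs_add_le ((3 * θ - 1) * η) ((1 + e) * η ^ 2)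
    rw [← hε] at this
    nlinarith
  have ε2 : |ε| ≤ 1 / 2 := by linarith
  have hs := rc_sqrt ε2
  rw [e1]
  have ε3 : |ε| ^ 3 ≤ 27 * N ^ 3 := by
    calc |ε| ^ 3 ≤ (3 * N) ^ 3 := by gcongr
      _ = _ := by ring
  -- remainder between polynomials
  have rem : (1 - ε / 2 + 3 / 8 * ε ^ 2) -
      (1 + (1 - 3 * θ) / 2 * η + (-(1 / 2) + 3 / 8 * (1 - 3 * θ) ^ 2) * η ^ 2)
      = - (e / 2) * η ^ 2 + 3 / 8 * (2 * ((3 * θ - 1) * η) * ((1 + e) * η ^ 2) + ((1 + e) * η ^ 2) * ((1 + e) * η ^ 2)) := by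
    rw [hε]; ring
  have b1 : |-(e / 2) * η ^ 2| ≤ N ^ 3 := by
    rw [abs_mul, abs_neg, abs_div, abs_pow, abs_of_pos (show (0:ℝ) < 2 by norm_num)]
    calc |e| / 2 * N ^ 2 ≤ (2 * N) / 2 * N ^ 2 := by gcongr
      _ = _ := by ring
  have b2 : |2 * ((3 * θ - 1) * η) * ((1 + e) * η ^ 2)| ≤ 8 * N ^ 3 := by
    rw [abs_mul, abs_mul, abs_of_pos (show (0:ℝ) < 2 by norm_num)]
    calc 2 * |(3 * θ - 1) * η| * |(1 + e) * η ^ 2| ≤ 2 * (2 * N) * (2 * N ^ 2) := by gcongr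
      _ = _ := by ring
  have b3 : |((1 + e) * η ^ 2) * ((1 + e) * η ^ 2)| ≤ 4 * N ^ 3 := by
    rw [abs_mul]
    calc |(1 + e) * η ^ 2| * |(1 + e) * η ^ 2| ≤ (2 * N ^ 2) * (2 * N ^ 2) := by gcongr
      _ = 4 * N ^ 3 * N := by ring
      _ ≤ 4 * N ^ 3 * 1 := by gcongr; linarith
      _ = _ := by ring
  have n3 : 0 ≤ N ^ 3 := by positivity
  have tot := abs_sub_le ((√(1 + ε))⁻¹) (1 - ε / 2 + 3 / 8 * ε ^ 2)
    (1 + (1 - 3 * θ) / 2 * η + (-(1 / 2) + 3 / 8 * (1 - 3 * θ) ^ 2) * η ^ 2)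
  rw [rem] at tot
  have t1 := abs_add_le (-(e / 2) * η ^ 2) (3 / 8 * (2 * ((3 * θ - 1) * η) * ((1 + e) * η ^ 2) + ((1 + e) * η ^ 2) * ((1 + e) * η ^ 2)))
  rw [abs_mul (3/8 : ℝ), abs_of_pos (show (0:ℝ) < 3/8 by norm_num)] at t1
  have t2 := abs_add_le (2 * ((3 * θ - 1) * η) * ((1 + e) * η ^ 2)) (((1 + e) * η ^ 2) * ((1 + e) * η ^ 2))
  linarith

/-- second order Taylor polynomial of the ratio -/
noncomputable def rcT (ρ θ δ η : ℝ) : ℝ :=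
  1 - 1 / 2 * ρ * δ + (1 - 3 * θ) / 2 * η + 3 / 8 * ρ ^ 2 * δ ^ 2 - 1 / 4 * ρ * (1 - 3 * θ) * δ * η
    + (-(1 / 2) + 3 / 8 * (1 - 3 * θ) ^ 2) * η ^ 2

/-- the ratio of the integrands -/
noncomputable def rcR (ρ θ δ η : ℝ) : ℝ :=
  (√((1 + δ * ρ) * ((1 - θ) / (1 + η) + θ * (1 + η) ^ 2)))⁻¹

set_option maxHeartbeats 2000000 in
lemma rc_taylor {ρ θ δ η : ℝ} (r0 : 0 ≤ ρ) (r1 : ρ ≤ 1) (t0 : 0 ≤ θ) (t1 : θ ≤ 1)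
    (hδ : |δ| ≤ 1 / 8) (hη : |η| ≤ 1 / 8) :
    |rcR ρ θ δ η - rcT ρ θ δ η| ≤ 1000 * (|δ| + |η|) ^ 3 := by
  set N := |δ| + |η| with hN
  have d0 := abs_nonneg δ
  have e0 := abs_nonneg η
  have N0 : 0 ≤ N := by positivity
  have N1 : N ≤ 1 / 4 := by linarith
  have eN : |η| ≤ N := by linarith
  have uN : |δ * ρ| ≤ N := by
    rw [abs_mul, abs_of_nonneg r0]; nlinarith
  obtain ⟨u1, u2⟩ := abs_le.1 uN
  set u := δ * ρ with hu
  have A := rc_sqrt (u := u) (by linarith)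
  have B := rc_second t0 t1 hη
  set a := (√(1 + u))⁻¹
  set b := (√((1 - θ) / (1 + η) + θ * (1 + η) ^ 2))⁻¹
  have hab : rcR ρ θ δ η = a * b := by
    unfold rcR
    rw [Real.sqrt_mul (by linarith), mul_inv]
  set α := (1 - 3 * θ) / 2 with hα
  set β := -(1 / 2) + 3 / 8 * (1 - 3 * θ) ^ 2 with hβ
  have αa : |α| ≤ 1 := by rw [abs_le]; constructor <;> linarith
  have βa : |β| ≤ 1 := by rw [abs_le]; constructor <;> nlinarith
  set a1 := 1 - u / 2 + 3 / 8 * u ^ 2 with ha1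
  set b1 := 1 + α * η + β * η ^ 2 with hb1
  have A' : |a - a1| ≤ 3 * N ^ 3 := A.trans (by gcongr)
  have B' : |b - b1| ≤ 100 * N ^ 3 := B.trans (by gcongr)
  have hT : a1 * b1 - rcT ρ θ δ η = -(u / 2) * (β * η ^ 2) + 3 / 8 * u ^ 2 * (α * η + β * η ^ 2) := by
    rw [ha1, hb1]; unfold rcT; rw [hu, hα, hβ]; ring
  have x1 : |α * η| ≤ N := by
    rw [abs_mul]
    calc |α| * |η| ≤ 1 * N := by gcongr
      _ = N := one_mul N
  have x2 : |β * η ^ 2| ≤ N ^ 2 := by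
    rw [abs_mul, abs_pow]
    calc |β| * |η| ^ 2 ≤ 1 * N ^ 2 := by gcongr
      _ = _ := by ring
  have x2' : |β * η ^ 2| ≤ N := x2.trans (by
    have := mul_le_mul_of_nonneg_left N1 N0
    rw [sq]; linarith)
  have x3 : |α * η + β * η ^ 2| ≤ 2 * N := (abs_add_le _ _).trans (by linarith)
  have n3 : 0 ≤ N ^ 3 := by positivity
  have y1 : |-(u / 2) * (β * η ^ 2)| ≤ N ^ 3 := by
    rw [abs_mul, abs_neg, abs_div, abs_of_pos (show (0:ℝ) < 2 by norm_num)]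
    calc |u| / 2 * |β * η ^ 2| ≤ N / 2 * N ^ 2 := by gcongr
      _ = N ^ 3 / 2 := by ring
      _ ≤ _ := by linarith
  have y2 : |3 / 8 * u ^ 2 * (α * η + β * η ^ 2)| ≤ N ^ 3 := by
    rw [abs_mul, abs_mul, abs_pow, abs_of_pos (show (0:ℝ) < 3 / 8 by norm_num)]
    calc 3 / 8 * |u| ^ 2 * |α * η + β * η ^ 2| ≤ 3 / 8 * N ^ 2 * (2 * N) := by gcongr
      _ = 3 / 4 * N ^ 3 := by ring
      _ ≤ _ := by linarith
  have y3 : |a1 * b1 - rcT ρ θ δ η| ≤ 2 * N ^ 3 := by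
    rw [hT]; exact (abs_add_le _ _).trans (by linarith)
  have b1a : |b1| ≤ 2 := by
    have : |b1| ≤ |(1:ℝ)| + |α * η + β * η ^ 2| := by
      rw [hb1, add_assoc]; exact abs_add_le _ _
    rw [abs_one] at this; linarith
  have aa : |a| ≤ 3 := by
    have h := abs_add_le (a - a1) a1
    rw [sub_add_cancel] at h
    have : |a1| ≤ 2 := by 
      have h4 : u ^ 2 ≤ 1 := by
        rw [sq_le_one_iff_abs_le_one]; linarith
      rw [ha1, abs_le]; constructor <;> linarith [sq_nonneg u]
    have : N ^ 3 ≤ 1 := pow_le_one₀ N0 (by linarith)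
    have : 3 * N ^ 3 ≤ 1 := by
      have : N ^ 3 ≤ (1/4) ^ 3 := by gcongr
      linarith
    linarith
  have split : rcR ρ θ δ η - rcT ρ θ δ η = a * (b - b1) + (a - a1) * b1 + (a1 * b1 - rcT ρ θ δ η) := by
    rw [hab]; ring
  rw [split]
  have z1 : |a * (b - b1)| ≤ 3 * (100 * N ^ 3) := by rw [abs_mul]; gcongr
  have z2 : |(a - a1) * b1| ≤ 3 * N ^ 3 * 2 := by rw [abs_mul]; gcongr
  refine (abs_add_le _ _).trans ?_
  have := abs_add_le (a * (b - b1)) ((a - a1) * b1)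
  linarith


lemma raTh_mem {μ t : ℝ} (hμ : 0 < μ) (ht : 0 < t) : 0 ≤ raTh μ t ∧ raTh μ t ≤ 1 := by
  unfold raTh
  refine ⟨by positivity, ?_⟩
  rw [← div_eq_mul_inv, div_le_one (by positivity)]; linarith

lemma raRh_le_one {ζ ξ t : ℝ} (hζ : 0 < ζ) (hξ : 0 < ξ) (h1 : ζ * ξ = 1) (ht : 0 < t) :
    raRh ζ ξ t ≤ 1 := by
  refine (ra_rho_le hζ hξ h1 ht).2.trans ?_
  apply inv_le_one_of_one_le₀; linarith

lemma rcT_good {μ ζ ξ : ℝ} (hμ : 0 < μ) (hζ : 0 < ζ) (hξ : 0 < ξ) (δ η : ℝ) :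
    raGood (fun t => rcT (raRh ζ ξ t) (raTh μ t) δ η) ∧
    raJ μ ζ ξ (fun t => rcT (raRh ζ ξ t) (raTh μ t) δ η) =
      raJ μ ζ ξ (fun _ => 1) - rbG μ ζ ξ * δ + rbX μ ζ ξ * η + 1 / 2 * rbZ μ ζ ξ * δ ^ 2
      - (rbG μ ζ ξ - rbW μ ζ ξ) * δ * η - 1 / 2 * rbY μ ζ ξ * η ^ 2 := by
  have g1 := raGood_Rh hζ hξ
  have g2 := raGood_Th hμ
  have g11 : raGood (fun t => raRh ζ ξ t ^ 2) := (g1.mul g1).congr fun t _ => by ring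
  have g12 : raGood (fun t => raRh ζ ξ t * raTh μ t) := g1.mul g2
  have g22 : raGood (fun t => raTh μ t ^ 2) := (g2.mul g2).congr fun t _ => by ring
  have g0 := raGood_one
  set F := fun t => (1 + η / 2 - η ^ 2 / 8) * 1 + (-δ / 2 - δ * η / 4) * raRh ζ ξ t
      + (-(3/2) * η - 9 / 4 * η ^ 2) * raTh μ t + (3 / 8 * δ ^ 2) * raRh ζ ξ t ^ 2 with hF
  have gF : raGood F := ((((raGood.const _).mul g0).add ((raGood.const _).mul g1)).add
    ((raGood.const _).mul g2)).add ((raGood.const _).mul g11)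
  have eF := raJ_lin hμ hζ hξ (f := F) _ _ _ _ g0 g1 g2 g11 (fun t _ => rfl)
  have he : ∀ t, 0 < t → rcT (raRh ζ ξ t) (raTh μ t) δ η = 1 * F t + (3 / 4 * δ * η) * (raRh ζ ξ t * raTh μ t)
     + (27 / 8 * η ^ 2) * raTh μ t ^ 2 + 0 * 1 := fun t _ => by
    simp only [hF]; unfold rcT; ring
  refine ⟨(((((raGood.const _).mul gF).add ((raGood.const _).mul g12)).add
    ((raGood.const _).mul g22)).add ((raGood.const _).mul g0)).congr he, ?_⟩
  rw [raJ_lin hμ hζ hξ _ _ _ _ gF g12 g22 g0 he, eF]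
  unfold rbG rbX rbY rbZ rbW
  ring

lemma rcR_good {μ ζ ξ : ℝ} (hμ : 0 < μ) (hζ : 0 < ζ) (hξ : 0 < ξ) (h1 : ζ * ξ = 1) {δ η : ℝ}
    (hδ : |δ| ≤ 1 / 8) (hη : |η| ≤ 1 / 8) :
    raGood (fun t => rcR (raRh ζ ξ t) (raTh μ t) δ η) := by
  obtain ⟨d1, d2⟩ := abs_le.1 hδ
  obtain ⟨e1, e2⟩ := abs_le.1 hη
  refine ⟨?_, ?_⟩
  · unfold rcR
    have c1 := (raGood_Rh hζ hξ).1
    have c2 := (raGood_Th hμ).1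
    apply ContinuousOn.inv₀
    · apply ContinuousOn.sqrt
      fun_prop
    · intro t ht
      have r0 := (ra_rho_le hζ hξ h1 ht).1
      have r1 := raRh_le_one hζ hξ h1 ht
      have t0 := raTh_mem hμ ht
      have q0 : 0 < 1 + η := by linarith
      apply (Real.sqrt_pos.2 _).ne'
      apply mul_pos
      · nlinarith
      · rcases eq_or_lt_of_le t0.1 with h | h
        · rw [← h]; simp; exact q0
        · have : 0 ≤ (1 - raTh μ t) / (1 + η) := div_nonneg (by linarith [t0.2]) q0.le
          have : 0 < raTh μ t * (1 + η) ^ 2 := by positivity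
          linarith
  · obtain ⟨C, hC⟩ := (rcT_good hμ hζ hξ δ η).1.2
    refine ⟨1000 * (|δ| + |η|) ^ 3 + C, fun t ht => ?_⟩
    have r0 := (ra_rho_le hζ hξ h1 ht).1
    have r1 := raRh_le_one hζ hξ h1 ht
    have t0 := raTh_mem hμ ht
    have h := rc_taylor r0 r1 t0.1 t0.2 hδ hη
    have h2 := hC t ht
    have h3 := abs_add_le (rcR (raRh ζ ξ t) (raTh μ t) δ η - rcT (raRh ζ ξ t) (raTh μ t) δ η) (rcT (raRh ζ ξ t) (raTh μ t) δ η)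
    rw [sub_add_cancel] at h3
    linarith

lemma rd_taylor {μ ζ ξ : ℝ} (hμ : 0 < μ) (hζ : 0 < ζ) (hξ : 0 < ξ) (h1 : ζ * ξ = 1) {δ η : ℝ}
    (hδ : |δ| ≤ 1 / 8) (hη : |η| ≤ 1 / 8) :
    |raJ μ ζ ξ (fun t => rcR (raRh ζ ξ t) (raTh μ t) δ η) -
      (raJ μ ζ ξ (fun _ => 1) - rbG μ ζ ξ * δ + rbX μ ζ ξ * η + 1 / 2 * rbZ μ ζ ξ * δ ^ 2
      - (rbG μ ζ ξ - rbW μ ζ ξ) * δ * η - 1 / 2 * rbY μ ζ ξ * η ^ 2)|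
      ≤ 1000 * raJ μ ζ ξ (fun _ => 1) * (|δ| + |η|) ^ 3 := by
  obtain ⟨gT, eT⟩ := rcT_good hμ hζ hξ δ η
  have gR := rcR_good hμ hζ hξ h1 hδ hη
  rw [← eT]
  have lo : raJ μ ζ ξ (fun t => rcR (raRh ζ ξ t) (raTh μ t) δ η) ≤
      raJ μ ζ ξ (fun t => rcT (raRh ζ ξ t) (raTh μ t) δ η + (1000 * (|δ| + |η|) ^ 3) * 1) :=
    raJ_mono hμ hζ hξ gR (gT.add ((raGood.const _).mul raGood_one)) fun t ht => by
      have r0 := (ra_rho_le hζ hξ h1 ht).1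
      have r1 := raRh_le_one hζ hξ h1 ht
      have t0 := raTh_mem hμ ht
      have h := (abs_le.1 (rc_taylor r0 r1 t0.1 t0.2 hδ hη)).2
      linarith
  have hi : raJ μ ζ ξ (fun t => rcT (raRh ζ ξ t) (raTh μ t) δ η) ≤
      raJ μ ζ ξ (fun t => rcR (raRh ζ ξ t) (raTh μ t) δ η + (1000 * (|δ| + |η|) ^ 3) * 1) :=
    raJ_mono hμ hζ hξ gT (gR.add ((raGood.const _).mul raGood_one)) fun t ht => by
      have r0 := (ra_rho_le hζ hξ h1 ht).1
      have r1 := raRh_le_one hζ hξ h1 ht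
      have t0 := raTh_mem hμ ht
      have h := (abs_le.1 (rc_taylor r0 r1 t0.1 t0.2 hδ hη)).1
      linarith
  rw [raJ_add hμ hζ hξ gT ((raGood.const _).mul raGood_one), raJ_smul] at lo
  rw [raJ_add hμ hζ hξ gR ((raGood.const _).mul raGood_one), raJ_smul] at hi
  rw [abs_le]
  constructor <;> linarith

/-- The potential integral. -/
noncomputable def rdV (b1 b2 : ℝ) : ℝ := ∫ s in Set.Ioi (0:ℝ),
        ((s + b1 ^ 2) * (s + b2 ^ 2) * (s + ((b1 * b2)⁻¹) ^ 2)) ^ (-(1:ℝ)/2)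

lemma rd_rpow (x : ℝ) (hx : 0 < x) : x ^ (-(1:ℝ)/2) = (√x)⁻¹ := by
  rw [Real.sqrt_eq_rpow, ← Real.rpow_neg hx.le]; norm_num

lemma rd_V {x0 y0 x y : ℝ} (hx0 : 0 < x0) (hy0 : 0 < y0) (hx : 0 < x) (hy : 0 < y) :
    rdV x y = √((x0 * y0)⁻¹) * raJ (((x0 * y0)⁻¹) ^ 3) (y0 / x0) (x0 / y0)
      (fun t => rcR (raRh (y0 / x0) (x0 / y0) t) (raTh (((x0 * y0)⁻¹) ^ 3) t)
        (y / x + x / y - (y0 / x0 + x0 / y0)) ((x * y)⁻¹ / (x0 * y0)⁻¹ - 1)) := by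
  have w0 : 0 < x * y := by positivity
  have h := integral_comp_mul_left_Ioi (fun s => ((s + x ^ 2) * (s + y ^ 2) * (s + ((x * y)⁻¹) ^ 2)) ^ (-(1:ℝ)/2)) 0 w0
  rw [mul_zero, smul_eq_mul] at h
  have h2 : rdV x y = (x * y) * ∫ t in Set.Ioi (0:ℝ), ((x * y * t + x ^ 2) * (x * y * t + y ^ 2) * (x * y * t + ((x * y)⁻¹) ^ 2)) ^ (-(1:ℝ)/2) := by
    rw [h, rdV, ← mul_assoc, mul_inv_cancel₀ w0.ne', one_mul]
  rw [h2, raJ, ← integral_const_mul, ← integral_const_mul]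
  refine setIntegral_congr_fun measurableSet_Ioi fun t ht => ?_
  have ht' : 0 < t := ht
  rw [rd_rpow _ (by positivity)]
  unfold raPh rcR
  have hw : x * y = √((x * y) ^ 2) := (Real.sqrt_sq w0.le).symm
  have hD := raDl_pos (μ := ((x0 * y0)⁻¹) ^ 3) (ζ := y0 / x0) (ξ := x0 / y0) (by positivity) (by positivity) (by positivity) ht'.le
  rw [← mul_assoc, ← Real.sqrt_inv, ← Real.sqrt_inv, ← Real.sqrt_inv]
  nth_rewrite 1 [hw]
  rw [← Real.sqrt_mul (by positivity), ← Real.sqrt_mul (by positivity), ← Real.sqrt_mul (by positivity)]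
  congr 1
  have e1 : 1 + (y / x + x / y - (y0 / x0 + x0 / y0)) * raRh (y0 / x0) (x0 / y0) t
      = (t + y / x) * (t + x / y) * (t + y0 / x0)⁻¹ * (t + x0 / y0)⁻¹ := by
    unfold raRh
    have a1 : t + y0 / x0 ≠ 0 := by positivity
    have a2 : t + x0 / y0 ≠ 0 := by positivity
    have b1 : y0 / x0 * (x0 / y0) = 1 := by field_simp
    have b2 : y / x * (x / y) = 1 := by field_simp
    generalize y0 / x0 = A at *
    generalize x0 / y0 = B at *
    generalize y / x = A' at *
    generalize x / y = B' at *
    field_simp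
    linear_combination b1 - b2
  have e2 : (1 - raTh (((x0 * y0)⁻¹) ^ 3) t) / (1 + ((x * y)⁻¹ / (x0 * y0)⁻¹ - 1)) +
       raTh (((x0 * y0)⁻¹) ^ 3) t * (1 + ((x * y)⁻¹ / (x0 * y0)⁻¹ - 1)) ^ 2
      = (t * (x * y) + ((x * y)⁻¹) ^ 2) * (x0 * y0)⁻¹ * (t + ((x0 * y0)⁻¹) ^ 3)⁻¹ := by
    unfold raTh
    have w00 : 0 < x0 * y0 := by positivity
    generalize x0 * y0 = W at *
    generalize x * y = w at *
    have a1 : t + W⁻¹ ^ 3 ≠ 0 := by positivity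
    have e : 1 - W⁻¹ ^ 3 * (t + W⁻¹ ^ 3)⁻¹ = t * (t + W⁻¹ ^ 3)⁻¹ := by
      field_simp
      ring
    rw [e, add_sub_cancel]
    generalize (t + W⁻¹ ^ 3)⁻¹ = K
    field_simp
  rw [e1, e2]
  unfold raDl
  have w00 : 0 < x0 * y0 := by positivity
  have a0 : t + ((x0 * y0)⁻¹) ^ 3 ≠ 0 := by positivity
  have a1 : t + y0 / x0 ≠ 0 := by positivity
  have a2 : t + x0 / y0 ≠ 0 := by positivity
  have a3 : t + y / x ≠ 0 := by positivity
  have a4 : t + x / y ≠ 0 := by positivity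
  have a5 : t * (x * y) + ((x * y)⁻¹) ^ 2 ≠ 0 := by positivity
  have f1 : x * y * t + x ^ 2 = x * y * (t + x / y) := by field_simp
  have f2 : x * y * t + y ^ 2 = x * y * (t + y / x) := by field_simp
  have f3 : x * y * t + ((x * y)⁻¹) ^ 2 = t * (x * y) + ((x * y)⁻¹) ^ 2 := by ring
  rw [f1, f2, f3]
  generalize t + x / y = q1 at *
  generalize t + y / x = q2 at *
  generalize t * (x * y) + ((x * y)⁻¹) ^ 2 = q3 at *
  generalize t + y0 / x0 = q4 at *
  generalize t + x0 / y0 = q5 at *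
  generalize t + ((x0 * y0)⁻¹) ^ 3 = q6 at *
  field_simp


lemma re_quad {S W Y δ η : ℝ} (Y0 : 0 < Y) (h : W ^ 2 < Y * S) :
    (Y * S - W ^ 2) / (4 * (S + Y)) * (|δ| + |η|) ^ 2 ≤ 1 / 2 * S * δ ^ 2 - W * δ * η + 1 / 2 * Y * η ^ 2 := by
  have S0 : 0 < S := by
    by_contra hc
    push Not at hc
    nlinarith [sq_nonneg W]
  set κ := (Y * S - W ^ 2) / (2 * (S + Y)) with hκ
  have κ0 : 0 ≤ κ := by rw [hκ]; apply div_nonneg <;> linarith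
  have hk : κ * (2 * (S + Y)) = Y * S - W ^ 2 := by rw [hκ]; field_simp
  have e : (Y * S - W ^ 2) / (4 * (S + Y)) = κ / 2 := by rw [hκ]; field_simp; ring
  rw [e]
  have h1 : (|δ| + |η|) ^ 2 ≤ 2 * (δ ^ 2 + η ^ 2) := by
    rw [← sq_abs δ, ← sq_abs η]; nlinarith [sq_nonneg (|δ| - |η|)]
  have h2 : κ * (δ ^ 2 + η ^ 2) ≤ 1 / 2 * S * δ ^ 2 - W * δ * η + 1 / 2 * Y * η ^ 2 := by
    have Yk : 0 < Y - 2 * κ := by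
      have : κ * (2 * (S + Y)) ≤ Y * S := by nlinarith [sq_nonneg W]
      by_contra hc
      push Not at hc
      nlinarith
    have : 0 ≤ (Y - 2 * κ) * (1 / 2 * S * δ ^ 2 - W * δ * η + 1 / 2 * Y * η ^ 2 - κ * (δ ^ 2 + η ^ 2)) := by
      have : (Y - 2 * κ) * (1 / 2 * S * δ ^ 2 - W * δ * η + 1 / 2 * Y * η ^ 2 - κ * (δ ^ 2 + η ^ 2))
        = 1 / 2 * ((Y - 2 * κ) * η - W * δ) ^ 2 + 2 * κ ^ 2 * δ ^ 2 := by
        linear_combination (-(δ ^ 2)/2) * hk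
      rw [this]; positivity
    have := nonneg_of_mul_nonneg_right this Yk
    linarith
  nlinarith

lemma re_d1 {a p δ : ℝ} (hp : 0 < p) (ha : 0 ≤ a) (hδ : -(p / 2) < δ) :
    a / (p * (p + δ)) ≤ 2 * a / p ^ 2 := by
  have p1 : 0 < p + δ := by linarith
  rw [div_le_div_iff₀ (by positivity) (by positivity)]
  have : p ^ 2 ≤ 2 * (p * (p + δ)) := by nlinarith
  have := mul_le_mul_of_nonneg_left this ha
  linarith

set_option maxHeartbeats 1000000 in
lemma re_min {p q a b X G W Y Z M C : ℝ} (hp : 0 < p) (hq : 0 < q) (ha : 0 ≤ a) (hb : 0 ≤ b)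
    (h1 : p * a + q * b = 4 * X) (h2 : a + b = 4 * G) (Y0 : 0 < Y)
    (h3 : W ^ 2 < Y * ((a / p + b / q) / 2 - Z)) (C0 : 0 ≤ C) (J : ℝ → ℝ → ℝ)
    (hJ : ∀ δ η, |δ| ≤ 1 / 8 → |η| ≤ 1 / 8 → |J δ η - (M - G * δ + X * η + 1 / 2 * Z * δ ^ 2
      - (G - W) * δ * η - 1 / 2 * Y * η ^ 2)| ≤ C * (|δ| + |η|) ^ 3) :
    ∃ r > 0, ∀ δ η, |δ| < r → |η| < r → (δ ≠ 0 ∨ η ≠ 0) →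
      (p * a + q * b) / 4 - M < (1 + η) * (p ^ 2 * a / (p + δ) + q ^ 2 * b / (q + δ)) / 4 - J δ η := by
  set E := (a / p + b / q) / 2 with hE
  have E0 : 0 ≤ E := by positivity
  set D := 2 * a / p ^ 2 + 2 * b / q ^ 2 with hD
  have D0 : 0 ≤ D := by positivity
  set κ := (Y * (E - Z) - W ^ 2) / (4 * ((E - Z) + Y)) with hκ
  have S0 : 0 < E - Z := by
    by_contra hc
    push Not at hc
    nlinarith [sq_nonneg W]
  have κ0 : 0 < κ := by rw [hκ]; apply div_pos <;> linarith
  set K := E + D + C + 1 with hK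
  have K0 : 0 < K := by positivity
  refine ⟨min (1/8) (min (p/2) (min (q/2) (κ / (2 * K)))), by positivity, fun δ η hδ hη hne => ?_⟩
  simp only [lt_min_iff] at hδ hη
  obtain ⟨d1, d2, d3, d4⟩ := hδ
  obtain ⟨e1, e2, e3, e4⟩ := hη
  have quad := re_quad (δ := δ) (η := η) Y0 h3
  rw [← hκ] at quad
  have hj := (abs_le.1 (hJ δ η d1.le e1.le)).2
  have ηa := abs_lt.1 e1
  have δp := abs_lt.1 d2
  have δq := abs_lt.1 d3
  have p1 : 0 < p + δ := by linarith
  have q1 : 0 < q + δ := by linarith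
  set N := |δ| + |η| with hN
  have dN : |δ| ≤ N := by linarith [abs_nonneg η]
  have eN : |η| ≤ N := by linarith [abs_nonneg δ]
  have Npos : 0 < N := by
    rcases hne with h | h
    · exact lt_of_lt_of_le (abs_pos.2 h) dN
    · exact lt_of_lt_of_le (abs_pos.2 h) eN
  set D1 := a / (p * (p + δ)) + b / (q * (q + δ)) with hD1
  have D10 : 0 ≤ D1 := by positivity
  have D1D : D1 ≤ D := by
    have u1 := re_d1 hp ha (show -(p/2) < δ by linarith)
    have u2 := re_d1 hq hb (show -(q/2) < δ by linarith)
    linarith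
  have ex : (p ^ 2 * a / (p + δ) + q ^ 2 * b / (q + δ)) / 4 = X - G * δ + 1 / 2 * E * δ ^ 2 - D1 * δ ^ 3 / 4 := by
    have x1 : p ^ 2 * a / (p + δ) = p * a - a * δ + a / p * δ ^ 2 - a / (p * (p + δ)) * δ ^ 3 := by
      field_simp; ring
    have x2 : q ^ 2 * b / (q + δ) = q * b - b * δ + b / q * δ ^ 2 - b / (q * (q + δ)) * δ ^ 3 := by
      field_simp; ring
    rw [x1, x2, hE, hD1]
    linear_combination h1 / 4 - δ * h2 / 4
  have N3 : 0 < N ^ 3 := by positivity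
  have r1 : |1 / 2 * E * η * δ ^ 2| ≤ E * N ^ 3 := by
    rw [abs_mul, abs_mul, abs_of_nonneg (by positivity), abs_pow]
    calc 1 / 2 * E * |η| * |δ| ^ 2 ≤ 1 / 2 * E * N * N ^ 2 := by gcongr
      _ = 1 / 2 * (E * N ^ 3) := by ring
      _ ≤ E * N ^ 3 := by linarith [mul_nonneg E0 N3.le]
  have r2 : |(1 + η) * (D1 * δ ^ 3 / 4)| ≤ D * N ^ 3 := by
    rw [abs_mul, abs_div, abs_mul, abs_pow, abs_of_nonneg D10, abs_of_pos (show (0:ℝ) < 4 by norm_num)]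
    have : |1 + η| ≤ 2 := by rw [abs_le]; constructor <;> linarith
    calc |1 + η| * (D1 * |δ| ^ 3 / 4) ≤ 2 * (D * N ^ 3 / 4) := by gcongr
      _ ≤ D * N ^ 3 := by linarith [mul_nonneg D0 N3.le]
  have r1' := (abs_le.1 r1).1
  have r2' := (abs_le.1 r2).2
  have Nk : K * N < κ := by
    have : N < κ / K := by
      have : κ / K = κ / (2 * K) + κ / (2 * K) := by field_simp; ring
      linarith
    rw [lt_div_iff₀ K0] at this
    linarith
  have fin : K * N ^ 3 < κ * N ^ 2 := by
    have := mul_lt_mul_of_pos_right Nk (show 0 < N ^ 2 by positivity)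
    calc K * N ^ 3 = K * N * N ^ 2 := by ring
      _ < _ := this
  have fin2 : K * N ^ 3 = E * N ^ 3 + D * N ^ 3 + C * N ^ 3 + N ^ 3 := by rw [hK]; ring
  have ex2 : (1 + η) * (p ^ 2 * a / (p + δ) + q ^ 2 * b / (q + δ)) / 4 =
      (1 + η) * (X - G * δ + 1 / 2 * E * δ ^ 2) - (1 + η) * (D1 * δ ^ 3 / 4) := by
    rw [mul_div_assoc, ex]; ring
  rw [ex2, h1]
  linarith


lemma rf_rpow (x : ℝ) (hx : 0 < x) : x ^ (-(3:ℝ)/2) = (√x)⁻¹ * x⁻¹ := by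
  rw [← rd_rpow x hx, ← Real.rpow_neg_one x, ← Real.rpow_add hx]; norm_num

/-- scaling of the cubic -/
lemma rf_scale {x y t : ℝ} (hx : 0 < x) (hy : 0 < y) (ht : 0 < t) :
    (x * y * t + x ^ 2) * (x * y * t + ((x * y)⁻¹) ^ 2) * (x * y * t + y ^ 2) =
      (x * y) ^ 3 * raDl (((x * y)⁻¹) ^ 3) (y / x) (x / y) t := by
  unfold raDl; field_simp

lemma rf_pow {x y t : ℝ} (hx : 0 < x) (hy : 0 < y) (ht : 0 < t) :
    ((x * y * t + x ^ 2) * (x * y * t + ((x * y)⁻¹) ^ 2) * (x * y * t + y ^ 2)) ^ (-(3:ℝ)/2) =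
      ((x * y)⁻¹) ^ 4 * √((x * y)⁻¹) * raPh (((x * y)⁻¹) ^ 3) (y / x) (x / y) t *
        (raDl (((x * y)⁻¹) ^ 3) (y / x) (x / y) t)⁻¹ := by
  have w0 : 0 < x * y := by positivity
  have hD := raDl_pos (μ := ((x * y)⁻¹) ^ 3) (ζ := y / x) (ξ := x / y) (by positivity) (by positivity) (by positivity) ht.le
  rw [rf_scale hx hy ht, rf_rpow _ (by positivity)]
  unfold raPh
  generalize x * y = w at *
  generalize raDl (w⁻¹ ^ 3) (y / x) (x / y) t = D at *
  have e : √(w ^ 3 * D) = w * √w * √D := by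
    rw [Real.sqrt_mul (by positivity), pow_succ, Real.sqrt_mul (by positivity), Real.sqrt_sq w0.le]
  rw [e, Real.sqrt_inv]
  have : √w ≠ 0 := by positivity
  have : √D ≠ 0 := by positivity
  field_simp

lemma rf_C1 (g : ℝ) {x y : ℝ} (hx : 0 < x) (hy : 0 < y) :
    riC1 g x ((x * y)⁻¹) y = 2 * π * g * √((x * y)⁻¹) * ((x * y)⁻¹) ^ 2 *
      raJ (((x * y)⁻¹) ^ 3) (y / x) (x / y) (raQ1 (((x * y)⁻¹) ^ 3) (y / x) (x / y)) := by
  have w0 : 0 < x * y := by positivity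
  have h := integral_comp_mul_left_Ioi (fun s => s * ((s + x ^ 2) * (s + ((x * y)⁻¹) ^ 2) * (s + y ^ 2)) ^ (-(3:ℝ)/2)) 0 w0
  rw [mul_zero, smul_eq_mul] at h
  have h2 : riC1 g x ((x * y)⁻¹) y = 2 * π * g * ((x * y) * ∫ t in Set.Ioi (0:ℝ), x * y * t * ((x * y * t + x ^ 2) * (x * y * t + ((x * y)⁻¹) ^ 2) * (x * y * t + y ^ 2)) ^ (-(3:ℝ)/2)) := by
    rw [h, riC1, ← mul_assoc (x * y), mul_inv_cancel₀ w0.ne', one_mul]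
  rw [h2, mul_assoc (2 * π * g), mul_assoc (2 * π * g)]
  congr 1
  rw [raJ, ← integral_const_mul, ← integral_const_mul]
  refine setIntegral_congr_fun measurableSet_Ioi fun t ht => ?_
  have ht' : 0 < t := ht
  rw [rf_pow hx hy ht']
  unfold raQ1 raDl
  generalize raPh _ _ _ _ = P
  generalize √((x * y)⁻¹) = r
  rw [mul_inv, mul_inv]
  field_simp

lemma rf_C2 (g : ℝ) {x y : ℝ} (hx : 0 < x) (hy : 0 < y) :
    riC2 g x ((x * y)⁻¹) y = 2 * π * g * √((x * y)⁻¹) * ((x * y)⁻¹) *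
      raJ (((x * y)⁻¹) ^ 3) (y / x) (x / y) (raQ2 (((x * y)⁻¹) ^ 3) (y / x) (x / y)) := by
  have w0 : 0 < x * y := by positivity
  have h := integral_comp_mul_left_Ioi (fun s => s ^ 2 * ((s + x ^ 2) * (s + ((x * y)⁻¹) ^ 2) * (s + y ^ 2)) ^ (-(3:ℝ)/2)) 0 w0
  rw [mul_zero, smul_eq_mul] at h
  have h2 : riC2 g x ((x * y)⁻¹) y = 2 * π * g * ((x * y) * ∫ t in Set.Ioi (0:ℝ), (x * y * t) ^ 2 * ((x * y * t + x ^ 2) * (x * y * t + ((x * y)⁻¹) ^ 2) * (x * y * t + y ^ 2)) ^ (-(3:ℝ)/2)) := by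
    rw [h, riC2, ← mul_assoc (x * y), mul_inv_cancel₀ w0.ne', one_mul]
  rw [h2, mul_assoc (2 * π * g), mul_assoc (2 * π * g)]
  congr 1
  rw [raJ, ← integral_const_mul, ← integral_const_mul]
  refine setIntegral_congr_fun measurableSet_Ioi fun t ht => ?_
  have ht' : 0 < t := ht
  rw [rf_pow hx hy ht']
  unfold raQ2 raDl
  generalize raPh _ _ _ _ = P
  generalize √((x * y)⁻¹) = r
  rw [mul_inv, mul_inv]
  field_simp

/-- Facts about the domain. -/
lemma rf_memB {b1 b2 : ℝ} (h : memB b1 b2) :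
    0 < b1 ∧ 0 < b2 ∧ b2 < b1 ∧ (b1 * b2)⁻¹ < b2 ∧ ((b1 * b2)⁻¹) ^ 3 < b2 / b1 ∧ b2 / b1 < 1 := by
  obtain ⟨h1, h2, h3⟩ := h
  have s0 : 0 < √b1 := by simpa using h3
  have b10 : 0 < b1 := Real.sqrt_pos.1 s0
  have b20 : 0 < b2 := h3.trans h2
  have s2 : √b1 ^ 2 = b1 := Real.sq_sqrt b10.le
  have k : 1 < b2 * √b1 := by
    rw [inv_lt_iff_one_lt_mul₀ s0] at h2; linarith
  have k2 : 1 < b1 * b2 ^ 2 := by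
    have : 1 < (b2 * √b1) ^ 2 := one_lt_pow₀ k (by norm_num)
    rw [mul_pow, s2] at this; linarith
  refine ⟨b10, b20, h1, ?_, ?_, (div_lt_one b10).2 h1⟩
  · rw [inv_lt_iff_one_lt_mul₀ (by positivity)]; nlinarith
  · rw [inv_pow, lt_div_iff₀ b10, inv_mul_lt_iff₀ (by positivity)]
    have : 1 < (b1 * b2 ^ 2) ^ 2 := one_lt_pow₀ k2 (by norm_num)
    nlinarith

/-- The effective forms of `G₊`, `G₋`. -/
lemma rf_G (g : ℝ) {x y : ℝ} (hx : 0 < x) (hy : 0 < y) :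
    GSp g x ((x * y)⁻¹) y = 2 * π * g * √((x * y)⁻¹) * (x * y) * (y / x + x / y - 2) ^ 2 *
      ((y / x + x / y + 2) * rbG (((x * y)⁻¹) ^ 3) (y / x) (x / y) - rbX (((x * y)⁻¹) ^ 3) (y / x) (x / y)) ∧
    GSm g x ((x * y)⁻¹) y = 2 * π * g * √((x * y)⁻¹) * (x * y) * (y / x + x / y + 2) ^ 2 *
      (rbX (((x * y)⁻¹) ^ 3) (y / x) (x / y) - (y / x + x / y - 2) * rbG (((x * y)⁻¹) ^ 3) (y / x) (x / y)) := by
  have m0 : 0 < ((x * y)⁻¹) ^ 3 := by positivity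
  have z0 : 0 < y / x := by positivity
  have x0 : 0 < x / y := by positivity
  have zx : y / x * (x / y) = 1 := by field_simp
  unfold GSp GSm
  rw [rf_C1 g hx hy, rf_C2 g hx hy]
  unfold rbG rbX
  rw [ra_I1 m0 z0 x0 zx, ra_Mrho m0 z0 x0]
  generalize raJ (((x * y)⁻¹) ^ 3) (y / x) (x / y) (raQ1 (((x * y)⁻¹) ^ 3) (y / x) (x / y)) = P1
  generalize raJ (((x * y)⁻¹) ^ 3) (y / x) (x / y) (raQ2 (((x * y)⁻¹) ^ 3) (y / x) (x / y)) = P2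
  generalize √((x * y)⁻¹) = r
  constructor
  · field_simp; ring
  · field_simp; ring

lemma rf_Gpos {x y : ℝ} (h : memB x y) :
    0 < rbX (((x * y)⁻¹) ^ 3) (y / x) (x / y) - (y / x + x / y - 2) * rbG (((x * y)⁻¹) ^ 3) (y / x) (x / y) := by
  obtain ⟨hx, hy, _, _, m1, z1⟩ := rf_memB h
  have m0 : 0 < ((x * y)⁻¹) ^ 3 := by positivity
  have z0 : 0 < y / x := by positivity
  have x0 : 0 < x / y := by positivity
  have zx : y / x * (x / y) = 1 := by field_simp
  have P1p := raP1_pos m0 z0 x0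
  have P2p : 0 ≤ raJ (((x * y)⁻¹) ^ 3) (y / x) (x / y) (raQ2 (((x * y)⁻¹) ^ 3) (y / x) (x / y)) :=
    raJ_nonneg m0 z0 x0 fun t ht => by unfold raQ2; positivity
  unfold rbG rbX
  rw [ra_I1 m0 z0 x0 zx, ra_Mrho m0 z0 x0]
  generalize raJ (((x * y)⁻¹) ^ 3) (y / x) (x / y) (raQ1 (((x * y)⁻¹) ^ 3) (y / x) (x / y)) = P1 at *
  generalize raJ (((x * y)⁻¹) ^ 3) (y / x) (x / y) (raQ2 (((x * y)⁻¹) ^ 3) (y / x) (x / y)) = P2 at *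
  generalize ((x * y)⁻¹) ^ 3 = μ at *
  generalize y / x = ζ at *
  generalize x / y = ξ at *
  have e : ((2 - μ * (ζ + ξ)) * P1 + (ζ + ξ - 2 * μ) * P2) / 2 - (ζ + ξ - 2) * ((P2 + μ * P1) / 2)
    = (1 - μ) * P2 + (1 - μ * ξ + μ * (1 - ζ)) * P1 := by ring
  rw [e]
  have a1 : μ * ξ < 1 := by nlinarith
  have a2 : 0 < μ * (1 - ζ) := mul_pos m0 (by linarith)
  have a3 : 0 ≤ (1 - μ) * P2 := mul_nonneg (by linarith) P2p
  have : 0 < (1 - μ * ξ + μ * (1 - ζ)) * P1 := mul_pos (by linarith) P1p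
  linarith


noncomputable def rgV (g A B x y : ℝ) : ℝ :=
  (A / (x - y) ^ 2 + B / (x + y) ^ 2) / 4 - 2 * π * g * rdV x y

lemma rg_inj {x y x0 y0 : ℝ} (hx : 0 < x) (hy : 0 < y) (hyx : y < x) (hx0 : 0 < x0) (hy0 : 0 < y0)
    (hyx0 : y0 < x0) (h1 : y / x + x / y = y0 / x0 + x0 / y0) (h2 : (x * y)⁻¹ = (x0 * y0)⁻¹) :
    x = x0 ∧ y = y0 := by
  have e2 : x * y = x0 * y0 := inv_injective h2
  have s1 : y / x + x / y = (x ^ 2 + y ^ 2) / (x * y) := by field_simp; ring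
  have s2 : y0 / x0 + x0 / y0 = (x0 ^ 2 + y0 ^ 2) / (x0 * y0) := by field_simp; ring
  rw [s1, s2, e2, div_left_inj' (by positivity)] at h1
  have a1 : (x + y) ^ 2 = (x0 + y0) ^ 2 := by nlinarith
  have a2 : (x - y) ^ 2 = (x0 - y0) ^ 2 := by nlinarith
  have b1 : x + y = x0 + y0 := by
    rwa [pow_left_inj₀ (by positivity) (by positivity) (by norm_num)] at a1
  have b2 : x - y = x0 - y0 := by
    rwa [pow_left_inj₀ (by linarith) (by linarith) (by norm_num)] at a2
  constructor <;> linarith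

lemma rg_id {x y : ℝ} (hx : 0 < x) (hy : 0 < y) (hyx : y < x) :
    0 < y / x + x / y - 2 ∧ 1 / (x - y) ^ 2 = (x * y)⁻¹ / (y / x + x / y - 2) ∧
    1 / (x + y) ^ 2 = (x * y)⁻¹ / (y / x + x / y + 2) := by
  have s1 : y / x + x / y - 2 = (x - y) ^ 2 / (x * y) := by field_simp; ring
  have s2 : y / x + x / y + 2 = (x + y) ^ 2 / (x * y) := by field_simp; ring
  have : x - y ≠ 0 := by linarith
  have : 0 < (x - y) ^ 2 := by positivity
  refine ⟨by rw [s1]; positivity, ?_, ?_⟩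
  · rw [s1]; field_simp
  · rw [s2]; field_simp

lemma rg_min {g x0 y0 : ℝ} (hg : 0 < g) (h : memB x0 y0) (hA : 0 ≤ GSp g x0 ((x0 * y0)⁻¹) y0) :
    ∀ᶠ q : ℝ × ℝ in nhds (x0, y0), q ≠ (x0, y0) →
      rgV g (GSp g x0 ((x0 * y0)⁻¹) y0) (GSm g x0 ((x0 * y0)⁻¹) y0) x0 y0 <
      rgV g (GSp g x0 ((x0 * y0)⁻¹) y0) (GSm g x0 ((x0 * y0)⁻¹) y0) q.1 q.2 := by
  have hb := rf_Gpos h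
  obtain ⟨hx0, hy0, hyx0, _, m1, z1⟩ := rf_memB h
  have m0 : 0 < ((x0 * y0)⁻¹) ^ 3 := by positivity
  have z0 : 0 < y0 / x0 := by positivity
  have xi0 : 0 < x0 / y0 := by positivity
  have zx : y0 / x0 * (x0 / y0) = 1 := by field_simp
  obtain ⟨hp, i1, i2⟩ := rg_id hx0 hy0 hyx0
  obtain ⟨gA, gB⟩ := rf_G g hx0 hy0
  have n0 : 0 < (x0 * y0)⁻¹ := by positivity
  have c0 : 0 < 2 * π * g * √((x0 * y0)⁻¹) := by have := Real.sqrt_pos.2 n0; positivity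
  have ha : 0 ≤ (y0 / x0 + x0 / y0 + 2) * rbG (((x0 * y0)⁻¹) ^ 3) (y0 / x0) (x0 / y0) - rbX (((x0 * y0)⁻¹) ^ 3) (y0 / x0) (x0 / y0) := by
    rw [gA] at hA
    exact nonneg_of_mul_nonneg_right hA (by positivity)
  obtain ⟨Y0, h3⟩ := rb_quad m0 m1 z1 zx (by linarith) (by linarith)
  have hT := fun (δ η : ℝ) (hδ : |δ| ≤ 1 / 8) (hη : |η| ≤ 1 / 8) =>
    rd_taylor m0 z0 xi0 zx hδ hη
  have M0 : 0 ≤ raJ (((x0 * y0)⁻¹) ^ 3) (y0 / x0) (x0 / y0) (fun _ => 1) :=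
    raJ_nonneg m0 z0 xi0 fun t ht => by norm_num
  have hV := fun (x y : ℝ) (hx : 0 < x) (hy : 0 < y) => rd_V hx0 hy0 hx hy
  have hV0 := hV x0 y0 hx0 hy0
  have hq : 0 < y0 / x0 + x0 / y0 + 2 := by positivity
  obtain ⟨r, r0, hr⟩ := re_min hp hq ha hb.le (by ring) (by ring) Y0 (by
      convert h3 using 3
      have := hp.ne'; have := hq.ne'
      generalize y0 / x0 + x0 / y0 = τ at *
      field_simp; ring) (by positivity)
      (fun δ η => raJ (((x0 * y0)⁻¹) ^ 3) (y0 / x0) (x0 / y0) (fun t => rcR (raRh (y0/x0) (x0/y0) t) (raTh (((x0*y0)⁻¹)^3) t) δ η)) hT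
  have e1 : ∀ᶠ q : ℝ × ℝ in nhds (x0, y0), 0 < q.1 :=
    continuousAt_fst.eventually (lt_mem_nhds hx0)
  have e2 : ∀ᶠ q : ℝ × ℝ in nhds (x0, y0), 0 < q.2 :=
    continuousAt_snd.eventually (lt_mem_nhds hy0)
  have e3 : ∀ᶠ q : ℝ × ℝ in nhds (x0, y0), q.2 < q.1 :=
    (isOpen_lt continuous_snd continuous_fst).mem_nhds (x := ((x0, y0) : ℝ × ℝ)) hyx0
  have e4 : ∀ᶠ q : ℝ × ℝ in nhds (x0, y0), |q.2 / q.1 + q.1 / q.2 - (y0 / x0 + x0 / y0)| < r := by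
    have : ContinuousAt (fun q : ℝ × ℝ => |q.2 / q.1 + q.1 / q.2 - (y0 / x0 + x0 / y0)|) (x0, y0) := by
      fun_prop (disch := simp; positivity)
    exact this.eventually (gt_mem_nhds (by simpa using r0))
  have e5 : ∀ᶠ q : ℝ × ℝ in nhds (x0, y0), |(q.1 * q.2)⁻¹ / (x0 * y0)⁻¹ - 1| < r := by
    have : ContinuousAt (fun q : ℝ × ℝ => |(q.1 * q.2)⁻¹ / (x0 * y0)⁻¹ - 1|) (x0, y0) := by
      fun_prop (disch := simp; try constructor <;> positivity)
    exact this.eventually (gt_mem_nhds (by simp [hx0.ne', hy0.ne', r0]))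
  filter_upwards [e1, e2, e3, e4, e5] with q hx hy hyx hδ hη hne
  obtain ⟨x, y⟩ := q
  simp only at hx hy hyx hδ hη
  have hne' : y / x + x / y - (y0 / x0 + x0 / y0) ≠ 0 ∨ (x * y)⁻¹ / (x0 * y0)⁻¹ - 1 ≠ 0 := by
    by_contra hc
    push Not at hc
    have h1 : y / x + x / y = y0 / x0 + x0 / y0 := by linarith [hc.1]
    have h2 : (x * y)⁻¹ = (x0 * y0)⁻¹ := by
      have : (x * y)⁻¹ / (x0 * y0)⁻¹ = 1 := by linarith [hc.2]
      rwa [div_eq_one_iff_eq n0.ne'] at this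
    obtain ⟨rfl, rfl⟩ := rg_inj hx hy hyx hx0 hy0 hyx0 h1 h2
    exact hne rfl
  have key := hr _ _ hδ hη hne'
  obtain ⟨hp', j1, j2⟩ := rg_id hx hy hyx
  have hV1 := hV x y hx hy
  have key0 : (fun t => rcR (raRh (y0/x0) (x0/y0) t) (raTh (((x0*y0)⁻¹)^3) t) (y0 / x0 + x0 / y0 - (y0 / x0 + x0 / y0)) ((x0 * y0)⁻¹ / (x0 * y0)⁻¹ - 1)) = fun _ => 1 := by
    funext t; rw [div_self n0.ne', sub_self, sub_self]; simp [rcR]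
  rw [key0] at hV0
  unfold rgV
  simp only
  rw [hV1, hV0, gA, gB]
  clear hV hV1 hV0 hT hr h3 Y0 key0
  generalize raJ (((x0 * y0)⁻¹) ^ 3) (y0 / x0) (x0 / y0) (fun t => rcR (raRh (y0/x0) (x0/y0) t) (raTh (((x0*y0)⁻¹)^3) t) _ _) = J1 at *
  generalize raJ (((x0 * y0)⁻¹) ^ 3) (y0 / x0) (x0 / y0) (fun _ => 1) = J0 at *
  generalize (y0 / x0 + x0 / y0 + 2) * rbG (((x0 * y0)⁻¹) ^ 3) (y0 / x0) (x0 / y0) - rbX (((x0 * y0)⁻¹) ^ 3) (y0 / x0) (x0 / y0) = a at *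
  generalize rbX (((x0 * y0)⁻¹) ^ 3) (y0 / x0) (x0 / y0) - (y0 / x0 + x0 / y0 - 2) * rbG (((x0 * y0)⁻¹) ^ 3) (y0 / x0) (x0 / y0) = b at *
  have key2 := mul_lt_mul_of_pos_left key c0
  rw [div_eq_mul_one_div _ ((x0 - y0) ^ 2), div_eq_mul_one_div _ ((x0 + y0) ^ 2),
    div_eq_mul_one_div _ ((x - y) ^ 2), div_eq_mul_one_div _ ((x + y) ^ 2), i1, i2, j1, j2]
  have w : (x * y)⁻¹ = (x0 * y0)⁻¹ * (1 + ((x * y)⁻¹ / (x0 * y0)⁻¹ - 1)) := by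
    field_simp; ring
  have t1 : y / x + x / y - 2 = y0 / x0 + x0 / y0 - 2 + (y / x + x / y - (y0 / x0 + x0 / y0)) := by ring
  have t2 : y / x + x / y + 2 = y0 / x0 + x0 / y0 + 2 + (y / x + x / y - (y0 / x0 + x0 / y0)) := by ring
  rw [t1, t2, w]
  rw [t1] at hp'
  have n1 : x0 * y0 * (x0 * y0)⁻¹ = 1 := by field_simp
  generalize (x * y)⁻¹ / (x0 * y0)⁻¹ - 1 = η at *
  generalize y / x + x / y - (y0 / x0 + x0 / y0) = δ at *
  generalize √((x0 * y0)⁻¹) = s at *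
  generalize (x0 * y0)⁻¹ = ν at *
  generalize x0 * y0 = w0 at *
  generalize y0 / x0 + x0 / y0 = τ at *
  have hq' : 0 < τ + 2 + δ := by linarith
  have L : ∀ J, (2 * π * g * s * w0 * (τ - 2) ^ 2 * a * (ν * (1 + η) / (τ - 2 + δ)) +
      2 * π * g * s * w0 * (τ + 2) ^ 2 * b * (ν * (1 + η) / (τ + 2 + δ))) / 4 - 2 * π * g * (s * J)
     = 2 * π * g * s * ((1 + η) * ((τ - 2) ^ 2 * a / (τ - 2 + δ) + (τ + 2) ^ 2 * b / (τ + 2 + δ)) / 4 - J) := by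
    intro J
    linear_combination (2 * π * g * s * ((τ - 2) ^ 2 * a * ((1 + η) / (τ - 2 + δ)) + (τ + 2) ^ 2 * b * ((1 + η) / (τ + 2 + δ))) / 4) * n1
  have R : ∀ J, (2 * π * g * s * w0 * (τ - 2) ^ 2 * a * (ν / (τ - 2)) +
      2 * π * g * s * w0 * (τ + 2) ^ 2 * b * (ν / (τ + 2))) / 4 - 2 * π * g * (s * J)
     = 2 * π * g * s * (((τ - 2) * a + (τ + 2) * b) / 4 - J) := by
    intro J
    have k1 : (τ - 2) ^ 2 / (τ - 2) = τ - 2 := by field_simp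
    have k2 : (τ + 2) ^ 2 / (τ + 2) = τ + 2 := by field_simp
    linear_combination (2 * π * g * s * ((τ - 2) ^ 2 * a * (1 / (τ - 2)) + (τ + 2) ^ 2 * b * (1 / (τ + 2))) / 4) * n1 + 2 * π * g * s / 4 * a * k1 + 2 * π * g * s / 4 * b * k2
  rw [L, R]
  exact key2


lemma rh_div {E : Type*} [NormedAddCommGroup E] [NormedSpace ℝ E] {u v : E → ℝ} {p : E}
    (hu : DifferentiableAt ℝ u p) (hv : DifferentiableAt ℝ v p) (h : v p ≠ 0) :
    DifferentiableAt ℝ (fun q => u q / v q) p := by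
  simp only [div_eq_mul_inv]
  exact hu.fun_mul (hv.fun_inv h)

lemma rh_F {F : ℝ → ℝ → ℝ} {M G X Z V Y C : ℝ}
    (hF : ∀ δ η : ℝ, |δ| ≤ 1 / 8 → |η| ≤ 1 / 8 →
      |F δ η - (M - G * δ + X * η + 1 / 2 * Z * δ ^ 2 - V * δ * η - 1 / 2 * Y * η ^ 2)| ≤ C * (|δ| + |η|) ^ 3)
    (C0 : 0 ≤ C) :
    DifferentiableAt ℝ (fun q : ℝ × ℝ => F q.1 q.2) (0, 0) := by
  have h1 : (fun q : ℝ × ℝ => F q.1 q.2 - (M - G * q.1 + X * q.2 + 1 / 2 * Z * q.1 ^ 2 - V * q.1 * q.2 - 1 / 2 * Y * q.2 ^ 2))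
      =O[nhds (0, 0)] fun q => ‖q - (0, 0)‖ ^ 3 := by
    refine Asymptotics.IsBigO.of_bound (C * 8) ?_
    have : Metric.ball ((0, 0) : ℝ × ℝ) (1 / 8) ∈ nhds ((0, 0) : ℝ × ℝ) := Metric.ball_mem_nhds _ (by norm_num)
    filter_upwards [this] with q hq
    have hn : ‖q‖ < 1 / 8 := by
      have := mem_ball_iff_norm.1 hq
      rwa [show ((0, 0) : ℝ × ℝ) = 0 from rfl, sub_zero] at this
    have n1 : |q.1| ≤ ‖q‖ := norm_fst_le q
    have n2 : |q.2| ≤ ‖q‖ := norm_snd_le q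
    rw [show ((0, 0) : ℝ × ℝ) = 0 from rfl, sub_zero, norm_pow, norm_norm, Real.norm_eq_abs]
    refine (hF q.1 q.2 (by linarith) (by linarith)).trans ?_
    have : (|q.1| + |q.2|) ^ 3 ≤ (2 * ‖q‖) ^ 3 := pow_le_pow_left₀ (by positivity) (by linarith) 3
    nlinarith
  have h2 := (h1.hasFDerivAt (𝕜 := ℝ) (by norm_num)).differentiableAt
  have h3 : DifferentiableAt ℝ (fun q : ℝ × ℝ => (M - G * q.1 + X * q.2 + 1 / 2 * Z * q.1 ^ 2 - V * q.1 * q.2 - 1 / 2 * Y * q.2 ^ 2)) (0, 0) := by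
    fun_prop
  refine (h2.add h3).congr_of_eventuallyEq (Filter.Eventually.of_forall fun q => ?_)
  simp

lemma rh_V {x0 y0 : ℝ} (hx0 : 0 < x0) (hy0 : 0 < y0) :
    DifferentiableAt ℝ (fun q : ℝ × ℝ => rdV q.1 q.2) (x0, y0) := by
  have m0 : 0 < ((x0 * y0)⁻¹) ^ 3 := by positivity
  have z0 : 0 < y0 / x0 := by positivity
  have xi0 : 0 < x0 / y0 := by positivity
  have zx : y0 / x0 * (x0 / y0) = 1 := by field_simp
  have n0 : 0 < (x0 * y0)⁻¹ := by positivity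
  have hT := fun (δ η : ℝ) (hδ : |δ| ≤ 1 / 8) (hη : |η| ≤ 1 / 8) =>
    rd_taylor m0 z0 xi0 zx hδ hη
  have M0 : 0 ≤ raJ (((x0 * y0)⁻¹) ^ 3) (y0 / x0) (x0 / y0) (fun _ => 1) :=
    raJ_nonneg m0 z0 xi0 fun t ht => by norm_num
  have hF := rh_F (F := fun δ η => raJ (((x0 * y0)⁻¹) ^ 3) (y0 / x0) (x0 / y0) (fun t => rcR (raRh (y0/x0) (x0/y0) t) (raTh (((x0*y0)⁻¹)^3) t) δ η)) hT (by positivity)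
  have hin : DifferentiableAt ℝ (fun q : ℝ × ℝ => ((q.2 / q.1 + q.1 / q.2 - (y0 / x0 + x0 / y0), (q.1 * q.2)⁻¹ * ((x0 * y0)⁻¹)⁻¹ - 1) : ℝ × ℝ)) (x0, y0) := by
    have q1 : DifferentiableAt ℝ (fun q : ℝ × ℝ => q.2 / q.1) (x0, y0) := by
      refine rh_div ?_ ?_ ?_
      · fun_prop
      · fun_prop
      · exact hx0.ne'
    have q2 : DifferentiableAt ℝ (fun q : ℝ × ℝ => q.1 / q.2) (x0, y0) := by
      refine rh_div ?_ ?_ ?_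
      · fun_prop
      · fun_prop
      · exact hy0.ne'
    have q3 : DifferentiableAt ℝ (fun q : ℝ × ℝ => (q.1 * q.2)⁻¹) (x0, y0) := by
      refine DifferentiableAt.fun_inv ?_ ?_
      · fun_prop
      · exact (mul_pos hx0 hy0).ne'
    fun_prop
  have hval : (fun q : ℝ × ℝ => ((q.2 / q.1 + q.1 / q.2 - (y0 / x0 + x0 / y0), (q.1 * q.2)⁻¹ / (x0 * y0)⁻¹ - 1) : ℝ × ℝ)) (x0, y0) = (0, 0) := by
    simp only
    rw [div_self n0.ne', sub_self, sub_self]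
  have hc := DifferentiableAt.comp (x0, y0) (hval ▸ hF) hin
  refine (hc.const_mul (√((x0*y0)⁻¹))).congr_of_eventuallyEq ?_
  have e1 : ∀ᶠ q : ℝ × ℝ in nhds (x0, y0), 0 < q.1 :=
    continuousAt_fst.eventually (lt_mem_nhds hx0)
  have e2 : ∀ᶠ q : ℝ × ℝ in nhds (x0, y0), 0 < q.2 :=
    continuousAt_snd.eventually (lt_mem_nhds hy0)
  filter_upwards [e1, e2] with q hx hy
  exact rd_V hx0 hy0 hx hy

lemma rh_H (g : ℝ) {p : Fin 10 → ℝ} (hp : memB (p 0) (p 1)) : DifferentiableAt ℝ (Hred g) p := by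
  obtain ⟨hx, hy, hyx, hzy, _, _⟩ := rf_memB hp
  have n0 : 0 < (p 0 * p 1)⁻¹ := by positivity
  have hV : DifferentiableAt ℝ (fun p : Fin 10 → ℝ => rdV (p 0) (p 1)) p :=
    DifferentiableAt.comp (g := fun q : ℝ × ℝ => rdV q.1 q.2) (f := fun p : Fin 10 → ℝ => (p 0, p 1)) p (rh_V hx hy) (by fun_prop)
  have hb3 : DifferentiableAt ℝ (fun p : Fin 10 → ℝ => (p 0 * p 1)⁻¹) p := by
    fun_prop (disch := positivity)
  have hk : ∀ u v : ℝ, 0 < v → v < u → 2 * (u ^ 2 - v ^ 2) ^ 2 ≠ 0 := by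
    intro u v hv huv
    have : 0 < u ^ 2 - v ^ 2 := by nlinarith
    positivity
  have d1 := hk _ _ hy hyx
  have d2 := hk _ _ n0 hzy
  have d3 := hk _ _ n0 (hzy.trans hyx)
  have d4 : 2 * (p 0 ^ 2 * p 1 ^ 2 + p 0 ^ 2 * ((p 0 * p 1)⁻¹) ^ 2 + p 1 ^ 2 * ((p 0 * p 1)⁻¹) ^ 2) ≠ 0 := by positivity
  refine DifferentiableAt.sub (DifferentiableAt.add (DifferentiableAt.add (DifferentiableAt.add ?_ ?_) ?_) ?_) (hV.const_mul _)
  · refine rh_div ?_ ?_ ?_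
    · fun_prop
    · fun_prop
    · exact d4
  · refine rh_div ?_ ?_ ?_
    · fun_prop
    · fun_prop
    · exact d1
  · refine rh_div ?_ ?_ ?_
    · fun_prop
    · fun_prop
    · exact d3
  · refine rh_div ?_ ?_ ?_
    · fun_prop
    · fun_prop
    · exact d2


/-- stability discriminant of a transverse plane -/
noncomputable def rkQ (A B x z u y : ℝ) : ℝ :=
  B * ((1 / (u - y) ^ 2 - 1 / (x + z) ^ 2) * (1 / (u + y) ^ 2 - 1 / (x + z) ^ 2)) -
  A * ((1 / (x - z) ^ 2 - 1 / (u - y) ^ 2) * (1 / (x - z) ^ 2 - 1 / (u + y) ^ 2))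

lemma rk_base_alg {x y z C1 C2 Ip Im : ℝ} (hy : 0 < y) (hyz : y < z) (hzx : z < x)
    (hC1 : 0 < C1) (hC2 : 0 ≤ C2)
    (hIp : Ip = (x * y ^ 2 * z + (x ^ 2 * y ^ 2 - x ^ 2 * z ^ 2 + y ^ 2 * z ^ 2)) * C1 + (x * z + y ^ 2) * C2)
    (hIm : Im = (x * y ^ 2 * z - (x ^ 2 * y ^ 2 - x ^ 2 * z ^ 2 + y ^ 2 * z ^ 2)) * C1 + (x * z - y ^ 2) * C2)
    (h0 : 0 ≤ Ip) :
    (x - z) ^ 4 / (x * z) * Ip < (x + z) ^ 4 / (x * z) * Im ∧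
    0 < rkQ ((x - z) ^ 4 / (x * z) * Ip) ((x + z) ^ 4 / (x * z) * Im) x z x y ∧
    0 < rkQ ((x - z) ^ 4 / (x * z) * Ip) ((x + z) ^ 4 / (x * z) * Im) x z z y := by
  have hz : 0 < z := hy.trans hyz
  have hx : 0 < x := hz.trans hzx
  have q1 : 0 < z ^ 2 - y ^ 2 := by nlinarith
  have q2 : 0 < x ^ 2 - z ^ 2 := by nlinarith
  have q3 : 0 < x ^ 2 - y ^ 2 := by linarith
  have k1 : 0 < Im * ((2 * x + z) ^ 2 - y ^ 2) - Ip * ((2 * x - z) ^ 2 - y ^ 2) := by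
    have e : Im * ((2 * x + z) ^ 2 - y ^ 2) - Ip * ((2 * x - z) ^ 2 - y ^ 2) =
      C2 * ((z ^ 2 - y ^ 2) * (8 * x ^ 2 - 2 * y ^ 2)) + 2 * (C1 * ((z ^ 2 - y ^ 2) *
        (4 * x ^ 2 * (x ^ 2 - z ^ 2) + 3 * x ^ 2 * z ^ 2 + x ^ 2 * (z ^ 2 - y ^ 2) + (x ^ 2 - y ^ 2) * z ^ 2))) := by
      rw [hIp, hIm]; ring
    rw [e]
    have : 0 < 8 * x ^ 2 - 2 * y ^ 2 := by nlinarith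
    have : 0 < (4 * x ^ 2 * (x ^ 2 - z ^ 2) + 3 * x ^ 2 * z ^ 2 + x ^ 2 * (z ^ 2 - y ^ 2) + (x ^ 2 - y ^ 2) * z ^ 2) := by
      positivity
    positivity
  have k2 : 0 < Im * ((2 * z + x) ^ 2 - y ^ 2) - Ip * ((2 * z - x) ^ 2 - y ^ 2) := by
    have e : Im * ((2 * z + x) ^ 2 - y ^ 2) - Ip * ((2 * z - x) ^ 2 - y ^ 2) =
      C2 * ((x ^ 2 - y ^ 2) * (8 * z ^ 2 - 2 * y ^ 2)) + 2 * (C1 * ((x ^ 2 - y ^ 2) *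
        (3 * z ^ 4 + z ^ 2 * (z ^ 2 - y ^ 2) + x ^ 2 * (z ^ 2 - y ^ 2)))) := by
      rw [hIp, hIm]; ring
    rw [e]
    have : 0 < 8 * z ^ 2 - 2 * y ^ 2 := by nlinarith
    positivity
  have al : 0 < (2 * x - z) ^ 2 - y ^ 2 := by nlinarith
  have be : 0 < (2 * x + z) ^ 2 - y ^ 2 := by nlinarith
  have n1 : x - z ≠ 0 := by linarith
  have n1p : 0 < x - z := by linarith
  have n2 : x - y ≠ 0 := by linarith
  have n3 : z - y ≠ 0 := by linarith
  have n4 : x + z ≠ 0 := by positivity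
  have n5 : x + y ≠ 0 := by positivity
  have n6 : z + y ≠ 0 := by positivity
  refine ⟨?_, ?_, ?_⟩
  · have c1 : (x - z) ^ 4 * ((2 * x + z) ^ 2 - y ^ 2) ≤ (x + z) ^ 4 * ((2 * x - z) ^ 2 - y ^ 2) := by
      have d1 : ((2 * x + z) ^ 2 - y ^ 2) * (x - z) ≤ ((2 * x - z) ^ 2 - y ^ 2) * (x + z) := by
        have : ((2 * x - z) ^ 2 - y ^ 2) * (x + z) - ((2 * x + z) ^ 2 - y ^ 2) * (x - z) = 2 * z * (z ^ 2 - y ^ 2) := by ring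
        have : 0 < 2 * z * (z ^ 2 - y ^ 2) := by positivity
        linarith
      have d2 : (x - z) ^ 3 ≤ (x + z) ^ 3 := pow_le_pow_left₀ n1p.le (by linarith) 3
      calc _ = (x - z) ^ 3 * (((2 * x + z) ^ 2 - y ^ 2) * (x - z)) := by ring
        _ ≤ (x + z) ^ 3 * (((2 * x - z) ^ 2 - y ^ 2) * (x + z)) := mul_le_mul d2 d1 (by positivity) (by positivity)
        _ = _ := by ring
    have c2 : Ip * (x - z) ^ 4 * ((2 * x + z) ^ 2 - y ^ 2) < Im * (x + z) ^ 4 * ((2 * x + z) ^ 2 - y ^ 2) := by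
      calc _ = Ip * ((x - z) ^ 4 * ((2 * x + z) ^ 2 - y ^ 2)) := by ring
        _ ≤ Ip * ((x + z) ^ 4 * ((2 * x - z) ^ 2 - y ^ 2)) := mul_le_mul_of_nonneg_left c1 h0
        _ = (x + z) ^ 4 * (Ip * ((2 * x - z) ^ 2 - y ^ 2)) := by ring
        _ < (x + z) ^ 4 * (Im * ((2 * x + z) ^ 2 - y ^ 2)) := mul_lt_mul_of_pos_left (by linarith) (by positivity)
        _ = _ := by ring
    have c3 := lt_of_mul_lt_mul_right c2 be.le
    rw [div_mul_eq_mul_div, div_mul_eq_mul_div]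
    exact (div_lt_div_iff_of_pos_right (by positivity)).2 (by linarith)
  · have e : rkQ ((x - z) ^ 4 / (x * z) * Ip) ((x + z) ^ 4 / (x * z) * Im) x z x y =
      (Im * ((2 * x + z) ^ 2 - y ^ 2) - Ip * ((2 * x - z) ^ 2 - y ^ 2)) * (z ^ 2 - y ^ 2) / (x * z * ((x - y) * (x + y)) ^ 2) := by
      unfold rkQ; field_simp; ring
    rw [e]; positivity
  · have e : rkQ ((x - z) ^ 4 / (x * z) * Ip) ((x + z) ^ 4 / (x * z) * Im) x z z y =
      (Im * ((2 * z + x) ^ 2 - y ^ 2) - Ip * ((2 * z - x) ^ 2 - y ^ 2)) * (x ^ 2 - y ^ 2) / (x * z * ((z - y) * (z + y)) ^ 2) := by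
      unfold rkQ; field_simp; ring
    rw [e]; positivity

lemma rk_base {g x z : ℝ} (hg : 0 < g) (h : memB x z) (hA : 0 ≤ GSp g x ((x * z)⁻¹) z) :
    GSp g x ((x * z)⁻¹) z < GSm g x ((x * z)⁻¹) z ∧
    0 < rkQ (GSp g x ((x * z)⁻¹) z) (GSm g x ((x * z)⁻¹) z) x z x ((x * z)⁻¹) ∧
    0 < rkQ (GSp g x ((x * z)⁻¹) z) (GSm g x ((x * z)⁻¹) z) x z z ((x * z)⁻¹) := by
  obtain ⟨hx, hz, hzx, hyz, _, _⟩ := rf_memB h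
  have y0 : 0 < (x * z)⁻¹ := by positivity
  have hC1 : 0 < riC1 g x ((x * z)⁻¹) z := by
    rw [rf_C1 g hx hz]
    have := raP1_pos (μ := ((x * z)⁻¹) ^ 3) (ζ := z / x) (ξ := x / z) (by positivity) (by positivity) (by positivity)
    have := Real.sqrt_pos.2 y0
    positivity
  have hC2 : 0 ≤ riC2 g x ((x * z)⁻¹) z := by
    unfold riC2
    have : 0 ≤ ∫ s in Set.Ioi (0:ℝ), s ^ 2 * ((s + x ^ 2) * (s + ((x * z)⁻¹) ^ 2) * (s + z ^ 2)) ^ (-(3:ℝ)/2) :=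
      setIntegral_nonneg measurableSet_Ioi fun s hs => by
        have : 0 < s := hs
        positivity
    positivity
  unfold GSp at hA
  have n1p : 0 < x - z := by linarith
  have hI := nonneg_of_mul_nonneg_right hA (by positivity)
  exact rk_base_alg y0 hyz hzx hC1 hC2 rfl rfl hI

/-- positivity of the transverse quadratic form -/
lemma rk_form {A B a b a' b' e f s d : ℝ} (he : e ^ 2 = A) (hf : f ^ 2 = B) (hAB : A < B)
    (hab : b < a) (h1 : b < a')
    (hQ : 0 < B * ((a' - b) * (b' - b)) - A * ((a - a') * (a - b'))) :
    0 ≤ ((a' - b) * B + (a - a') * A) * s ^ 2 + ((b' - b) * B + (a - b') * A) * d ^ 2 - 2 * (a - b) * (e * f) * (s * d) ∧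
    (((a' - b) * B + (a - a') * A) * s ^ 2 + ((b' - b) * B + (a - b') * A) * d ^ 2 - 2 * (a - b) * (e * f) * (s * d) = 0 →
      s = 0 ∧ d = 0) := by
  have A0 : 0 ≤ A := he ▸ sq_nonneg e
  have P0 : 0 < (a' - b) * B + (a - a') * A := by nlinarith
  have hdet : ((a' - b) * B + (a - a') * A) * ((b' - b) * B + (a - b') * A) - ((a - b) * (e * f)) ^ 2 =
     (B - A) * (B * ((a' - b) * (b' - b)) - A * ((a - a') * (a - b'))) := by
    rw [mul_pow, mul_pow e f, he, hf]; ring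
  have D0 : 0 < (B - A) * (B * ((a' - b) * (b' - b)) - A * ((a - a') * (a - b'))) := mul_pos (by linarith) hQ
  rw [← hdet] at D0
  generalize (a' - b) * B + (a - a') * A = P at *
  generalize (b' - b) * B + (a - b') * A = R at *
  have e2 : P * (P * s ^ 2 + R * d ^ 2 - 2 * (a - b) * (e * f) * (s * d)) = (P * s - (a - b) * (e * f) * d) ^ 2 + (P * R - ((a - b) * (e * f)) ^ 2) * d ^ 2 := by ring
  constructor
  · refine nonneg_of_mul_nonneg_right ?_ P0
    rw [e2]; positivity
  · intro h
    rw [h, mul_zero] at e2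
    have t1 := sq_nonneg (P * s - (a - b) * (e * f) * d)
    have t2 : 0 ≤ (P * R - ((a - b) * (e * f)) ^ 2) * d ^ 2 := by positivity
    have t3 : d ^ 2 = 0 := by
      have : (P * R - ((a - b) * (e * f)) ^ 2) * d ^ 2 = 0 := by linarith
      exact (mul_eq_zero.1 this).resolve_left D0.ne'
    have d0 : d = 0 := by simpa using t3
    have : (P * s - (a - b) * (e * f) * d) ^ 2 = 0 := by linarith
    rw [d0] at this
    have := pow_eq_zero_iff (two_ne_zero) |>.1 this
    refine ⟨?_, d0⟩
    simpa [P0.ne'] using this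

/-- rotational energy terms -/
noncomputable def rkT (x z y m1 m2 m3 m4 m5 m6 : ℝ) : ℝ :=
  ((x ^ 2 + z ^ 2) * (m3 ^ 2 + m6 ^ 2) + 4 * x * z * m3 * m6) / (2 * (x ^ 2 - z ^ 2) ^ 2)
    + ((x ^ 2 + y ^ 2) * (m2 ^ 2 + m5 ^ 2) + 4 * x * y * m2 * m5) / (2 * (x ^ 2 - y ^ 2) ^ 2)
    + ((z ^ 2 + y ^ 2) * (m1 ^ 2 + m4 ^ 2) + 4 * z * y * m1 * m4) / (2 * (z ^ 2 - y ^ 2) ^ 2)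

lemma rk_pair {x z m n : ℝ} (hz : 0 < z) (hzx : z < x) :
    ((x ^ 2 + z ^ 2) * (m ^ 2 + n ^ 2) + 4 * x * z * m * n) / (2 * (x ^ 2 - z ^ 2) ^ 2) =
    (1 / (x - z) ^ 2 * (m + n) ^ 2 + 1 / (x + z) ^ 2 * (m - n) ^ 2) / 4 := by
  have n1 : x - z ≠ 0 := by linarith
  have n2 : x + z ≠ 0 := by linarith
  have : x ^ 2 - z ^ 2 = (x - z) * (x + z) := by ring
  rw [this]; field_simp; ring

lemma rk_T {x y z e f m1 m2 m3 m4 m5 m6 : ℝ} (hy : 0 < y) (hyz : y < z) (hzx : z < x)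
    (he : 0 ≤ e) (hef : e < f)
    (hQ1 : 0 < rkQ (e ^ 2) (f ^ 2) x z x y) (hQ2 : 0 < rkQ (e ^ 2) (f ^ 2) x z z y)
    (hL : m1 ^ 2 + m2 ^ 2 + m3 ^ 2 = ((e + f) / 2) ^ 2)
    (hR : m4 ^ 2 + m5 ^ 2 + m6 ^ 2 = ((e - f) / 2) ^ 2) (h3 : 0 < m3) :
    (e ^ 2 / (x - z) ^ 2 + f ^ 2 / (x + z) ^ 2) / 4 ≤ rkT x z y m1 m2 m3 m4 m5 m6 ∧
    ((e ^ 2 / (x - z) ^ 2 + f ^ 2 / (x + z) ^ 2) / 4 = rkT x z y m1 m2 m3 m4 m5 m6 →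
      m1 = 0 ∧ m2 = 0 ∧ m3 = (e + f) / 2 ∧ m4 = 0 ∧ m5 = 0 ∧ m6 = (e - f) / 2) := by
  have hf : 0 < f := by linarith
  have hz : 0 < z := hy.trans hyz
  have hAB : e ^ 2 < f ^ 2 := by nlinarith
  have hlt : ∀ u v : ℝ, 0 < u → u < v → 1 / v ^ 2 < 1 / u ^ 2 := fun u v hu huv =>
    one_div_lt_one_div_of_lt (by positivity) (by nlinarith)
  have ab := hlt (x - z) (x + z) (by linarith) (by linarith)
  obtain ⟨F1, F1'⟩ := rk_form (s := m2 + m5) (d := m2 - m5) (e := e) (f := f) rfl rfl hAB ab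
    (hlt (x - y) (x + z) (by linarith) (by linarith)) hQ1
  obtain ⟨F2, F2'⟩ := rk_form (s := m1 + m4) (d := m1 - m4) (e := e) (f := f) rfl rfl hAB ab
    (hlt (z - y) (x + z) (by linarith) (by linarith)) hQ2
  unfold rkT
  rw [rk_pair hz hzx, rk_pair hy (hyz.trans hzx), rk_pair hy hyz, div_eq_mul_one_div (e ^ 2), div_eq_mul_one_div (f ^ 2)]
  generalize 1 / (x - z) ^ 2 = a at *
  generalize 1 / (x + z) ^ 2 = b at *
  generalize 1 / (x - y) ^ 2 = a1 at *
  generalize 1 / (x + y) ^ 2 = b1 at *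
  generalize 1 / (z - y) ^ 2 = a2 at *
  generalize 1 / (z + y) ^ 2 = b2 at *
  have F3 : 0 ≤ (a - b) * (f * (m3 + m6) - e * (m3 - m6)) ^ 2 := mul_nonneg (by linarith) (sq_nonneg _)
  generalize hK1 : ((a1 - b) * f ^ 2 + (a - a1) * e ^ 2) * (m2 + m5) ^ 2 + ((b1 - b) * f ^ 2 + (a - b1) * e ^ 2) * (m2 - m5) ^ 2 - 2 * (a - b) * (e * f) * ((m2 + m5) * (m2 - m5)) = K1 at *
  generalize hK2 : ((a2 - b) * f ^ 2 + (a - a2) * e ^ 2) * (m1 + m4) ^ 2 + ((b2 - b) * f ^ 2 + (a - b2) * e ^ 2) * (m1 - m4) ^ 2 - 2 * (a - b) * (e * f) * ((m1 + m4) * (m1 - m4)) = K2 at *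
  have id : (f ^ 2 - e ^ 2) * (4 * ((a * (m3 + m6) ^ 2 + b * (m3 - m6) ^ 2) / 4 + (a1 * (m2 + m5) ^ 2 + b1 * (m2 - m5) ^ 2) / 4 +
       (a2 * (m1 + m4) ^ 2 + b2 * (m1 - m4) ^ 2) / 4 - (e ^ 2 * a + f ^ 2 * b) / 4)) =
      (a - b) * (f * (m3 + m6) - e * (m3 - m6)) ^ 2 + K1 + K2 := by
    rw [← hK1, ← hK2]
    linear_combination (2 * (b * f ^ 2 - a * e ^ 2) + 2 * (a - b) * (e * f)) * hL + (2 * (b * f ^ 2 - a * e ^ 2) - 2 * (a - b) * (e * f)) * hR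
  constructor
  · have := nonneg_of_mul_nonneg_right (a := f ^ 2 - e ^ 2) (by rw [id]; positivity) (by linarith)
    linarith
  · intro h
    rw [h, sub_self, mul_zero, mul_zero] at id
    obtain ⟨p2, p5⟩ := F1' (by linarith)
    obtain ⟨p1, p4⟩ := F2' (by linarith)
    have z1 : m1 = 0 := by linarith
    have z2 : m2 = 0 := by linarith
    have z4 : m4 = 0 := by linarith
    have z5 : m5 = 0 := by linarith
    have p3 : (a - b) * (f * (m3 + m6) - e * (m3 - m6)) ^ 2 = 0 := by linarith
    have p3' : f * (m3 + m6) - e * (m3 - m6) = 0 := by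
      have := (mul_eq_zero.1 p3).resolve_left (by linarith)
      exact pow_eq_zero_iff (two_ne_zero) |>.1 this
    have z3 : m3 = (e + f) / 2 := by
      rw [z1, z2] at hL
      have : m3 ^ 2 = ((e + f) / 2) ^ 2 := by linarith
      rwa [pow_left_inj₀ h3.le (by positivity) (by norm_num)] at this
    refine ⟨z1, z2, z3, z4, z5, ?_⟩
    have : (f + e) * (m6 - (e - f) / 2) = 0 := by rw [z3] at p3'; linear_combination p3'
    have := (mul_eq_zero.1 this).resolve_left (by linarith)
    linarith


noncomputable def rmK (x z y c1 c2 : ℝ) : ℝ :=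
  ((z ^ 2 + y ^ 2) * x ^ 2 * c1 ^ 2 + (x ^ 2 + y ^ 2) * z ^ 2 * c2 ^ 2 - 2 * y * c1 * c2) /
      (2 * (x ^ 2 * z ^ 2 + x ^ 2 * y ^ 2 + z ^ 2 * y ^ 2))

lemma rm_K {x z c1 c2 : ℝ} (hx : 0 < x) (hz : 0 < z) :
    0 ≤ rmK x z ((x * z)⁻¹) c1 c2 ∧ (rmK x z ((x * z)⁻¹) c1 c2 = 0 → c1 = 0 ∧ c2 = 0) := by
  have e : (z ^ 2 + ((x * z)⁻¹) ^ 2) * x ^ 2 * c1 ^ 2 + (x ^ 2 + ((x * z)⁻¹) ^ 2) * z ^ 2 * c2 ^ 2 - 2 * ((x * z)⁻¹) * c1 * c2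
     = x ^ 2 * z ^ 2 * (c1 ^ 2 + c2 ^ 2) + ((x * z)⁻¹) ^ 2 * (x * c1 - z * c2) ^ 2 := by
    field_simp; ring
  unfold rmK
  rw [e]
  constructor
  · positivity
  · intro h
    rw [div_eq_zero_iff] at h
    have h := h.resolve_right (by positivity)
    have t1 : 0 ≤ x ^ 2 * z ^ 2 * (c1 ^ 2 + c2 ^ 2) := by positivity
    have t2 : 0 ≤ ((x * z)⁻¹) ^ 2 * (x * c1 - z * c2) ^ 2 := by positivity
    have t3 : x ^ 2 * z ^ 2 * (c1 ^ 2 + c2 ^ 2) = 0 := by linarith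
    have t4 : c1 ^ 2 + c2 ^ 2 = 0 := (mul_eq_zero.1 t3).resolve_left (by positivity)
    constructor <;> nlinarith

lemma rm_H (g : ℝ) (p : Fin 10 → ℝ) : Hred g p = rmK (p 0) (p 1) ((p 0 * p 1)⁻¹) (p 2) (p 3) +
    rkT (p 0) (p 1) ((p 0 * p 1)⁻¹) (p 4) (p 5) (p 6) (p 7) (p 8) (p 9) - 2 * π * g * rdV (p 0) (p 1) := by
  unfold Hred rmK rkT rdV
  ring

lemma rm_memB_nhds {x z : ℝ} (h : memB x z) : ∀ᶠ q : ℝ × ℝ in nhds (x, z), memB q.1 q.2 := by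
  obtain ⟨hx, hz, hzx, _⟩ := rf_memB h
  obtain ⟨h1, h2, h3⟩ := h
  have s0 : √x ≠ 0 := (Real.sqrt_pos.2 hx).ne'
  have c : ContinuousAt (fun q : ℝ × ℝ => (√q.1)⁻¹) (x, z) :=
    (Real.continuous_sqrt.comp continuous_fst).continuousAt.inv₀ s0
  have e1 : ∀ᶠ q : ℝ × ℝ in nhds (x, z), q.2 < q.1 :=
    continuousAt_snd.eventually_lt continuousAt_fst h1
  have e2 : ∀ᶠ q : ℝ × ℝ in nhds (x, z), (√q.1)⁻¹ < q.2 := c.eventually_lt continuousAt_snd h2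
  have e3 : ∀ᶠ q : ℝ × ℝ in nhds (x, z), 0 < (√q.1)⁻¹ := continuousAt_const.eventually_lt c h3
  filter_upwards [e1, e2, e3] with q a b c using ⟨a, b, c⟩

lemma rm_Q {A B x z : ℝ} (h : memB x z) :
   ContinuousAt (fun q : ℝ × ℝ => rkQ A B q.1 q.2 q.1 ((q.1 * q.2)⁻¹)) (x, z) ∧
   ContinuousAt (fun q : ℝ × ℝ => rkQ A B q.1 q.2 q.2 ((q.1 * q.2)⁻¹)) (x, z) := by
  obtain ⟨hx, hz, hzx, hyz, _⟩ := rf_memB h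
  have y0 : 0 < (x * z)⁻¹ := by positivity
  have cy : ContinuousAt (fun q : ℝ × ℝ => (q.1 * q.2)⁻¹) (x, z) :=
    ContinuousAt.inv₀ (by fun_prop) (mul_pos hx hz).ne'
  have k : ∀ F : ℝ × ℝ → ℝ, ContinuousAt F (x, z) → F (x, z) ≠ 0 → ContinuousAt (fun q => 1 / F q ^ 2) (x, z) := by
    intro F hF h0
    exact continuousAt_const.div (hF.pow 2) (pow_ne_zero 2 h0)
  have k1 := k (fun q => q.1 - q.2) (by fun_prop) (by simp only; linarith)
  have k2 := k (fun q => q.1 + q.2) (by fun_prop) (by simp only; linarith)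
  have k3 := k (fun q => q.1 - (q.1 * q.2)⁻¹) (by fun_prop) (by simp only; linarith)
  have k4 := k (fun q => q.1 + (q.1 * q.2)⁻¹) (by fun_prop) (by simp only; linarith)
  have k5 := k (fun q => q.2 - (q.1 * q.2)⁻¹) (by fun_prop) (by simp only; linarith)
  have k6 := k (fun q => q.2 + (q.1 * q.2)⁻¹) (by fun_prop) (by simp only; linarith)
  unfold rkQ
  exact ⟨((continuousAt_const.mul ((k3.sub k2).mul (k4.sub k2))).sub (continuousAt_const.mul ((k1.sub k3).mul (k1.sub k4)))),
    ((continuousAt_const.mul ((k5.sub k2).mul (k6.sub k2))).sub (continuousAt_const.mul ((k1.sub k5).mul (k1.sub k6))))⟩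

lemma rm_min {g b1 b2 : ℝ} (hg : 0 < g) (h : memB b1 b2) (hA : 0 ≤ GSp g b1 ((b1 * b2)⁻¹) b2)
    (P : Fin 10 → ℝ) (hP : P = ![b1, b2, 0, 0, 0, 0, NSp g b1 ((b1 * b2)⁻¹) b2, 0, 0, NSm g b1 ((b1 * b2)⁻¹) b2]) :
    0 < NSp g b1 ((b1 * b2)⁻¹) b2 ∧
    ∀ᶠ p in nhds P, (p 4 ^ 2 + p 5 ^ 2 + p 6 ^ 2 = NSp g b1 ((b1 * b2)⁻¹) b2 ^ 2) →
      (p 7 ^ 2 + p 8 ^ 2 + p 9 ^ 2 = NSm g b1 ((b1 * b2)⁻¹) b2 ^ 2) → p ≠ P → Hred g P < Hred g p := by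
  obtain ⟨hx, hz, hzx, hyz, _⟩ := rf_memB h
  obtain ⟨hAB, hQ1, hQ2⟩ := rk_base hg h hA
  have hmin := rg_min hg h hA
  have hN : NSp g b1 ((b1 * b2)⁻¹) b2 = (√(GSp g b1 ((b1 * b2)⁻¹) b2) + √(GSm g b1 ((b1 * b2)⁻¹) b2)) / 2 := rfl
  have hM : NSm g b1 ((b1 * b2)⁻¹) b2 = (√(GSp g b1 ((b1 * b2)⁻¹) b2) - √(GSm g b1 ((b1 * b2)⁻¹) b2)) / 2 := rfl
  have hef : √(GSp g b1 ((b1 * b2)⁻¹) b2) < √(GSm g b1 ((b1 * b2)⁻¹) b2) := Real.sqrt_lt_sqrt hA hAB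
  have he := Real.sqrt_nonneg (GSp g b1 ((b1 * b2)⁻¹) b2)
  have hA2 : GSp g b1 ((b1 * b2)⁻¹) b2 = √(GSp g b1 ((b1 * b2)⁻¹) b2) ^ 2 := (Real.sq_sqrt hA).symm
  have hB2 : GSm g b1 ((b1 * b2)⁻¹) b2 = √(GSm g b1 ((b1 * b2)⁻¹) b2) ^ 2 := (Real.sq_sqrt (hA.trans hAB.le)).symm
  rw [hN, hM] at hP ⊢
  generalize √(GSp g b1 ((b1 * b2)⁻¹) b2) = e at *
  generalize √(GSm g b1 ((b1 * b2)⁻¹) b2) = f at *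
  rw [hA2, hB2] at hQ1 hQ2 hmin
  have N0 : 0 < (e + f) / 2 := by linarith
  refine ⟨N0, ?_⟩
  have P0 : P 0 = b1 := by rw [hP]; rfl
  have P1 : P 1 = b2 := by rw [hP]; rfl
  have P6 : P 6 = (e + f) / 2 := by rw [hP]; rfl
  have ct : Filter.Tendsto (fun p : Fin 10 → ℝ => ((p 0, p 1) : ℝ × ℝ)) (nhds P) (nhds (b1, b2)) := by
    have : ContinuousAt (fun p : Fin 10 → ℝ => ((p 0, p 1) : ℝ × ℝ)) P := by fun_prop
    have := this.tendsto
    simpa only [P0, P1] using this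
  have c6 : ∀ᶠ p : Fin 10 → ℝ in nhds P, 0 < p 6 :=
    (continuous_apply 6).continuousAt.eventually (lt_mem_nhds (P6.symm ▸ N0 : 0 < P 6))
  obtain ⟨cQ1, cQ2⟩ := rm_Q (A := e ^ 2) (B := f ^ 2) h
  filter_upwards [ct.eventually hmin, ct.eventually (rm_memB_nhds h), ct.eventually (cQ1.eventually (lt_mem_nhds hQ1)),
    ct.eventually (cQ2.eventually (lt_mem_nhds hQ2)), c6] with p pmin pB pQ1 pQ2 p6 hL hR hne
  obtain ⟨px, pz, pzx, pyz, _⟩ := rf_memB pB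
  obtain ⟨T1, T2⟩ := rk_T (by positivity) pyz pzx he hef pQ1 pQ2 hL hR p6
  obtain ⟨K1, K2⟩ := rm_K (c1 := p 2) (c2 := p 3) px pz
  have hHP : Hred g P = rgV g (e ^ 2) (f ^ 2) b1 b2 := by
    rw [rm_H, hP]
    have : rkT b1 b2 ((b1 * b2)⁻¹) 0 0 ((e + f) / 2) 0 0 ((e - f) / 2) = (e ^ 2 / (b1 - b2) ^ 2 + f ^ 2 / (b1 + b2) ^ 2) / 4 := by
      unfold rkT
      rw [rk_pair hz hzx]
      ring
    have k0 : rmK b1 b2 ((b1 * b2)⁻¹) 0 0 = 0 := by unfold rmK; simp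
    change rmK b1 b2 ((b1 * b2)⁻¹) 0 0 + rkT b1 b2 ((b1 * b2)⁻¹) 0 0 ((e + f) / 2) 0 0 ((e - f) / 2) - _ * rdV b1 b2 = _
    rw [this, k0]; unfold rgV; ring
  have hHp : Hred g p = rgV g (e ^ 2) (f ^ 2) (p 0) (p 1) + rmK (p 0) (p 1) ((p 0 * p 1)⁻¹) (p 2) (p 3) +
    (rkT (p 0) (p 1) ((p 0 * p 1)⁻¹) (p 4) (p 5) (p 6) (p 7) (p 8) (p 9) - (e ^ 2 / (p 0 - p 1) ^ 2 + f ^ 2 / (p 0 + p 1) ^ 2) / 4) := by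
    rw [rm_H]; unfold rgV; ring
  rw [hHp, hHP]
  by_cases hb : (p 0, p 1) = (b1, b2)
  · have q0 : p 0 = b1 := congrArg Prod.fst hb
    have q1 : p 1 = b2 := congrArg Prod.snd hb
    rw [show rgV g (e ^ 2) (f ^ 2) (p 0) (p 1) = rgV g (e ^ 2) (f ^ 2) b1 b2 by rw [q0, q1]]
    by_contra hc
    obtain ⟨c1, c2⟩ := K2 (by linarith)
    obtain ⟨m1, m2, m3, m4, m5, m6⟩ := T2 (by linarith)
    apply hne
    rw [hP]
    funext i
    fin_cases i
    exacts [q0, q1, c1, c2, m1, m2, m3, m4, m5, m6]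
  · have := pmin hb
    linarith


lemma rn_pd {g : ℝ} {P : Fin 10 → ℝ} {i : Fin 10} (hd : DifferentiableAt ℝ (Hred g) P)
    (hm : ∀ᶠ t in nhds (0:ℝ), Hred g P ≤ Hred g (P + t • Pi.single i 1)) : pd g i P = 0 := by
  have h1 := hd.hasFDerivAt.hasLineDerivAt (Pi.single i 1)
  have h2 : HasDerivAt (fun t : ℝ => Hred g (P + t • Pi.single i 1)) (pd g i P) 0 := h1
  refine IsLocalMin.hasDerivAt_eq_zero ?_ h2
  filter_upwards [hm] with t ht
  simpa using ht

lemma rn_T {x z y N M t1 t2 t4 t5 : ℝ} (h1 : t1 * t4 = 0) (h2 : t2 * t5 = 0) :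
    rkT x z y 0 0 N 0 0 M ≤ rkT x z y t1 t2 N t4 t5 M := by
  unfold rkT
  have e1 : 4 * x * y * t2 * t5 = 0 := by linear_combination 4 * x * y * h2
  have e2 : 4 * z * y * t1 * t4 = 0 := by linear_combination 4 * z * y * h1
  rw [e1, e2]
  have p1 : 0 ≤ ((x ^ 2 + y ^ 2) * (t2 ^ 2 + t5 ^ 2) + 0) / (2 * (x ^ 2 - y ^ 2) ^ 2) := by positivity
  have p2 : 0 ≤ ((z ^ 2 + y ^ 2) * (t1 ^ 2 + t4 ^ 2) + 0) / (2 * (z ^ 2 - y ^ 2) ^ 2) := by positivity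
  have z1 : ((x ^ 2 + y ^ 2) * (0 ^ 2 + 0 ^ 2) + 4 * x * y * 0 * 0) / (2 * (x ^ 2 - y ^ 2) ^ 2) = 0 := by simp
  have z2 : ((z ^ 2 + y ^ 2) * (0 ^ 2 + 0 ^ 2) + 4 * z * y * 0 * 0) / (2 * (z ^ 2 - y ^ 2) ^ 2) = 0 := by simp
  linarith

lemma rn_eq {g b1 b2 N M : ℝ} (h : memB b1 b2) (P : Fin 10 → ℝ)
    (hP : P = ![b1, b2, 0, 0, 0, 0, N, 0, 0, M])
    (hmin : ∀ᶠ p in nhds P, (p 4 ^ 2 + p 5 ^ 2 + p 6 ^ 2 = N ^ 2) →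
      (p 7 ^ 2 + p 8 ^ 2 + p 9 ^ 2 = M ^ 2) → p ≠ P → Hred g P < Hred g p) :
    RVF g P = 0 := by
  have hB : memB (P 0) (P 1) := by rw [hP]; exact h
  have hd := rh_H g hB
  have hA : ∀ i : Fin 10, (i = 0 ∨ i = 1 ∨ i = 2 ∨ i = 3) → pd g i P = 0 := by
    intro i hi
    refine rn_pd hd ?_
    have ct : Filter.Tendsto (fun t : ℝ => P + t • (Pi.single i 1 : Fin 10 → ℝ)) (nhds 0) (nhds P) := by
      have : Continuous (fun t : ℝ => P + t • (Pi.single i 1 : Fin 10 → ℝ)) := by fun_prop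
      simpa using this.tendsto 0
    filter_upwards [ct.eventually hmin] with t ht
    by_cases hc : P + t • (Pi.single i 1 : Fin 10 → ℝ) = P
    · rw [hc]
    · refine (ht ?_ ?_ hc).le <;> rcases hi with rfl | rfl | rfl | rfl <;> simp [hP]
  have hH0 : Hred g P = rmK b1 b2 ((b1 * b2)⁻¹) 0 0 + rkT b1 b2 ((b1 * b2)⁻¹) 0 0 N 0 0 M - 2 * π * g * rdV b1 b2 := by
    rw [rm_H, hP]; rfl
  have hS : ∀ (i : Fin 10) (t t1 t2 t4 t5 : ℝ), t1 * t4 = 0 → t2 * t5 = 0 →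
      P + t • (Pi.single i 1 : Fin 10 → ℝ) = ![b1, b2, 0, 0, t1, t2, N, t4, t5, M] →
      Hred g P ≤ Hred g (P + t • (Pi.single i 1 : Fin 10 → ℝ)) := by
    intro i t t1 t2 t4 t5 h1 h2 e
    have : Hred g (P + t • (Pi.single i 1 : Fin 10 → ℝ)) = rmK b1 b2 ((b1 * b2)⁻¹) 0 0 + rkT b1 b2 ((b1 * b2)⁻¹) t1 t2 N t4 t5 M - 2 * π * g * rdV b1 b2 := by
      rw [e, rm_H]; rfl
    rw [this, hH0]
    have := rn_T (x := b1) (z := b2) (y := (b1 * b2)⁻¹) (N := N) (M := M) h1 h2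
    linarith
  have p4 : pd g 4 P = 0 := rn_pd hd (Filter.Eventually.of_forall fun t => hS 4 t t 0 0 0 (by simp) (by simp)
    (by rw [hP]; funext j; fin_cases j <;> simp))
  have p5 : pd g 5 P = 0 := rn_pd hd (Filter.Eventually.of_forall fun t => hS 5 t 0 t 0 0 (by simp) (by simp)
    (by rw [hP]; funext j; fin_cases j <;> simp))
  have p7 : pd g 7 P = 0 := rn_pd hd (Filter.Eventually.of_forall fun t => hS 7 t 0 0 t 0 (by simp) (by simp)
    (by rw [hP]; funext j; fin_cases j <;> simp))
  have p8 : pd g 8 P = 0 := rn_pd hd (Filter.Eventually.of_forall fun t => hS 8 t 0 0 0 t (by simp) (by simp)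
    (by rw [hP]; funext j; fin_cases j <;> simp))
  have p0 := hA 0 (by simp)
  have p1 := hA 1 (by simp)
  have p2 := hA 2 (by simp)
  have p3 := hA 3 (by simp)
  have v4 : P 4 = 0 := by rw [hP]; rfl
  have v5 : P 5 = 0 := by rw [hP]; rfl
  have v7 : P 7 = 0 := by rw [hP]; rfl
  have v8 : P 8 = 0 := by rw [hP]; rfl
  unfold RVF
  rw [p0, p1, p2, p3, p4, p5, p7, p8, v4, v5, v7, v8]
  funext j
  fin_cases j <;> simp

lemma rn_fderiv (g : ℝ) (p v : Fin 10 → ℝ) : fderiv ℝ (Hred g) p v = ∑ i, v i * pd g i p := by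
  have e : v = ∑ i, v i • (Pi.single i 1 : Fin 10 → ℝ) := by
    ext j; simp [Finset.sum_apply, Pi.single_apply]
  conv_lhs => rw [e]
  rw [map_sum]
  simp only [map_smul, smul_eq_mul]
  rfl

lemma rn_const {φ : ℝ → ℝ} {T : ℝ} (h : ∀ t ∈ Set.Ico 0 T, HasDerivAt φ 0 t) :
    ∀ t ∈ Set.Ico 0 T, φ t = φ 0 := by
  intro t ht
  refine constant_of_has_deriv_right_zero (a := 0) (b := t) (f := φ) ?_ ?_ t ⟨ht.1, le_rfl⟩
  · intro s hs
    exact (h s ⟨hs.1, hs.2.trans_lt ht.2⟩).continuousAt.continuousWithinAt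
  · intro s hs
    exact (h s ⟨hs.1, hs.2.trans ht.2⟩).hasDerivWithinAt

lemma rn_cons {g T : ℝ} {γ : ℝ → Fin 10 → ℝ} (h : IsSolution g γ (Set.Ico 0 T)) :
    ∀ t ∈ Set.Ico 0 T, Hred g (γ t) = Hred g (γ 0) ∧
      (γ t 4) ^ 2 + (γ t 5) ^ 2 + (γ t 6) ^ 2 = (γ 0 4) ^ 2 + (γ 0 5) ^ 2 + (γ 0 6) ^ 2 ∧
      (γ t 7) ^ 2 + (γ t 8) ^ 2 + (γ t 9) ^ 2 = (γ 0 7) ^ 2 + (γ 0 8) ^ 2 + (γ 0 9) ^ 2 := by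
  intro t ht
  refine ⟨rn_const (φ := fun t => Hred g (γ t)) (fun s hs => ?_) t ht,
    rn_const (φ := fun t => (γ t 4) ^ 2 + (γ t 5) ^ 2 + (γ t 6) ^ 2) (fun s hs => ?_) t ht,
    rn_const (φ := fun t => (γ t 7) ^ 2 + (γ t 8) ^ 2 + (γ t 9) ^ 2) (fun s hs => ?_) t ht⟩
  · obtain ⟨hB, hd⟩ := h s hs
    have h1 : HasDerivAt γ (RVF g (γ s)) s := hasDerivAt_pi.2 hd
    have h2 := (rh_H g hB).hasFDerivAt.comp_hasDerivAt s h1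
    have k : fderiv ℝ (Hred g) (γ s) (RVF g (γ s)) = 0 := by
      rw [rn_fderiv]
      generalize γ s = p
      have hsum : ∀ F : Fin 10 → ℝ, ∑ i, F i = F 0 + F 1 + F 2 + F 3 + F 4 + F 5 + F 6 + F 7 + F 8 + F 9 := by
        intro F; simp only [Fin.sum_univ_succ, Fin.sum_univ_zero]; simp [Fin.succ]; ring!
      rw [hsum]
      have w0 : RVF g p 0 = pd g 2 p := rfl
      have w1 : RVF g p 1 = pd g 3 p := rfl
      have w2 : RVF g p 2 = -pd g 0 p := rfl
      have w3 : RVF g p 3 = -pd g 1 p := rfl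
      have w4 : RVF g p 4 = p 5 * pd g 6 p - p 6 * pd g 5 p := rfl
      have w5 : RVF g p 5 = p 6 * pd g 4 p - p 4 * pd g 6 p := rfl
      have w6 : RVF g p 6 = p 4 * pd g 5 p - p 5 * pd g 4 p := rfl
      have w7 : RVF g p 7 = p 8 * pd g 9 p - p 9 * pd g 8 p := rfl
      have w8 : RVF g p 8 = p 9 * pd g 7 p - p 7 * pd g 9 p := rfl
      have w9 : RVF g p 9 = p 7 * pd g 8 p - p 8 * pd g 7 p := rfl
      rw [w0, w1, w2, w3, w4, w5, w6, w7, w8, w9]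
      ring
    rw [k] at h2
    exact h2
  · obtain ⟨hB, hd⟩ := h s hs
    refine ((((hd 4).pow 2).add ((hd 5).pow 2)).add ((hd 6).pow 2)).congr_deriv ?_
    have w4 : RVF g (γ s) 4 = γ s 5 * pd g 6 (γ s) - γ s 6 * pd g 5 (γ s) := rfl
    have w5 : RVF g (γ s) 5 = γ s 6 * pd g 4 (γ s) - γ s 4 * pd g 6 (γ s) := rfl
    have w6 : RVF g (γ s) 6 = γ s 4 * pd g 5 (γ s) - γ s 5 * pd g 4 (γ s) := rfl
    rw [w4, w5, w6]
    ring
  · obtain ⟨hB, hd⟩ := h s hs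
    refine ((((hd 7).pow 2).add ((hd 8).pow 2)).add ((hd 9).pow 2)).congr_deriv ?_
    have w4 : RVF g (γ s) 7 = γ s 8 * pd g 9 (γ s) - γ s 9 * pd g 8 (γ s) := rfl
    have w5 : RVF g (γ s) 8 = γ s 9 * pd g 7 (γ s) - γ s 7 * pd g 9 (γ s) := rfl
    have w6 : RVF g (γ s) 9 = γ s 7 * pd g 8 (γ s) - γ s 8 * pd g 7 (γ s) := rfl
    rw [w4, w5, w6]
    ring

lemma rn_stab {g b1 b2 N M : ℝ} (h : memB b1 b2) (P : Fin 10 → ℝ)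
    (hP : P = ![b1, b2, 0, 0, 0, 0, N, 0, 0, M])
    (hmin : ∀ᶠ p in nhds P, (p 4 ^ 2 + p 5 ^ 2 + p 6 ^ 2 = N ^ 2) →
      (p 7 ^ 2 + p 8 ^ 2 + p 9 ^ 2 = M ^ 2) → p ≠ P → Hred g P < Hred g p) :
    LiapunovStable g N |M| P := by
  have hB : memB (P 0) (P 1) := by rw [hP]; exact h
  have hcont := (rh_H g hB).continuousAt
  have hBn : ∀ᶠ p : Fin 10 → ℝ in nhds P, memB (p 0) (p 1) := by
    have : ContinuousAt (fun p : Fin 10 → ℝ => ((p 0, p 1) : ℝ × ℝ)) P := by fun_prop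
    exact this.eventually (rm_memB_nhds hB)
  intro ε hε
  obtain ⟨r, r0, hr⟩ := Metric.eventually_nhds_iff.1 (hmin.and hBn)
  have e0 : 0 < min ε r / 2 := by positivity
  have e1 : min ε r / 2 < r := by have := min_le_right ε r; linarith
  have e2 : min ε r / 2 < ε := by have := min_le_left ε r; linarith
  generalize min ε r / 2 = ε' at *
  have hK : IsCompact (Metric.sphere P ε' ∩ {p | p 4 ^ 2 + p 5 ^ 2 + p 6 ^ 2 = N ^ 2 ∧ p 7 ^ 2 + p 8 ^ 2 + p 9 ^ 2 = M ^ 2}) := by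
    refine (isCompact_sphere P ε').inter_right ?_
    exact (isClosed_eq (by fun_prop) continuous_const).inter (isClosed_eq (by fun_prop) continuous_const)
  obtain ⟨m, hm, hmK⟩ := hK.exists_forall_le' (f := Hred g) (a := Hred g P) (by
      intro p hp
      have hd : dist p P < r := by rw [Metric.mem_sphere.1 hp.1]; exact e1
      exact (rh_H g (hr hd).2).continuousAt.continuousWithinAt) (by
      intro p hp
      have hd : dist p P < r := by rw [Metric.mem_sphere.1 hp.1]; exact e1
      refine (hr hd).1 hp.2.1 hp.2.2 ?_
      rintro rfl
      have := Metric.mem_sphere.1 hp.1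
      rw [dist_self] at this
      linarith)
  obtain ⟨δ, d0, hδ⟩ := Metric.eventually_nhds_iff.1 (hcont.eventually (gt_mem_nhds hm))
  refine ⟨min δ ε', by positivity, ?_⟩
  intro T γ hγ hL hR hd t ht
  by_contra hc
  push Not at hc
  have hcγ : ContinuousOn (fun s => dist (γ s) P) (Set.Icc 0 t) := by
    intro s hs
    have hs' : s ∈ Set.Ico 0 T := ⟨hs.1, hs.2.trans_lt ht.2⟩
    have : HasDerivAt γ (RVF g (γ s)) s := hasDerivAt_pi.2 (hγ s hs').2
    exact ContinuousAt.continuousWithinAt (f := fun s => dist (γ s) P) (this.continuousAt.dist continuousAt_const)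
  obtain ⟨s, hs, hse⟩ := intermediate_value_Icc ht.1 hcγ
    ⟨(hd.trans_le (min_le_right _ _)).le, (e2.trans_le hc).le⟩
  have hs' : s ∈ Set.Ico 0 T := ⟨hs.1, hs.2.trans_lt ht.2⟩
  obtain ⟨c1, c2, c3⟩ := rn_cons hγ s hs'
  have hlt := hδ (hd.trans_le (min_le_left _ _))
  have := hmK (γ s) ⟨hse, by
    rw [c2, ← hL, Real.sq_sqrt (by positivity)], by
    rw [c3, ← sq_abs M, ← hR, Real.sq_sqrt (by positivity)]⟩
  rw [c1] at this
  linarith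

/-- On the existence region `B_{S₃}` (`G^S₊(b₁,b₃,b₂) ≥ 0`), with
`N₊ = N^S₊(b₁,b₃,b₂)`, `N₋ = N^S₋(b₁,b₃,b₂)`, the point
`p* = (b₁,b₂,0,0, 0,0,N₊, 0,0,N₋)` is an equilibrium of the reduced equations and is
Liapunov stable relative to `S_{L,R}` with `L = N₊`, `R = |N₋|`. -/
theorem stmt_9 (g b1 b2 b3 : ℝ) (hg : 0 < g) (hB : memB b1 b2) (hb3 : b3 = (b1 * b2)⁻¹)
    (h0 : 0 ≤ GSp g b1 b3 b2) :
    RVF g ![b1, b2, 0, 0, 0, 0, NSp g b1 b3 b2, 0, 0, NSm g b1 b3 b2] = 0 ∧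
    LiapunovStable g (NSp g b1 b3 b2) |NSm g b1 b3 b2|
      ![b1, b2, 0, 0, 0, 0, NSp g b1 b3 b2, 0, 0, NSm g b1 b3 b2] := by
  subst hb3
  obtain ⟨_, hmin⟩ := rm_min hg hB h0 _ rfl
  exact ⟨rn_eq hB _ rfl hmin, rn_stab hB _ rfl hmin⟩
end

section
/- Let ω₁, ω₂, ω₃ > 0, μ < 0, and let Q₁, …, Q₇ ∈ ℝ with Q₄ < 0, and q₈, q₉, q₁₀ ∈ ℝ. Define H : ℝ⁸ → ℝ in canonical coordinates (x₁, x₂, x₃, x₄, y₁, y₂, y₃, y₄), writing I_j = (x_j² + y_j²)/2 for j = 1, 2, 3, by H = ω₁I₁ + ω₂I₂ + ω₃I₃ − ½(μ·x₄² + y₄²) − ½( Q₁I₁² + Q₂I₂² + Q₃I₃² + Q₅I₁I₂ + Q₆I₁I₃ + Q₇I₂I₃ + (q₈I₁ + q₉I₂ + q₁₀I₃)·x₄² − Q₄·x₄⁴ ), and let X_H be its Hamiltonian vector field (x_j' = ∂H/∂y_j, y_j' = −∂H/∂x_j). Then the two points E± with x₁ = x₂ = x₃ = y₁ = y₂ =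 y₃ = y₄ = 0 and x₄ = ±√(μ/(2Q₄)) are equilibria of X_H, and the characteristic polynomial of the linearisation DX_H(E±) equals (λ² − 2μ)·∏_{j=1}^{3} (λ² + (ω_j − q_{j+7}·μ/(4Q₄))²). In particular, since μ < 0, every eigenvalue of DX_H(E±) is purely imaginary. (This is the truncated normal form H⁴ of the co-parallel S₂ Riemann ellipsoids written in real variables, with μ = ω₄² < 0 below the bifurcation curve G = 0; the equilibria E± correspond to the type-III Riemann ellipsoids branching off the S₂ family in the global pitchfork bifurcation.) -/
open Matrix

/-- The truncated normal form `H⁴` of the co-parallel `S₂` Riemann ellipsoids, in canonical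
coordinates `(x₁,…,x₄,y₁,…,y₄)` on `ℝ⁸` (`p 0,…,p 3 = x₁,…,x₄`, `p 4,…,p 7 = y₁,…,y₄`),
with `Iⱼ = (xⱼ² + yⱼ²)/2`. -/
noncomputable def H4nf (ω₁ ω₂ ω₃ μ Q₁ Q₂ Q₃ Q₄ Q₅ Q₆ Q₇ q₈ q₉ q₁₀ : ℝ)
    (p : Fin 8 → ℝ) : ℝ :=
  let I1 := (p 0 ^ 2 + p 4 ^ 2) / 2
  let I2 := (p 1 ^ 2 + p 5 ^ 2) / 2
  let I3 := (p 2 ^ 2 + p 6 ^ 2) / 2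
  let x4 := p 3
  let y4 := p 7
  ω₁ * I1 + ω₂ * I2 + ω₃ * I3 - (μ * x4 ^ 2 + y4 ^ 2) / 2
    - (Q₁ * I1 ^ 2 + Q₂ * I2 ^ 2 + Q₃ * I3 ^ 2
        + Q₅ * I1 * I2 + Q₆ * I1 * I3 + Q₇ * I2 * I3
        + (q₈ * I1 + q₉ * I2 + q₁₀ * I3) * x4 ^ 2 - Q₄ * x4 ^ 4) / 2

/-- The Hamiltonian vector field of `H⁴`: `xⱼ' = ∂H/∂yⱼ`, `yⱼ' = −∂H/∂xⱼ`. -/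
noncomputable def XH4 (ω₁ ω₂ ω₃ μ Q₁ Q₂ Q₃ Q₄ Q₅ Q₆ Q₇ q₈ q₉ q₁₀ : ℝ)
    (p : Fin 8 → ℝ) : Fin 8 → ℝ :=
  let H := H4nf ω₁ ω₂ ω₃ μ Q₁ Q₂ Q₃ Q₄ Q₅ Q₆ Q₇ q₈ q₉ q₁₀
  ![fderiv ℝ H p (Pi.single 4 1), fderiv ℝ H p (Pi.single 5 1),
    fderiv ℝ H p (Pi.single 6 1), fderiv ℝ H p (Pi.single 7 1),
    -fderiv ℝ H p (Pi.single 0 1), -fderiv ℝ H p (Pi.single 1 1),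
    -fderiv ℝ H p (Pi.single 2 1), -fderiv ℝ H p (Pi.single 3 1)]

/-- The linearisation (Jacobian matrix) of the Hamiltonian vector field of `H⁴` at `p`. -/
noncomputable def DXH4 (ω₁ ω₂ ω₃ μ Q₁ Q₂ Q₃ Q₄ Q₅ Q₆ Q₇ q₈ q₉ q₁₀ : ℝ)
    (p : Fin 8 → ℝ) : Matrix (Fin 8) (Fin 8) ℝ :=
  Matrix.of fun i j =>
    fderiv ℝ (fun q => XH4 ω₁ ω₂ ω₃ μ Q₁ Q₂ Q₃ Q₄ Q₅ Q₆ Q₇ q₈ q₉ q₁₀ q i) p (Pi.single j 1)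

/-- Explicit gradient of `H4nf`. -/
noncomputable def gradH (ω₁ ω₂ ω₃ μ Q₁ Q₂ Q₃ Q₄ Q₅ Q₆ Q₇ q₈ q₉ q₁₀ : ℝ)
    (p : Fin 8 → ℝ) : Fin 8 → ℝ :=
  let I1 := (p 0 ^ 2 + p 4 ^ 2) / 2
  let I2 := (p 1 ^ 2 + p 5 ^ 2) / 2
  let I3 := (p 2 ^ 2 + p 6 ^ 2) / 2
  let G1 := ω₁ - Q₁ * I1 - Q₅ * I2 / 2 - Q₆ * I3 / 2 - q₈ * p 3 ^ 2 / 2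
  let G2 := ω₂ - Q₂ * I2 - Q₅ * I1 / 2 - Q₇ * I3 / 2 - q₉ * p 3 ^ 2 / 2
  let G3 := ω₃ - Q₃ * I3 - Q₆ * I1 / 2 - Q₇ * I2 / 2 - q₁₀ * p 3 ^ 2 / 2
  let G4 := -μ - (q₈ * I1 + q₉ * I2 + q₁₀ * I3) + 2 * Q₄ * p 3 ^ 2
  ![p 0 * G1, p 1 * G2, p 2 * G3, p 3 * G4, p 4 * G1, p 5 * G2, p 6 * G3, -p 7]

theorem fderiv_eq_of_line {f : (Fin 8 → ℝ) → ℝ} {p v : Fin 8 → ℝ} {c : ℝ}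
    (hf : Differentiable ℝ f)
    (h : HasDerivAt (fun t : ℝ => f (p + t • v)) c 0) : fderiv ℝ f p v = c := by
  have h1 : HasLineDerivAt ℝ f c p v := h
  have h2 := (hf p).hasFDerivAt.hasLineDerivAt v
  exact HasDerivAt.unique h2 h1

theorem fderiv_H4nf (ω₁ ω₂ ω₃ μ Q₁ Q₂ Q₃ Q₄ Q₅ Q₆ Q₇ q₈ q₉ q₁₀ : ℝ) (p v : Fin 8 → ℝ) :
    fderiv ℝ (H4nf ω₁ ω₂ ω₃ μ Q₁ Q₂ Q₃ Q₄ Q₅ Q₆ Q₇ q₈ q₉ q₁₀) p v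
      = ∑ i, gradH ω₁ ω₂ ω₃ μ Q₁ Q₂ Q₃ Q₄ Q₅ Q₆ Q₇ q₈ q₉ q₁₀ p i * v i := by
  apply fderiv_eq_of_line
  · unfold H4nf
    fun_prop
  · have h : ∀ i, HasDerivAt (fun t : ℝ => p i + t * v i) (v i) 0 := fun i => by
      simpa using ((hasDerivAt_id (0 : ℝ)).mul_const (v i)).const_add (p i)
    have h1 := (((h 0).pow 2).add ((h 4).pow 2)).div_const 2
    have h2 := (((h 1).pow 2).add ((h 5).pow 2)).div_const 2
    have h3 := (((h 2).pow 2).add ((h 6).pow 2)).div_const 2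
    have key := ((((h1.const_mul ω₁).add (h2.const_mul ω₂)).add (h3.const_mul ω₃)).sub
      (((((h 3).pow 2).const_mul μ).add ((h 7).pow 2)).div_const 2)).sub
      (((((((((h1.pow 2).const_mul Q₁).add ((h2.pow 2).const_mul Q₂)).add
        ((h3.pow 2).const_mul Q₃)).add ((h1.const_mul Q₅).mul h2)).add
        ((h1.const_mul Q₆).mul h3)).add ((h2.const_mul Q₇).mul h3)).add
        ((((h1.const_mul q₈).add (h2.const_mul q₉)).add (h3.const_mul q₁₀)).mul
          ((h 3).pow 2))).sub (((h 3).pow 4).const_mul Q₄) |>.div_const 2)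
    refine HasDerivAt.congr_deriv (f := fun t : ℝ => H4nf ω₁ ω₂ ω₃ μ Q₁ Q₂ Q₃ Q₄ Q₅ Q₆ Q₇ q₈ q₉ q₁₀
      (p + t • v)) key ?_
    simp [gradH, Fin.sum_univ_eight]
    ring

theorem XH4_eq (ω₁ ω₂ ω₃ μ Q₁ Q₂ Q₃ Q₄ Q₅ Q₆ Q₇ q₈ q₉ q₁₀ : ℝ) (p : Fin 8 → ℝ) :
    XH4 ω₁ ω₂ ω₃ μ Q₁ Q₂ Q₃ Q₄ Q₅ Q₆ Q₇ q₈ q₉ q₁₀ p =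
      let g := gradH ω₁ ω₂ ω₃ μ Q₁ Q₂ Q₃ Q₄ Q₅ Q₆ Q₇ q₈ q₉ q₁₀ p
      ![g 4, g 5, g 6, g 7, -g 0, -g 1, -g 2, -g 3] := by
  simp [XH4, fderiv_H4nf, Pi.single_apply]

theorem fderiv_mul_zero {G : (Fin 8 → ℝ) → ℝ} (hG : Differentiable ℝ G) (i : Fin 8)
    (p v : Fin 8 → ℝ) :
    fderiv ℝ (fun q : Fin 8 → ℝ => q i * G q) p v = v i * G p + p i * fderiv ℝ G p v := by
  have h := ((hasFDerivAt_apply (𝕜 := ℝ) i p).mul (hG p).hasFDerivAt)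
  have h' : fderiv ℝ (fun q : Fin 8 → ℝ => q i * G q) p = _ := HasFDerivAt.fderiv h
  rw [h']
  simp
  ring

theorem fderiv_gradH (ω₁ ω₂ ω₃ μ Q₁ Q₂ Q₃ Q₄ Q₅ Q₆ Q₇ q₈ q₉ q₁₀ s : ℝ) (v : Fin 8 → ℝ)
    (i : Fin 8) :
    fderiv ℝ (fun q => gradH ω₁ ω₂ ω₃ μ Q₁ Q₂ Q₃ Q₄ Q₅ Q₆ Q₇ q₈ q₉ q₁₀ q i)
        ![0, 0, 0, s, 0, 0, 0, 0] v =
      ![v 0 * (ω₁ - q₈ * s ^ 2 / 2), v 1 * (ω₂ - q₉ * s ^ 2 / 2), v 2 * (ω₃ - q₁₀ * s ^ 2 / 2),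
        v 3 * (-μ + 6 * Q₄ * s ^ 2),
        v 4 * (ω₁ - q₈ * s ^ 2 / 2), v 5 * (ω₂ - q₉ * s ^ 2 / 2), v 6 * (ω₃ - q₁₀ * s ^ 2 / 2),
        -v 7] i := by
  have h4 : fderiv ℝ (fun p : Fin 8 → ℝ => -μ - (q₈ * ((p 0 ^ 2 + p 4 ^ 2) / 2)
      + q₉ * ((p 1 ^ 2 + p 5 ^ 2) / 2) + q₁₀ * ((p 2 ^ 2 + p 6 ^ 2) / 2)) + 2 * Q₄ * p 3 ^ 2)
      ![0, 0, 0, s, 0, 0, 0, 0] v = 4 * Q₄ * s * v 3 := by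
    apply fderiv_eq_of_line
    · fun_prop
    · have h : ∀ (c : ℝ) i, HasDerivAt (fun t : ℝ => c + t * v i) (v i) 0 := fun c i => by
        simpa using ((hasDerivAt_id (0 : ℝ)).mul_const (v i)).const_add c
      have h1 := (((h 0 0).pow 2).add ((h 0 4).pow 2)).div_const 2
      have h2 := (((h 0 1).pow 2).add ((h 0 5).pow 2)).div_const 2
      have h3 := (((h 0 2).pow 2).add ((h 0 6).pow 2)).div_const 2
      have key := ((((h1.const_mul q₈).add (h2.const_mul q₉)).add
        (h3.const_mul q₁₀)).const_sub (-μ)).add (((h s 3).pow 2).const_mul (2 * Q₄))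
      refine HasDerivAt.congr_deriv (f := fun t : ℝ => _) key ?_
      simp
      ring
  fin_cases i
  · refine (fderiv_mul_zero (by fun_prop) 0 _ _).trans ?_
    simp
  · refine (fderiv_mul_zero (by fun_prop) 1 _ _).trans ?_
    simp
  · refine (fderiv_mul_zero (by fun_prop) 2 _ _).trans ?_
    simp
  · refine (fderiv_mul_zero (by fun_prop) 3 _ _).trans ?_
    rw [h4]
    simp
    ring
  · refine (fderiv_mul_zero (by fun_prop) 4 _ _).trans ?_
    simp
  · refine (fderiv_mul_zero (by fun_prop) 5 _ _).trans ?_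
    simp
  · refine (fderiv_mul_zero (by fun_prop) 6 _ _).trans ?_
    simp
  · have h := (hasFDerivAt_apply (𝕜 := ℝ) (7 : Fin 8) (![0, 0, 0, s, 0, 0, 0, 0] : Fin 8 → ℝ)).neg
    have h' : fderiv ℝ (fun q : Fin 8 → ℝ => -q 7) ![0, 0, 0, s, 0, 0, 0, 0] = _ := h.fderiv
    have h'' := congrArg (fun L : (Fin 8 → ℝ) →L[ℝ] ℝ => L v) h'
    exact h''

theorem DXH4_eq (ω₁ ω₂ ω₃ μ Q₁ Q₂ Q₃ Q₄ Q₅ Q₆ Q₇ q₈ q₉ q₁₀ s : ℝ) :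
    DXH4 ω₁ ω₂ ω₃ μ Q₁ Q₂ Q₃ Q₄ Q₅ Q₆ Q₇ q₈ q₉ q₁₀ ![0, 0, 0, s, 0, 0, 0, 0] =
      (blockDiagonal fun k : Fin 4 => !![0,
        ![ω₁ - q₈ * s ^ 2 / 2, ω₂ - q₉ * s ^ 2 / 2, ω₃ - q₁₀ * s ^ 2 / 2, -1] k;
        ![-(ω₁ - q₈ * s ^ 2 / 2), -(ω₂ - q₉ * s ^ 2 / 2), -(ω₃ - q₁₀ * s ^ 2 / 2),
          μ - 6 * Q₄ * s ^ 2] k, 0]).submatrix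
        (finProdFinEquiv (m := 2) (n := 4)).symm (finProdFinEquiv (m := 2) (n := 4)).symm := by
  have hX : ∀ i j, DXH4 ω₁ ω₂ ω₃ μ Q₁ Q₂ Q₃ Q₄ Q₅ Q₆ Q₇ q₈ q₉ q₁₀ ![0, 0, 0, s, 0, 0, 0, 0] i j
      = fderiv ℝ (fun q => (let g := gradH ω₁ ω₂ ω₃ μ Q₁ Q₂ Q₃ Q₄ Q₅ Q₆ Q₇ q₈ q₉ q₁₀ q
      ![g 4, g 5, g 6, g 7, -g 0, -g 1, -g 2, -g 3]) i) ![0, 0, 0, s, 0, 0, 0, 0]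
        (Pi.single j 1) := by
    intro i j
    simp only [DXH4, XH4_eq, Matrix.of_apply]
  have hpos := fun (j : Fin 8) (i : Fin 8) =>
    fderiv_gradH ω₁ ω₂ ω₃ μ Q₁ Q₂ Q₃ Q₄ Q₅ Q₆ Q₇ q₈ q₉ q₁₀ s (Pi.single j 1) i
  have hneg : ∀ (j i : Fin 8), fderiv ℝ (fun q => -gradH ω₁ ω₂ ω₃ μ Q₁ Q₂ Q₃ Q₄ Q₅ Q₆ Q₇ q₈ q₉ q₁₀
      q i) ![0, 0, 0, s, 0, 0, 0, 0] (Pi.single j 1) = _ := fun j i => by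
    rw [fderiv_fun_neg, _root_.neg_apply, hpos]
  ext i j
  rw [hX]
  obtain ⟨⟨i, k⟩, rfl⟩ := (finProdFinEquiv (m := 2) (n := 4)).surjective i
  obtain ⟨⟨j, l⟩, rfl⟩ := (finProdFinEquiv (m := 2) (n := 4)).surjective j
  simp only [submatrix_apply, Equiv.symm_apply_apply, blockDiagonal_apply]
  fin_cases i <;> fin_cases k
  · refine (hpos _ 4).trans ?_
    fin_cases j <;> fin_cases l <;> simp [finProdFinEquiv]
  · refine (hpos _ 5).trans ?_
    fin_cases j <;> fin_cases l <;> simp [finProdFinEquiv]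
  · refine (hpos _ 6).trans ?_
    fin_cases j <;> fin_cases l <;> simp [finProdFinEquiv]
  · refine (hpos _ 7).trans ?_
    fin_cases j <;> fin_cases l <;> simp [finProdFinEquiv]
  · refine (hneg _ 0).trans ?_
    fin_cases j <;> fin_cases l <;> simp [finProdFinEquiv]
  · refine (hneg _ 1).trans ?_
    fin_cases j <;> fin_cases l <;> simp [finProdFinEquiv]
  · refine (hneg _ 2).trans ?_
    fin_cases j <;> fin_cases l <;> simp [finProdFinEquiv]
  · refine (hneg _ 3).trans ?_
    fin_cases j <;> fin_cases l <;> simp [finProdFinEquiv]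
    ring

theorem det_aux (lam : ℂ) (a b : Fin 4 → ℝ) :
    (lam • (1 : Matrix (Fin 8) (Fin 8) ℂ) -
      ((blockDiagonal fun k : Fin 4 => !![0, a k; b k, 0]).submatrix
        (finProdFinEquiv (m := 2) (n := 4)).symm
        (finProdFinEquiv (m := 2) (n := 4)).symm).map ((↑) : ℝ → ℂ)).det
      = ∏ i, (lam ^ 2 - a i * b i) := by
  have h : (lam • (1 : Matrix (Fin 8) (Fin 8) ℂ) -
      ((blockDiagonal fun k : Fin 4 => !![0, a k; b k, 0]).submatrix
        (finProdFinEquiv (m := 2) (n := 4)).symm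
        (finProdFinEquiv (m := 2) (n := 4)).symm).map ((↑) : ℝ → ℂ)) =
      (blockDiagonal fun k : Fin 4 => !![lam, -(a k : ℂ); -(b k : ℂ), lam]).submatrix
        (finProdFinEquiv (m := 2) (n := 4)).symm (finProdFinEquiv (m := 2) (n := 4)).symm := by
    ext i j
    obtain ⟨⟨i, k⟩, rfl⟩ := (finProdFinEquiv (m := 2) (n := 4)).surjective i
    obtain ⟨⟨j, l⟩, rfl⟩ := (finProdFinEquiv (m := 2) (n := 4)).surjective j
    simp only [submatrix_apply, Equiv.symm_apply_apply, blockDiagonal_apply, Matrix.sub_apply,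
      Matrix.smul_apply, Matrix.map_apply, one_apply, EmbeddingLike.apply_eq_iff_eq, Prod.mk.injEq]
    by_cases hkl : k = l
    · fin_cases i <;> fin_cases j <;> simp [hkl]
    · simp [hkl]
  rw [h, det_submatrix_equiv_self, det_blockDiagonal]
  refine Finset.prod_congr rfl fun i _ => ?_
  rw [det_fin_two_of]
  ring

/-- For `ω₁,ω₂,ω₃ > 0`, `μ < 0`, `Q₄ < 0`, the two points `E±` with all
coordinates zero except `x₄ = ±√(μ/(2Q₄))` are equilibria of the Hamiltonian vector field
of `H⁴`, the characteristic polynomial of the linearisation there is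
`(λ² − 2μ)·∏ⱼ(λ² + (ωⱼ − q_{j+7}μ/(4Q₄))²)`, and (since `μ < 0`) every eigenvalue of the
linearisation is purely imaginary. -/
theorem stmt_19 (ω₁ ω₂ ω₃ μ Q₁ Q₂ Q₃ Q₄ Q₅ Q₆ Q₇ q₈ q₉ q₁₀ : ℝ)
    (hω₁ : 0 < ω₁) (hω₂ : 0 < ω₂) (hω₃ : 0 < ω₃) (hμ : μ < 0) (hQ₄ : Q₄ < 0) :
    ∀ s : ℝ, s ^ 2 = μ / (2 * Q₄) →
      XH4 ω₁ ω₂ ω₃ μ Q₁ Q₂ Q₃ Q₄ Q₅ Q₆ Q₇ q₈ q₉ q₁₀ ![0, 0, 0, s, 0, 0, 0, 0] = 0 ∧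
      (∀ lam : ℂ,
        (lam • (1 : Matrix (Fin 8) (Fin 8) ℂ)
            - (DXH4 ω₁ ω₂ ω₃ μ Q₁ Q₂ Q₃ Q₄ Q₅ Q₆ Q₇ q₈ q₉ q₁₀
                ![0, 0, 0, s, 0, 0, 0, 0]).map ((↑) : ℝ → ℂ)).det
          = (lam ^ 2 - 2 * (μ : ℂ)) *
              ((lam ^ 2 + ((ω₁ - q₈ * μ / (4 * Q₄) : ℝ) : ℂ) ^ 2) *
                (lam ^ 2 + ((ω₂ - q₉ * μ / (4 * Q₄) : ℝ) : ℂ) ^ 2) *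
                (lam ^ 2 + ((ω₃ - q₁₀ * μ / (4 * Q₄) : ℝ) : ℂ) ^ 2))) ∧
      (∀ lam : ℂ,
        (lam • (1 : Matrix (Fin 8) (Fin 8) ℂ)
            - (DXH4 ω₁ ω₂ ω₃ μ Q₁ Q₂ Q₃ Q₄ Q₅ Q₆ Q₇ q₈ q₉ q₁₀
                ![0, 0, 0, s, 0, 0, 0, 0]).map ((↑) : ℝ → ℂ)).det = 0 →
          lam.re = 0) := by
  intro s hs
  have hQ : Q₄ ≠ 0 := hQ₄.ne
  have hs' : s ^ 2 * (2 * Q₄) = μ := by rw [hs]; field_simp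
  have hdet : ∀ lam : ℂ,
        (lam • (1 : Matrix (Fin 8) (Fin 8) ℂ)
            - (DXH4 ω₁ ω₂ ω₃ μ Q₁ Q₂ Q₃ Q₄ Q₅ Q₆ Q₇ q₈ q₉ q₁₀
                ![0, 0, 0, s, 0, 0, 0, 0]).map ((↑) : ℝ → ℂ)).det
          = (lam ^ 2 - 2 * (μ : ℂ)) *
              ((lam ^ 2 + ((ω₁ - q₈ * μ / (4 * Q₄) : ℝ) : ℂ) ^ 2) *
                (lam ^ 2 + ((ω₂ - q₉ * μ / (4 * Q₄) : ℝ) : ℂ) ^ 2) *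
                (lam ^ 2 + ((ω₃ - q₁₀ * μ / (4 * Q₄) : ℝ) : ℂ) ^ 2)) := by
    intro lam
    have e : ∀ q : ℝ, q * μ / (4 * Q₄) = q * s ^ 2 / 2 := fun q => by
      rw [← hs']; field_simp; ring
    have e4 : μ - 6 * Q₄ * s ^ 2 = -2 * μ := by linear_combination -3 * hs'
    rw [DXH4_eq, det_aux, e, e, e, e4, Fin.prod_univ_four]
    simp
    ring
  have hsq : ∀ (lam : ℂ) (r : ℝ), 0 ≤ r → lam ^ 2 + (r : ℂ) = 0 → lam.re = 0 := by
    intro lam r hr h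
    have h1 := congrArg Complex.re h
    have h2 := congrArg Complex.im h
    simp [pow_two] at h1 h2
    by_contra hne
    have h3 : lam.im = 0 := by
      have : lam.re * lam.im = 0 := by linarith
      exact (mul_eq_zero.mp this).resolve_left hne
    rw [h3] at h1
    have := mul_self_pos.mpr hne
    linarith
  refine ⟨?_, hdet, ?_⟩
  · rw [XH4_eq]
    ext i
    fin_cases i <;> simp [gradH]
    right
    linear_combination hs'
  · intro lam h
    rw [hdet] at h
    rcases mul_eq_zero.mp h with h | h
    · exact hsq lam (-2 * μ) (by linarith) (by push_cast; linear_combination h)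
    rcases mul_eq_zero.mp h with h | h
    · rcases mul_eq_zero.mp h with h | h
      · exact hsq lam _ (sq_nonneg (ω₁ - q₈ * μ / (4 * Q₄))) (by rw [Complex.ofReal_pow]; exact h)
      · exact hsq lam _ (sq_nonneg (ω₂ - q₉ * μ / (4 * Q₄))) (by rw [Complex.ofReal_pow]; exact h)
    · exact hsq lam _ (sq_nonneg (ω₃ - q₁₀ * μ / (4 * Q₄))) (by rw [Complex.ofReal_pow]; exact h)
end
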